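/- arXiv:2210.11868 — 3 statements merged into one kernel-verified Lean document; each statement's English description precedes it below -/
import Mathlib

section
/- Let d ≥ 3 and let ψ, ψ_1, ψ_2, … be normalized d-monotone Archimedean generators such that the induced copulas C_n = C_{ψ_n} converge uniformly on [0,1]^d to C = C_ψ. Then there exists a Borel set Λ ⊆ (0,1)^{d−1} with ∫_Λ c^{1:d−1} dλ_{d−1} = 1 such that for every x ∈ Λ and every y ∈ [0, f^0(x)) one has lim_{n→∞} K_{C_n}(x,[0,y]) = 0 = K_C(x,[0,y]). -/
/-!
`Λ` is the open set of `x ∈ (0,1)^(d-1)` with `∑ φ(xᵢ) < φ(0)`, the set on which the density is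
given by its product formula.

Mass one. In the coordinates `zᵢ = φ(xᵢ)` the Jacobian cancels `∏ φ'(xᵢ)`, and the integral
becomes that of `(-1)^(d-1) D⁻ψ^(d-2)(∑ zᵢ)` over the orthant cut off at `∑ zᵢ < φ(0)`. Every
coordinate integrates out by the fundamental theorem of calculus and lowers the order of the
derivative by one (`lintegral_tail`, `lintegral_pi_chain`), so the total is `ψ(0) = 1`. The decay at
infinity of the signed derivatives needed here follows from `d`-monotonicity (`AltChain.lim`).

Convergence of the kernels. Uniform convergence of the copulas passes to the bivariate margins
`ψ(φ(u) + φ(v))`. With the normalization `ψ(1) = 1/2` this determines the limit of `ψₙ` at dyadic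
points, by halving and by adding, hence everywhere (`conv_psi`). The monotone chain
`(-1)^k ψ⁽ᵏ⁾` then converges pointwise for `k ≤ d - 2` by bounding derivatives with difference
quotients (`AltChain.tendsto`).
If `y < f⁰(x)`, the limit `S + φ(y)` of the arguments in the numerator lies strictly beyond
`φ(0) < ∞`, where `(-1)^(d-2) ψ^(d-2)` vanishes; by convexity its left derivatives for `ψₙ` tend to
`0` there, while at the arguments in the denominator, which tend to `S < φ(0)`, they stay bounded
away from `0` (`kernel_tendsto`).
-/

open MeasureTheory Set Filter Topology
open scoped ENNReal NNReal Classical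

noncomputable section

/-- Extension of a generator `ψ` to `[0,∞]` with the convention `ψ(∞) := 0`. -/
def psiExt (ψ : ℝ → ℝ) (z : ℝ≥0∞) : ℝ := if z = ∞ then 0 else ψ z.toReal

/-- The pseudo-inverse `φ(y) = inf {z ∈ [0,∞] : ψ(z) = y}` of a generator. -/
def pseudoInv (ψ : ℝ → ℝ) (y : ℝ) : ℝ≥0∞ := sInf {z : ℝ≥0∞ | psiExt ψ z = y}

/-- An Archimedean generator: `ψ : [0,∞) → [0,1]` is continuous, non-increasing,
satisfies `ψ 0 = 1` and `ψ(z) → 0` as `z → ∞`, and is strictly decreasing on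
`[0, inf {z ∈ [0,∞] : ψ z = 0}]`. -/
structure IsGenerator (ψ : ℝ → ℝ) : Prop where
  continuousOn : ContinuousOn ψ (Ici 0)
  mem_Icc : ∀ z : ℝ, 0 ≤ z → ψ z ∈ Icc (0 : ℝ) 1
  map_zero : ψ 0 = 1
  tendsto_atTop : Tendsto ψ atTop (𝓝 0)
  antitoneOn : AntitoneOn ψ (Ici 0)
  strictAnti : ∀ ⦃x y : ℝ⦄, 0 ≤ x → x < y → ENNReal.ofReal y ≤ pseudoInv ψ 0 → ψ y < ψ x

/-- The left-hand derivative `D⁻f`. -/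
def leftDeriv (f : ℝ → ℝ) (z : ℝ) : ℝ := derivWithin f (Iio z) z

/-- The right-hand derivative `D⁺f`. -/
def rightDeriv (f : ℝ → ℝ) (z : ℝ) : ℝ := derivWithin f (Ioi z) z

/-- A `d`-monotone Archimedean generator: the derivatives `ψ⁽ᵏ⁾` exist on `(0,∞)` for
`k = 1,…,d-2`, and `(-1)^(d-2) · ψ^(d-2)` is non-negative, non-increasing and convex
on `(0,∞)`. -/
structure IsdMonotoneGenerator (d : ℕ) (ψ : ℝ → ℝ) : Prop where
  toIsGenerator : IsGenerator ψ
  differentiable : ∀ k : ℕ, k < d - 2 → ∀ z : ℝ, 0 < z → DifferentiableAt ℝ (deriv^[k] ψ) z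
  nonneg : ∀ z : ℝ, 0 < z → 0 ≤ (-1 : ℝ) ^ (d - 2) * deriv^[d - 2] ψ z
  antitoneOn : AntitoneOn (fun z => (-1 : ℝ) ^ (d - 2) * deriv^[d - 2] ψ z) (Ioi 0)
  convexOn : ConvexOn ℝ (Ioi 0) (fun z => (-1 : ℝ) ^ (d - 2) * deriv^[d - 2] ψ z)

/-- The `d`-dimensional Archimedean copula generated by `ψ`:
`C_ψ(x) = ψ(φ(x₁) + ⋯ + φ(x_d))` (with `ψ(∞) := 0`). -/
def archCopula (d : ℕ) (ψ : ℝ → ℝ) (x : Fin d → ℝ) : ℝ :=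
  psiExt ψ (∑ i, pseudoInv ψ (x i))

/-- A generator is strict if `ψ(z) > 0` for all `z ≥ 0`. -/
def IsStrictGenerator (ψ : ℝ → ℝ) : Prop := ∀ z : ℝ, 0 ≤ z → 0 < ψ z

/-- The level set `L_t = {x ∈ [0,1]^d : C_ψ(x) = t}`. -/
def levelSet (d : ℕ) (ψ : ℝ → ℝ) (t : ℝ) : Set (Fin d → ℝ) :=
  {x | (∀ i, x i ∈ Icc (0 : ℝ) 1) ∧ archCopula d ψ x = t}

/-- The zero set `L₀^{1:d-1} = {x ∈ [0,1]^{d-1} : φ(x₁)+⋯+φ(x_{d-1}) ≥ φ(0)}`. -/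
def zeroMarg (d : ℕ) (ψ : ℝ → ℝ) : Set (Fin (d - 1) → ℝ) :=
  {x | pseudoInv ψ 0 ≤ ∑ i, pseudoInv ψ (x i)}

/-- `f⁰(x)`: equals `1` on `L₀^{1:d-1}` and `ψ(φ(0) - ∑ φ(xᵢ))` otherwise. -/
def fZero (d : ℕ) (ψ : ℝ → ℝ) (x : Fin (d - 1) → ℝ) : ℝ :=
  if pseudoInv ψ 0 ≤ ∑ i, pseudoInv ψ (x i) then 1
  else psiExt ψ (pseudoInv ψ 0 - ∑ i, pseudoInv ψ (x i))

/-- Extension of `D⁻ψ^(d-2)` to `[0,∞]` with value `0` at `∞`. -/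
def DpsiExt (d : ℕ) (ψ : ℝ → ℝ) (z : ℝ≥0∞) : ℝ :=
  if z = ∞ then 0 else leftDeriv (deriv^[d - 2] ψ) z.toReal

/-- The `(d-1)`-Markov kernel `K_C(x,[0,y])` of the Archimedean copula `C_ψ`. -/
def markovKernel (d : ℕ) (ψ : ℝ → ℝ) (x : Fin (d - 1) → ℝ) (y : ℝ) : ℝ :=
  if (∀ i, x i = 1) ∨ x ∈ zeroMarg d ψ then 1
  else if y < fZero d ψ x then 0
  else DpsiExt d ψ ((∑ i, pseudoInv ψ (x i)) + pseudoInv ψ y)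
      / DpsiExt d ψ (∑ i, pseudoInv ψ (x i))

/-- The `(d-1)`-marginal density `c^{1:d-1}` of the Archimedean copula `C_ψ`:
`c(x) = ∏ φ'(xᵢ) · D⁻ψ^(d-2)(∑ φ(xᵢ))` for `x ∈ (0,1)^{d-1}` with `∑ φ(xᵢ) < φ(0)`,
and `0` otherwise. -/
def margDensity (d : ℕ) (ψ : ℝ → ℝ) (x : Fin (d - 1) → ℝ) : ℝ :=
  if (∀ i, x i ∈ Ioo (0 : ℝ) 1) ∧ (∑ i, pseudoInv ψ (x i)) < pseudoInv ψ 0 then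
    (∏ i, deriv (fun y => (pseudoInv ψ y).toReal) (x i)) *
      leftDeriv (deriv^[d - 2] ψ) (∑ i, pseudoInv ψ (x i)).toReal
  else 0

/-! ### Generators and their pseudo-inverses -/

namespace IsGenerator

variable {ψ : ℝ → ℝ}

lemma psiExt_top (ψ : ℝ → ℝ) : psiExt ψ ∞ = 0 := by simp [psiExt]

lemma psiExt_of_ne {z : ℝ≥0∞} (hz : z ≠ ∞) : psiExt ψ z = ψ z.toReal := by simp [psiExt, hz]

lemma psiExt_ofReal {z : ℝ} (hz : 0 ≤ z) : psiExt ψ (ENNReal.ofReal z) = ψ z := by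
  simp [psiExt, hz]

lemma psiExt_zero (h : IsGenerator ψ) : psiExt ψ 0 = 1 := by simp [psiExt, h.map_zero]

lemma psiExt_mem (h : IsGenerator ψ) (z : ℝ≥0∞) : psiExt ψ z ∈ Icc (0 : ℝ) 1 := by
  by_cases hz : z = ∞
  · simp [psiExt, hz]
  · rw [psiExt_of_ne hz]; exact h.mem_Icc _ ENNReal.toReal_nonneg

lemma psiExt_antitone (h : IsGenerator ψ) : Antitone (psiExt ψ) := by
  intro a b hab
  by_cases hb : b = ∞
  · rw [hb, psiExt_top]; exact (h.psiExt_mem a).1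
  · have ha : a ≠ ∞ := ne_top_of_le_ne_top hb hab
    rw [psiExt_of_ne ha, psiExt_of_ne hb]
    exact h.antitoneOn ENNReal.toReal_nonneg ENNReal.toReal_nonneg (ENNReal.toReal_mono hb hab)

lemma psiExt_continuous (h : IsGenerator ψ) : Continuous (psiExt ψ) := by
  rw [continuous_iff_continuousAt]
  intro z
  by_cases hz : z = ∞
  · subst hz
    rw [ContinuousAt, psiExt_top]
    rw [tendsto_order]
    refine ⟨fun a ha => Eventually.of_forall fun z => ha.trans_le (h.psiExt_mem z).1, fun a ha => ?_⟩
    obtain ⟨N, hN, hN0⟩ := ((h.tendsto_atTop.eventually (gt_mem_nhds ha)).and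
      (eventually_ge_atTop 0)).exists
    filter_upwards [lt_mem_nhds (ENNReal.ofReal_lt_top (r := N))] with z hz
    exact (h.psiExt_antitone hz.le).trans_lt (by rwa [psiExt_ofReal hN0])
  · have h1 : Tendsto (fun w : ℝ≥0∞ => ψ w.toReal) (𝓝 z) (𝓝 (ψ z.toReal)) := by
      refine (h.continuousOn z.toReal ENNReal.toReal_nonneg).tendsto.comp ?_
      exact tendsto_nhdsWithin_iff.2 ⟨ENNReal.tendsto_toReal hz,
        Eventually.of_forall fun w => ENNReal.toReal_nonneg⟩
    rw [ContinuousAt, psiExt_of_ne hz]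
    refine h1.congr' ?_
    filter_upwards [isOpen_ne.mem_nhds hz] with w hw
    rw [psiExt_of_ne hw]

/-- The infimum defining `φ(y)` is attained. -/
lemma psiExt_pseudoInv (h : IsGenerator ψ) {y : ℝ} (hy : y ∈ Icc (0 : ℝ) 1) :
    psiExt ψ (pseudoInv ψ y) = y := by
  have hne : {z : ℝ≥0∞ | psiExt ψ z = y}.Nonempty := by
    have : y ∈ range (psiExt ψ) := mem_range_of_exists_le_of_exists_ge h.psiExt_continuous
      ⟨∞, by rw [psiExt_top]; exact hy.1⟩ ⟨0, by rw [h.psiExt_zero]; exact hy.2⟩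
    exact this
  have hcl : IsClosed {z : ℝ≥0∞ | psiExt ψ z = y} :=
    isClosed_eq h.psiExt_continuous continuous_const
  exact hcl.sInf_mem hne

lemma psiExt_strictAntiOn (h : IsGenerator ψ) {a b : ℝ≥0∞} (hab : a < b)
    (hb : b ≤ pseudoInv ψ 0) : psiExt ψ b < psiExt ψ a := by
  by_cases hbt : b = ∞
  · subst hbt
    rw [psiExt_top]
    refine lt_of_le_of_ne (h.psiExt_mem a).1 fun h0 => ?_
    have : pseudoInv ψ 0 ≤ a := sInf_le h0.symm
    exact absurd (hb.trans this) (not_le.2 hab)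
  · have ha : a ≠ ∞ := ne_top_of_lt hab
    rw [psiExt_of_ne ha, psiExt_of_ne hbt]
    refine h.strictAnti ENNReal.toReal_nonneg ((ENNReal.toReal_lt_toReal ha hbt).2 hab) ?_
    rwa [ENNReal.ofReal_toReal hbt]

lemma lt_pseudoInv_of (h : IsGenerator ψ) {y : ℝ} (hy : y ∈ Icc (0 : ℝ) 1) {z : ℝ≥0∞}
    (hz : y < psiExt ψ z) : z < pseudoInv ψ y := by
  by_contra hcon
  have := h.psiExt_antitone (not_lt.1 hcon)
  rw [h.psiExt_pseudoInv hy] at this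
  linarith

lemma pseudoInv_lt_of (h : IsGenerator ψ) {y : ℝ} (hy : y ∈ Icc (0 : ℝ) 1) {z : ℝ≥0∞}
    (hz : psiExt ψ z < y) : pseudoInv ψ y < z := by
  by_contra hcon
  have := h.psiExt_antitone (not_lt.1 hcon)
  rw [h.psiExt_pseudoInv hy] at this
  linarith

lemma pseudoInv_strictAntiOn (h : IsGenerator ψ) : StrictAntiOn (pseudoInv ψ) (Icc 0 1) := by
  intro a ha b hb hab
  exact h.lt_pseudoInv_of ha (by rwa [h.psiExt_pseudoInv hb])

lemma zero_mem01 : (0 : ℝ) ∈ Icc (0 : ℝ) 1 := by simp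
lemma one_mem01 : (1 : ℝ) ∈ Icc (0 : ℝ) 1 := by simp

lemma pseudoInv_le (h : IsGenerator ψ) {y : ℝ} (hy : y ∈ Icc (0 : ℝ) 1) :
    pseudoInv ψ y ≤ pseudoInv ψ 0 :=
  h.pseudoInv_strictAntiOn.antitoneOn zero_mem01 hy hy.1

lemma pseudoInv_one (h : IsGenerator ψ) : pseudoInv ψ 1 = 0 :=
  le_antisymm (sInf_le h.psiExt_zero) bot_le

lemma pseudoInv_psiExt (h : IsGenerator ψ) {z : ℝ≥0∞} (hz : z ≤ pseudoInv ψ 0) :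
    pseudoInv ψ (psiExt ψ z) = z := by
  refine le_antisymm (sInf_le rfl) ?_
  by_contra hcon
  have := h.psiExt_strictAntiOn (not_le.1 hcon) hz
  rw [h.psiExt_pseudoInv (h.psiExt_mem z)] at this
  exact lt_irrefl _ this

lemma psiExt_eq_zero (h : IsGenerator ψ) {z : ℝ≥0∞} (hz : pseudoInv ψ 0 ≤ z) :
    psiExt ψ z = 0 := by
  refine le_antisymm ?_ (h.psiExt_mem z).1
  have := h.psiExt_antitone hz
  rwa [h.psiExt_pseudoInv zero_mem01] at this

lemma psiExt_pos (h : IsGenerator ψ) {z : ℝ≥0∞} (hz : z < pseudoInv ψ 0) : 0 < psiExt ψ z := by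
  have := h.psiExt_strictAntiOn hz le_rfl
  rwa [h.psiExt_pseudoInv zero_mem01] at this

lemma lt_psiExt_of (h : IsGenerator ψ) {y : ℝ} (hy : y ∈ Icc (0 : ℝ) 1) {z : ℝ≥0∞}
    (hz : z < pseudoInv ψ y) : y < psiExt ψ z := by
  have := h.psiExt_strictAntiOn hz (h.pseudoInv_le hy)
  rwa [h.psiExt_pseudoInv hy] at this

lemma psiExt_lt_of (h : IsGenerator ψ) {y : ℝ} (hy : y ∈ Ioc (0 : ℝ) 1) {z : ℝ≥0∞}
    (hz : pseudoInv ψ y < z) : psiExt ψ z < y := by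
  have hy' : y ∈ Icc (0 : ℝ) 1 := ⟨hy.1.le, hy.2⟩
  rcases le_total z (pseudoInv ψ 0) with h1 | h1
  · have := h.psiExt_strictAntiOn hz h1
    rwa [h.psiExt_pseudoInv hy'] at this
  · rw [h.psiExt_eq_zero h1]; exact hy.1

lemma pseudoInv_continuousOn (h : IsGenerator ψ) : ContinuousOn (pseudoInv ψ) (Icc 0 1) := by
  intro y hy
  rw [ContinuousWithinAt, tendsto_order]
  refine ⟨fun z hz => ?_, fun z hz => ?_⟩
  · filter_upwards [self_mem_nhdsWithin,
      mem_nhdsWithin_of_mem_nhds (gt_mem_nhds (h.lt_psiExt_of hy hz))] with w hw hwz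
    exact h.lt_pseudoInv_of hw hwz
  · rcases eq_or_lt_of_le hy.1 with h0 | h0
    · filter_upwards [self_mem_nhdsWithin] with w hw
      exact (h.pseudoInv_le hw).trans_lt (by rwa [h0])
    · filter_upwards [self_mem_nhdsWithin,
        mem_nhdsWithin_of_mem_nhds (lt_mem_nhds (h.psiExt_lt_of ⟨h0, hy.2⟩ hz))] with w hw hwz
      exact h.pseudoInv_lt_of hw hwz

lemma pseudoInv_ne_top (h : IsGenerator ψ) {y : ℝ} (hy : y ∈ Ioc (0 : ℝ) 1) :
    pseudoInv ψ y ≠ ∞ := by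
  intro ht
  have := h.psiExt_pseudoInv ⟨hy.1.le, hy.2⟩
  rw [ht, psiExt_top] at this
  exact hy.1.ne this

/-- The bivariate margin `T(x,y) = ψ(φ(x) + φ(y))` satisfies `T(ψ z, ψ w) = ψ(z + w)`. -/
lemma biv_psi (h : IsGenerator ψ) {z w : ℝ} (hz : 0 ≤ z) (hw : 0 ≤ w) :
    psiExt ψ (pseudoInv ψ (ψ z) + pseudoInv ψ (ψ w)) = ψ (z + w) := by
  rw [← psiExt_ofReal (ψ := ψ) (add_nonneg hz hw), ENNReal.ofReal_add hz hw,
    ← psiExt_ofReal (ψ := ψ) hz, ← psiExt_ofReal (ψ := ψ) hw]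
  generalize ENNReal.ofReal z = a
  generalize ENNReal.ofReal w = b
  rcases le_total a (pseudoInv ψ 0) with ha | ha
  · rcases le_total b (pseudoInv ψ 0) with hb | hb
    · rw [h.pseudoInv_psiExt ha, h.pseudoInv_psiExt hb]
    · rw [h.psiExt_eq_zero hb, h.psiExt_eq_zero le_add_self,
        h.psiExt_eq_zero (hb.trans le_add_self)]
  · rw [h.psiExt_eq_zero ha, h.psiExt_eq_zero le_self_add,
      h.psiExt_eq_zero (ha.trans le_self_add)]

lemma biv_continuousOn (h : IsGenerator ψ) :
    ContinuousOn (fun p : ℝ × ℝ => psiExt ψ (pseudoInv ψ p.1 + pseudoInv ψ p.2))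
      (Icc 0 1 ×ˢ Icc 0 1) := by
  refine h.psiExt_continuous.comp_continuousOn (ContinuousOn.add ?_ ?_)
  · exact h.pseudoInv_continuousOn.comp continuousOn_fst fun p hp => hp.1
  · exact h.pseudoInv_continuousOn.comp continuousOn_snd fun p hp => hp.2

end IsGenerator

/-! ### Convergence of the generators -/

section Convergence

variable {d : ℕ} {ψ : ℝ → ℝ} {Ψ : ℕ → ℝ → ℝ}

/-- Setting all but two coordinates to `1` turns the copula into its bivariate margin. -/
lemma archCopula_biv (hd : 3 ≤ d) (h : IsGenerator ψ) (x y : ℝ) :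
    archCopula d ψ (fun i => if i = ⟨0, by omega⟩ then x else if i = ⟨1, by omega⟩ then y else 1)
      = psiExt ψ (pseudoInv ψ x + pseudoInv ψ y) := by
  unfold archCopula
  congr 1
  have : ∀ i : Fin d, pseudoInv ψ
      (if i = ⟨0, by omega⟩ then x else if i = ⟨1, by omega⟩ then y else 1)
      = (if i = ⟨0, by omega⟩ then pseudoInv ψ x else 0)
        + (if i = ⟨1, by omega⟩ then pseudoInv ψ y else 0) := by
    intro i
    by_cases h0 : i = ⟨0, by omega⟩
    · subst h0; simp
    · by_cases h1 : i = ⟨1, by omega⟩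
      · subst h1; simp
      · simp [h0, h1, h.pseudoInv_one]
  rw [Finset.sum_congr rfl fun i _ => this i, Finset.sum_add_distrib]
  simp

lemma biv_tendstoUniformlyOn (hd : 3 ≤ d) (hψ : IsGenerator ψ) (hΨ : ∀ n, IsGenerator (Ψ n))
    (hconv : TendstoUniformlyOn (fun n => archCopula d (Ψ n)) (archCopula d ψ) atTop
      {x | ∀ i, x i ∈ Icc (0 : ℝ) 1}) :
    TendstoUniformlyOn
      (fun n (p : ℝ × ℝ) => psiExt (Ψ n) (pseudoInv (Ψ n) p.1 + pseudoInv (Ψ n) p.2))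
      (fun p => psiExt ψ (pseudoInv ψ p.1 + pseudoInv ψ p.2)) atTop (Icc 0 1 ×ˢ Icc 0 1) := by
  rw [Metric.tendstoUniformlyOn_iff] at hconv ⊢
  intro ε hε
  filter_upwards [hconv ε hε] with n hn p hp
  have := hn (fun i => if i = ⟨0, by omega⟩ then p.1 else if i = ⟨1, by omega⟩ then p.2 else 1) ?_
  · rwa [archCopula_biv hd hψ, archCopula_biv hd (hΨ n)] at this
  · intro i
    split_ifs
    · exact hp.1
    · exact hp.2
    · exact IsGenerator.one_mem01

lemma biv_tendsto (hψ : IsGenerator ψ)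
    (hbiv : TendstoUniformlyOn
      (fun n (p : ℝ × ℝ) => psiExt (Ψ n) (pseudoInv (Ψ n) p.1 + pseudoInv (Ψ n) p.2))
      (fun p => psiExt ψ (pseudoInv ψ p.1 + pseudoInv ψ p.2)) atTop (Icc 0 1 ×ˢ Icc 0 1))
    {l : Filter ℕ} (hl : l ≤ atTop) {u v : ℕ → ℝ} {a b : ℝ}
    (hu : ∀ n, u n ∈ Icc (0 : ℝ) 1) (hv : ∀ n, v n ∈ Icc (0 : ℝ) 1)
    (ha : Tendsto u l (𝓝 a)) (hb : Tendsto v l (𝓝 b))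
    (hab : (a, b) ∈ Icc (0 : ℝ) 1 ×ˢ Icc (0 : ℝ) 1) :
    Tendsto (fun n => psiExt (Ψ n) (pseudoInv (Ψ n) (u n) + pseudoInv (Ψ n) (v n))) l
      (𝓝 (psiExt ψ (pseudoInv ψ a + pseudoInv ψ b))) := by
  have hlim : Tendsto (fun n => (u n, v n)) l (𝓝[Icc 0 1 ×ˢ Icc 0 1] (a, b)) :=
    tendsto_nhdsWithin_iff.2 ⟨ha.prodMk_nhds hb, Eventually.of_forall fun n => ⟨hu n, hv n⟩⟩
  have h1 := (hψ.biv_continuousOn (a, b) hab).tendsto.comp hlim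
  rw [Metric.tendsto_nhds] at h1 ⊢
  intro ε hε
  rw [Metric.tendstoUniformlyOn_iff] at hbiv
  filter_upwards [h1 (ε / 2) (half_pos hε), hl (hbiv (ε / 2) (half_pos hε))] with n hn1 hn2
  have := hn2 (u n, v n) ⟨hu n, hv n⟩
  rw [dist_comm] at this
  refine (dist_triangle _ (psiExt ψ (pseudoInv ψ (u n) + pseudoInv ψ (v n))) _).trans_lt ?_
  simp only [Function.comp] at hn1 this ⊢
  linarith

lemma conv_add (hψ : IsGenerator ψ) (hΨ : ∀ n, IsGenerator (Ψ n))
    (hbiv : TendstoUniformlyOn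
      (fun n (p : ℝ × ℝ) => psiExt (Ψ n) (pseudoInv (Ψ n) p.1 + pseudoInv (Ψ n) p.2))
      (fun p => psiExt ψ (pseudoInv ψ p.1 + pseudoInv ψ p.2)) atTop (Icc 0 1 ×ˢ Icc 0 1))
    {z w : ℝ} (hz : 0 ≤ z) (hw : 0 ≤ w)
    (h1 : Tendsto (fun n => Ψ n z) atTop (𝓝 (ψ z)))
    (h2 : Tendsto (fun n => Ψ n w) atTop (𝓝 (ψ w))) :
    Tendsto (fun n => Ψ n (z + w)) atTop (𝓝 (ψ (z + w))) := by
  have := biv_tendsto hψ hbiv le_rfl (fun n => (hΨ n).mem_Icc z hz) (fun n => (hΨ n).mem_Icc w hw)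
    h1 h2 ⟨hψ.mem_Icc z hz, hψ.mem_Icc w hw⟩
  rw [hψ.biv_psi hz hw] at this
  exact this.congr fun n => (hΨ n).biv_psi hz hw

/-- A limit point `a` of `ψₙ(z)` satisfies `ψ(2φ(a)) = ψ(2z) > 0`, which pins `a = ψ(z)`. -/
lemma conv_half (hψ : IsGenerator ψ) (hΨ : ∀ n, IsGenerator (Ψ n))
    (hbiv : TendstoUniformlyOn
      (fun n (p : ℝ × ℝ) => psiExt (Ψ n) (pseudoInv (Ψ n) p.1 + pseudoInv (Ψ n) p.2))
      (fun p => psiExt ψ (pseudoInv ψ p.1 + pseudoInv ψ p.2)) atTop (Icc 0 1 ×ˢ Icc 0 1))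
    {z : ℝ} (hz : 0 ≤ z) (hpos : 0 < ψ (z + z))
    (h1 : Tendsto (fun n => Ψ n (z + z)) atTop (𝓝 (ψ (z + z)))) :
    Tendsto (fun n => Ψ n z) atTop (𝓝 (ψ z)) := by
  rw [tendsto_iff_ultrafilter]
  intro U hU
  have hmem : ∀ n, Ψ n z ∈ Icc (0 : ℝ) 1 := fun n => (hΨ n).mem_Icc z hz
  obtain ⟨a, ha, hUa⟩ := isCompact_Icc.ultrafilter_le_nhds (U.map fun n => Ψ n z)
    (by simp only [Ultrafilter.coe_map, le_principal_iff, mem_map]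
        exact Filter.univ_mem' hmem)
  have hUa' : Tendsto (fun n => Ψ n z) U (𝓝 a) := hUa
  have h2 := biv_tendsto hψ hbiv hU hmem hmem hUa' hUa' ⟨ha, ha⟩
  have h3 := (h1.mono_left hU).congr fun n => ((hΨ n).biv_psi hz hz).symm
  have h4 := tendsto_nhds_unique h2 h3
  suffices haz : a = ψ z by rwa [← haz]
  have hzz : ENNReal.ofReal (z + z) < pseudoInv ψ 0 := by
    refine hψ.lt_pseudoInv_of IsGenerator.zero_mem01 ?_
    rwa [IsGenerator.psiExt_ofReal (add_nonneg hz hz)]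
  rw [← IsGenerator.psiExt_ofReal (ψ := ψ) (add_nonneg hz hz)] at h4 hpos
  have h5 : pseudoInv ψ a + pseudoInv ψ a = ENNReal.ofReal (z + z) := by
    rcases lt_trichotomy (pseudoInv ψ a + pseudoInv ψ a) (ENNReal.ofReal (z + z)) with hc | hc | hc
    · exact absurd h4 (hψ.psiExt_strictAntiOn hc hzz.le).ne'
    · exact hc
    · rcases le_total (pseudoInv ψ a + pseudoInv ψ a) (pseudoInv ψ 0) with hd | hd
      · exact absurd h4 (hψ.psiExt_strictAntiOn hc hd).ne
      · rw [hψ.psiExt_eq_zero hd] at h4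
        exact absurd h4 hpos.ne
  have h6 : pseudoInv ψ a = ENNReal.ofReal z := by
    rw [ENNReal.ofReal_add hz hz, ← two_mul, ← two_mul] at h5
    exact (ENNReal.mul_right_inj (by norm_num) (by norm_num)).1 h5
  rw [← hψ.psiExt_pseudoInv ha, h6, IsGenerator.psiExt_ofReal hz]

/-- Convergence of the bivariate margins and the normalization `ψₙ(1) = ψ(1) = 1/2` give
convergence of the generators at dyadic points, hence everywhere by monotonicity. -/
lemma conv_psi (hψ : IsGenerator ψ) (hΨ : ∀ n, IsGenerator (Ψ n))
    (hbiv : TendstoUniformlyOn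
      (fun n (p : ℝ × ℝ) => psiExt (Ψ n) (pseudoInv (Ψ n) p.1 + pseudoInv (Ψ n) p.2))
      (fun p => psiExt ψ (pseudoInv ψ p.1 + pseudoInv ψ p.2)) atTop (Icc 0 1 ×ˢ Icc 0 1))
    (hψnorm : ψ 1 = 1 / 2) (hΨnorm : ∀ n, Ψ n 1 = 1 / 2) {z : ℝ} (hz : 0 ≤ z) :
    Tendsto (fun n => Ψ n z) atTop (𝓝 (ψ z)) := by
  have hpow : ∀ k : ℕ, Tendsto (fun n => Ψ n ((1 / 2) ^ k)) atTop (𝓝 (ψ ((1 / 2) ^ k))) := by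
    intro k
    induction k with
    | zero => simp [hΨnorm, hψnorm]
    | succ k ih =>
      have he : (1 / 2 : ℝ) ^ (k + 1) + (1 / 2) ^ (k + 1) = (1 / 2) ^ k := by ring
      refine conv_half hψ hΨ hbiv (by positivity) ?_ (by rwa [he])
      rw [he]
      have hle : (1 / 2 : ℝ) ^ k ≤ 1 := pow_le_one₀ (by norm_num) (by norm_num)
      have := hψ.antitoneOn (show (0 : ℝ) ≤ (1 / 2) ^ k by positivity)
        (show (0 : ℝ) ≤ 1 by norm_num) hle
      linarith
  have hdy : ∀ k m : ℕ, Tendsto (fun n => Ψ n (m * (1 / 2) ^ k)) atTop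
      (𝓝 (ψ (m * (1 / 2) ^ k))) := by
    intro k m
    induction m with
    | zero => simp [hψ.map_zero, (hΨ _).map_zero]
    | succ m ih =>
      have he : ((m + 1 : ℕ) : ℝ) * (1 / 2) ^ k = m * (1 / 2) ^ k + (1 / 2) ^ k := by
        push_cast; ring
      rw [he]
      exact conv_add hψ hΨ hbiv (by positivity) (by positivity) ih (hpow k)
  rw [tendsto_order]
  have hcont := Metric.continuousOn_iff.1 hψ.continuousOn z hz
  have hk0 : Tendsto (fun k : ℕ => (1 / 2 : ℝ) ^ k) atTop (𝓝 0) :=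
    tendsto_pow_atTop_nhds_zero_of_lt_one (by norm_num) (by norm_num)
  -- `z` lies between the neighbouring dyadic points `m / 2 ^ k` and `(m + 1) / 2 ^ k`.
  have hfl : ∀ k : ℕ, (⌊z / (1 / 2) ^ k⌋₊ : ℝ) * (1 / 2) ^ k ≤ z ∧
      z ≤ ((⌊z / (1 / 2) ^ k⌋₊ + 1 : ℕ) : ℝ) * (1 / 2) ^ k := by
    intro k
    have hp : (0 : ℝ) < (1 / 2) ^ k := by positivity
    constructor
    · rw [← le_div_iff₀ hp]; exact Nat.floor_le (by positivity)
    · rw [← div_le_iff₀ hp]; push_cast; exact (Nat.lt_floor_add_one _).le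
  constructor
  · intro a ha
    obtain ⟨δ, hδ, hδ'⟩ := hcont (ψ z - a) (by linarith)
    obtain ⟨k, hk⟩ := (hk0.eventually (gt_mem_nhds hδ)).exists
    obtain ⟨h1, h2⟩ := hfl k
    generalize ⌊z / (1 / 2) ^ k⌋₊ = m at h1 h2
    have h3 := hδ' (((m + 1 : ℕ) : ℝ) * (1 / 2) ^ k) (hz.trans h2) (by
      rw [Real.dist_eq, abs_of_nonneg (by linarith)]
      push_cast at *; linarith)
    rw [Real.dist_eq, abs_lt] at h3
    filter_upwards [(hdy k (m + 1)).eventually (lt_mem_nhds (show a < _ by linarith [h3.1]))]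
      with n hn
    exact hn.trans_le ((hΨ n).antitoneOn hz (hz.trans h2) h2)
  · intro a ha
    obtain ⟨δ, hδ, hδ'⟩ := hcont (a - ψ z) (by linarith)
    obtain ⟨k, hk⟩ := (hk0.eventually (gt_mem_nhds hδ)).exists
    obtain ⟨h1, h2⟩ := hfl k
    generalize ⌊z / (1 / 2) ^ k⌋₊ = m at h1 h2
    have hm0 : (0 : ℝ) ≤ m * (1 / 2) ^ k := by positivity
    have h3 := hδ' (m * (1 / 2) ^ k) hm0 (by
      rw [Real.dist_eq, abs_of_nonpos (by linarith)]
      push_cast at *; linarith)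
    rw [Real.dist_eq, abs_lt] at h3
    filter_upwards [(hdy k m).eventually (gt_mem_nhds (show _ < a by linarith [h3.2]))]
      with n hn
    exact ((hΨ n).antitoneOn hm0 hz h1).trans_lt hn

end Convergence

section InverseConvergence

variable {ψ : ℝ → ℝ} {Ψ : ℕ → ℝ → ℝ}

lemma conv_psiExt
    (hlim : ∀ z : ℝ, 0 ≤ z → Tendsto (fun n => Ψ n z) atTop (𝓝 (ψ z))) (z : ℝ≥0∞) :
    Tendsto (fun n => psiExt (Ψ n) z) atTop (𝓝 (psiExt ψ z)) := by
  by_cases hz : z = ∞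
  · simp [hz, psiExt]
  · simpa [psiExt, hz] using hlim z.toReal ENNReal.toReal_nonneg

/-- Holds at `y = 0` too, where only this half of `φₙ(y) → φ(y)` can be expected. -/
lemma eventually_lt_pseudoInv (hψ : IsGenerator ψ) (hΨ : ∀ n, IsGenerator (Ψ n))
    (hlim : ∀ z : ℝ, 0 ≤ z → Tendsto (fun n => Ψ n z) atTop (𝓝 (ψ z)))
    {y : ℝ} (hy : y ∈ Icc (0 : ℝ) 1) {z : ℝ≥0∞}
    (hz : z < pseudoInv ψ y) : ∀ᶠ n in atTop, z < pseudoInv (Ψ n) y := by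
  filter_upwards [(conv_psiExt hlim z).eventually (lt_mem_nhds (hψ.lt_psiExt_of hy hz))] with n hn
  exact (hΨ n).lt_pseudoInv_of hy hn

lemma tendsto_pseudoInv (hψ : IsGenerator ψ) (hΨ : ∀ n, IsGenerator (Ψ n))
    (hlim : ∀ z : ℝ, 0 ≤ z → Tendsto (fun n => Ψ n z) atTop (𝓝 (ψ z)))
    {y : ℝ} (hy : y ∈ Ioc (0 : ℝ) 1) :
    Tendsto (fun n => pseudoInv (Ψ n) y) atTop (𝓝 (pseudoInv ψ y)) := by
  rw [tendsto_order]
  refine ⟨fun z hz => eventually_lt_pseudoInv hψ hΨ hlim ⟨hy.1.le, hy.2⟩ hz, fun z hz => ?_⟩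
  filter_upwards [(conv_psiExt hlim z).eventually (gt_mem_nhds (hψ.psiExt_lt_of hy hz))] with n hn
  exact (hΨ n).pseudoInv_lt_of ⟨hy.1.le, hy.2⟩ hn

end InverseConvergence

/-! ### Monotone chains of derivatives -/

/-- A sequence of functions on `(0,∞)` with `(F k)' = - F (k+1)` for `k < m`, whose last member is
non-increasing and whose first one vanishes at infinity. This abstracts the signed derivatives
`F k = (-1)^k ψ⁽ᵏ⁾` of a generator. -/
structure AltChain (m : ℕ) (F : ℕ → ℝ → ℝ) : Prop where
  hasDeriv : ∀ k < m, ∀ z : ℝ, 0 < z → HasDerivAt (F k) (-(F (k + 1) z)) z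
  lim_zero : Tendsto (F 0) atTop (𝓝 0)
  anti_last : AntitoneOn (F m) (Ioi 0)

namespace AltChain

variable {m : ℕ} {F : ℕ → ℝ → ℝ}

/-- A member staying away from `0` near infinity would force its antiderivative to diverge, and
so on down to `F 0`. -/
lemma not_eventually (h : AltChain m F) : ∀ k ≤ m, ∀ c : ℝ, 0 < c →
    (¬ ∀ᶠ z in atTop, c ≤ F k z) ∧ (¬ ∀ᶠ z in atTop, F k z ≤ -c) := by
  intro k
  induction k with
  | zero =>
    intro _ c hc
    constructor
    · intro he
      obtain ⟨z, hz1, hz2⟩ := (he.and (h.lim_zero.eventually (gt_mem_nhds hc))).exists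
      linarith
    · intro he
      obtain ⟨z, hz1, hz2⟩ := (he.and (h.lim_zero.eventually
        (lt_mem_nhds (neg_lt_zero.2 hc)))).exists
      linarith
  | succ k ih =>
    intro hk c hc
    have ih' := ih (by omega) 1 one_pos
    have hdiff : ∀ z0 : ℝ, 0 < z0 → ∀ z > z0, ∃ w ∈ Ioo z0 z,
        -(F (k + 1) w) = (F k z - F k z0) / (z - z0) := by
      intro z0 hz0 z hz
      refine exists_hasDerivAt_eq_slope (F k) (fun w => -(F (k + 1) w)) hz ?_ ?_
      · intro w hw
        exact (h.hasDeriv k (by omega) w (hz0.trans_le hw.1)).continuousAt.continuousWithinAt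
      · intro w hw
        exact h.hasDeriv k (by omega) w (hz0.trans hw.1)
    constructor
    · intro he
      obtain ⟨z0, hz0⟩ := he.exists_forall_of_atTop
      set z1 := max z0 1
      have hz1 : 0 < z1 := lt_max_of_lt_right one_pos
      refine ih'.2 ?_
      filter_upwards [eventually_gt_atTop z1, eventually_ge_atTop (z1 + (1 + F k z1) / c)]
        with z hz hz2
      obtain ⟨w, hw, hwe⟩ := hdiff z1 hz1 z hz
      have hc' := hz0 w ((le_max_left z0 1).trans hw.1.le)
      rw [eq_div_iff (by linarith)] at hwe
      have h3 : 1 + F k z1 ≤ c * (z - z1) := by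
        have : (1 + F k z1) / c ≤ z - z1 := by linarith
        rw [div_le_iff₀ hc] at this
        linarith
      nlinarith [mul_le_mul_of_nonneg_right hc' (show 0 ≤ z - z1 by linarith)]
    · intro he
      obtain ⟨z0, hz0⟩ := he.exists_forall_of_atTop
      set z1 := max z0 1
      have hz1 : 0 < z1 := lt_max_of_lt_right one_pos
      refine ih'.1 ?_
      filter_upwards [eventually_gt_atTop z1, eventually_ge_atTop (z1 + (1 - F k z1) / c)]
        with z hz hz2
      obtain ⟨w, hw, hwe⟩ := hdiff z1 hz1 z hz
      have hc' := hz0 w ((le_max_left z0 1).trans hw.1.le)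
      rw [eq_div_iff (by linarith)] at hwe
      have h3 : 1 - F k z1 ≤ c * (z - z1) := by
        have : (1 - F k z1) / c ≤ z - z1 := by linarith
        rw [div_le_iff₀ hc] at this
        linarith
      nlinarith [mul_le_mul_of_nonneg_right hc' (show 0 ≤ z - z1 by linarith)]

lemma nonneg_of_anti (h : AltChain m F) {k : ℕ} (hk : k ≤ m) (ha : AntitoneOn (F k) (Ioi 0))
    {z : ℝ} (hz : 0 < z) : 0 ≤ F k z := by
  by_contra hcon
  refine (h.not_eventually k hk (-(F k z)) (by linarith)).2 ?_
  filter_upwards [eventually_ge_atTop z] with w hw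
  rw [neg_neg]
  exact ha hz (hz.trans_le hw) hw

lemma tendsto_of_anti (h : AltChain m F) {k : ℕ} (hk : k ≤ m) (ha : AntitoneOn (F k) (Ioi 0)) :
    Tendsto (F k) atTop (𝓝 0) := by
  rw [tendsto_order]
  constructor
  · intro a ha0
    filter_upwards [eventually_gt_atTop 0] with z hz
    exact ha0.trans_le (h.nonneg_of_anti hk ha hz)
  · intro a ha0
    have : ∃ z, 0 < z ∧ F k z < a := by
      by_contra! hcon
      refine (h.not_eventually k hk a ha0).1 ?_
      filter_upwards [eventually_gt_atTop 0] with z hz using hcon z hz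
    obtain ⟨z, hz, hza⟩ := this
    filter_upwards [eventually_ge_atTop z] with w hw
    exact (ha hz (hz.trans_le hw) hw).trans_lt hza

lemma anti (h : AltChain m F) : ∀ k ≤ m, AntitoneOn (F k) (Ioi 0) := by
  suffices ∀ j k, k + j = m → AntitoneOn (F k) (Ioi 0) from
    fun k hk => this (m - k) k (by omega)
  intro j
  induction j with
  | zero => intro k hk; obtain rfl : k = m := by omega
            exact h.anti_last
  | succ j ih =>
    intro k hk
    have ih' := ih (k + 1) (by omega)
    refine antitoneOn_of_deriv_nonpos (convex_Ioi 0) ?_ ?_ ?_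
    · intro z hz
      exact (h.hasDeriv k (by omega) z hz).continuousAt.continuousWithinAt
    · intro z hz
      rw [interior_Ioi] at hz
      exact (h.hasDeriv k (by omega) z hz).differentiableAt.differentiableWithinAt
    · intro z hz
      rw [interior_Ioi] at hz
      rw [(h.hasDeriv k (by omega) z hz).deriv]
      linarith [h.nonneg_of_anti (by omega) ih' hz]

lemma nonneg (h : AltChain m F) {k : ℕ} (hk : k ≤ m) {z : ℝ} (hz : 0 < z) : 0 ≤ F k z :=
  h.nonneg_of_anti hk (h.anti k hk) hz

lemma lim (h : AltChain m F) {k : ℕ} (hk : k ≤ m) : Tendsto (F k) atTop (𝓝 0) :=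
  h.tendsto_of_anti hk (h.anti k hk)

/-- A zero of some `F k` propagates down to `F 0`: beyond it `F (k-1)` is constant, hence `0`. -/
lemma zero_of_zero (h : AltChain m F) {p : ℝ} (hp : 0 < p) : ∀ k ≤ m, F k p = 0 → F 0 p = 0 := by
  intro k
  induction k with
  | zero => exact fun _ h => h
  | succ k ih =>
    intro hk h0
    refine ih (by omega) (le_antisymm ?_ (h.nonneg (by omega) hp))
    have hmono : MonotoneOn (F k) (Ici p) := by
      refine monotoneOn_of_deriv_nonneg (convex_Ici p) ?_ ?_ ?_
      · intro z hz
        exact (h.hasDeriv k (by omega) z (hp.trans_le hz)).continuousAt.continuousWithinAt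
      · intro z hz
        rw [interior_Ici] at hz
        exact (h.hasDeriv k (by omega) z (hp.trans hz)).differentiableAt.differentiableWithinAt
      · intro z hz
        rw [interior_Ici] at hz
        rw [(h.hasDeriv k (by omega) z (hp.trans hz)).deriv]
        have := h.anti (k + 1) hk hp (hp.trans hz) (le_of_lt hz)
        linarith
    refine ge_of_tendsto (h.lim (k := k) (by omega)) ?_
    filter_upwards [eventually_ge_atTop p] with z hz
    exact hmono self_mem_Ici hz hz

lemma pos (h : AltChain m F) {p : ℝ} (hp : 0 < p) (h0 : 0 < F 0 p) {k : ℕ} (hk : k ≤ m) :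
    0 < F k p :=
  lt_of_le_of_ne (h.nonneg hk hp) fun he => h0.ne' (h.zero_of_zero hp k hk he.symm)

lemma slope_bounds (h : AltChain m F) {k : ℕ} (hk : k < m) {a b : ℝ} (ha : 0 < a) (hab : a < b) :
    F (k + 1) b ≤ (F k a - F k b) / (b - a) ∧ (F k a - F k b) / (b - a) ≤ F (k + 1) a := by
  obtain ⟨w, hw, hwe⟩ := exists_hasDerivAt_eq_slope (F k) (fun w => -(F (k + 1) w)) hab
    (fun w hw => (h.hasDeriv k hk w (ha.trans_le hw.1)).continuousAt.continuousWithinAt)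
    (fun w hw => h.hasDeriv k hk w (ha.trans hw.1))
  have : (F k a - F k b) / (b - a) = F (k + 1) w := by
    rw [← neg_sub, neg_div, ← hwe, neg_neg]
  rw [this]
  have hw0 : 0 < w := ha.trans hw.1
  exact ⟨h.anti (k + 1) hk hw0 (hw0.trans hw.2) hw.2.le, h.anti (k + 1) hk ha hw0 hw.1.le⟩

/-- If `F n 0 → F 0` pointwise, all members converge pointwise: each `F n (k+1) z` is squeezed
between one-sided difference quotients of `F n k`. -/
lemma tendsto {Fn : ℕ → ℕ → ℝ → ℝ} (h : AltChain m F) (hn : ∀ n, AltChain m (Fn n))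
    (hlim : ∀ z : ℝ, 0 < z → Tendsto (fun n => Fn n 0 z) atTop (𝓝 (F 0 z))) :
    ∀ k ≤ m, ∀ z : ℝ, 0 < z → Tendsto (fun n => Fn n k z) atTop (𝓝 (F k z)) := by
  intro k
  induction k with
  | zero => exact fun _ => hlim
  | succ k ih =>
    intro hk z hz
    have ih' := ih (by omega)
    have hd := h.hasDeriv k hk z hz
    rw [tendsto_order]
    constructor
    · intro a ha
      have h1 := hd.tendsto_slope_zero_right
      have h2 := (h1.eventually (gt_mem_nhds (show -(F (k + 1) z) < -a by linarith))).and
        self_mem_nhdsWithin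
      obtain ⟨t, ht, ht0⟩ := h2.exists
      have ht0' : 0 < t := ht0
      have h3 : a < (F k z - F k (z + t)) / (z + t - z) := by
        rw [smul_eq_mul, inv_mul_eq_div] at ht
        rw [add_sub_cancel_left, ← neg_sub, neg_div]; linarith
      have h4 : Tendsto (fun n => (Fn n k z - Fn n k (z + t)) / (z + t - z)) atTop
          (𝓝 ((F k z - F k (z + t)) / (z + t - z))) :=
        ((ih' z hz).sub (ih' (z + t) (by linarith))).div_const _
      filter_upwards [h4.eventually (lt_mem_nhds h3)] with n hn'
      exact hn'.trans_le ((hn n).slope_bounds hk hz (by linarith)).2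
    · intro a ha
      have h1 := hd.tendsto_slope_zero_left
      have h2 := ((h1.eventually (lt_mem_nhds (show -a < -(F (k + 1) z) by linarith))).and
        self_mem_nhdsWithin).and
        (mem_nhdsWithin_of_mem_nhds (lt_mem_nhds (show -z < (0 : ℝ) by linarith)))
      obtain ⟨t, ⟨ht, ht0⟩, htz⟩ := h2.exists
      have ht0' : t < 0 := ht0
      have h3 : (F k (z + t) - F k z) / (z - (z + t)) < a := by
        rw [smul_eq_mul, inv_mul_eq_div] at ht
        rw [sub_add_cancel_left, div_neg]; linarith
      have h4 : Tendsto (fun n => (Fn n k (z + t) - Fn n k z) / (z - (z + t))) atTop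
          (𝓝 ((F k (z + t) - F k z) / (z - (z + t)))) :=
        ((ih' (z + t) (by linarith)).sub (ih' z hz)).div_const _
      filter_upwards [h4.eventually (gt_mem_nhds h3)] with n hn'
      exact ((hn n).slope_bounds hk (by linarith) (by linarith)).1.trans_lt hn'

end AltChain

/-! ### Tail integrals and the simplex integral -/

/-- Fundamental theorem of calculus on a half-line for one-sided derivatives of constant sign. -/
lemma lintegral_tail {F G : ℝ → ℝ} {s : ℝ} (hc : ContinuousOn F (Ici s))
    (hd : ∀ z, s < z → HasDerivWithinAt F (-(G z)) (Iio z) z) (hG : ∀ z, s < z → 0 ≤ G z)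
    (hl : Tendsto F atTop (𝓝 0)) :
    ∫⁻ z in Ioi s, ENNReal.ofReal (G z) = ENNReal.ofReal (F s) := by
  -- Reflection turns left derivatives into right derivatives.
  have key : ∀ b, s < b → IntegrableOn (fun x => G (-x)) (Ioc (-b) (-s)) ∧
      ∫ x in (-b)..(-s), G (-x) = F s - F b := by
    intro b hb
    have hc' : ContinuousOn (fun x => F (-x)) (Icc (-b) (-s)) :=
      hc.comp continuous_neg.continuousOn fun x hx => by simpa using neg_le_neg hx.2
    have hd' : ∀ x ∈ Ioo (-b) (-s), HasDerivWithinAt (fun x => F (-x)) (G (-x)) (Ioi x) x := by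
      intro x hx
      have h1 := hd (-x) (by linarith [hx.2])
      have h2 : HasDerivWithinAt (fun x : ℝ => -x) (-1) (Ioi x) x :=
        (hasDerivAt_neg x).hasDerivWithinAt
      have h3 := h1.scomp x h2 (fun y hy => by simpa using hy)
      simpa [Function.comp_def] using h3
    have hi := intervalIntegral.integrableOn_deriv_right_of_nonneg hc' hd'
      (fun x hx => hG _ (by linarith [hx.2]))
    refine ⟨hi, ?_⟩
    have := intervalIntegral.integral_eq_sub_of_hasDeriv_right_of_le (by linarith) hc' hd'
      ((intervalIntegrable_iff_integrableOn_Ioc_of_le (by linarith)).2 hi)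
    simpa using this
  have key2 : ∀ b, s < b → IntegrableOn G (Ioc s b) ∧ ∫ x in s..b, G x = F s - F b := by
    intro b hb
    obtain ⟨h1, h2⟩ := key b hb
    constructor
    · have h3 := ((intervalIntegrable_iff_integrableOn_Ioc_of_le
        (show -b ≤ -s by linarith)).2 h1).comp_sub_left 0
      simp only [zero_sub, neg_neg, sub_neg_eq_add, zero_add] at h3
      exact (intervalIntegrable_iff_integrableOn_Ioc_of_le hb.le).1 h3.symm
    · rw [← h2, intervalIntegral.integral_comp_neg]; simp
  have hmeas : AEMeasurable (fun z => ENNReal.ofReal (G z)) (volume.restrict (Ioi s)) := by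
    have hcov : Ioi s = ⋃ n : ℕ, Ioc s (s + (n + 1)) := by
      ext x
      simp only [mem_Ioi, mem_iUnion, mem_Ioc]
      constructor
      · intro hx
        obtain ⟨n, hn⟩ := exists_nat_ge (x - s)
        exact ⟨n, hx, by linarith⟩
      · rintro ⟨n, hn, _⟩; exact hn
    rw [hcov, aemeasurable_iUnion_iff]
    intro n
    exact (key2 _ (by have : (0 : ℝ) ≤ n := n.cast_nonneg
                      linarith)).1.aestronglyMeasurable.aemeasurable.ennreal_ofReal
  have hcover : AECover (volume.restrict (Ioi s)) atTop fun b : ℝ => Iic b :=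
    (aecover_Iic tendsto_id).restrict
  refine hcover.lintegral_eq_of_tendsto _ hmeas ?_
  have h5 : Tendsto (fun b => ENNReal.ofReal (F s - F b)) atTop (𝓝 (ENNReal.ofReal (F s))) := by
    refine ENNReal.tendsto_ofReal ?_
    simpa using (tendsto_const_nhds (x := F s)).sub hl
  refine h5.congr' ?_
  filter_upwards [eventually_gt_atTop s] with b hb
  obtain ⟨h1, h2⟩ := key2 b hb
  rw [Measure.restrict_restrict measurableSet_Iic, Iic_inter_Ioi, ← h2,
    intervalIntegral.integral_of_le hb.le]
  refine ofReal_integral_eq_lintegral_ofReal h1 ?_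
  filter_upwards [ae_restrict_mem measurableSet_Ioc] with x hx using hG x hx.1

/-- Peeling off the first coordinate of an integral of a function of the coordinate sum. -/
lemma lintegral_pi_succ (μ : Measure ℝ) [SigmaFinite μ] (m : ℕ) {E : ℝ → ℝ≥0∞}
    (hE : Measurable E) (s : ℝ) :
    ∫⁻ z : Fin (m + 1) → ℝ, E (s + ∑ i, z i) ∂(Measure.pi fun _ => μ)
      = ∫⁻ z0, ∫⁻ z' : Fin m → ℝ, E ((s + z0) + ∑ i, z' i) ∂(Measure.pi fun _ => μ) ∂μ := by
  have h1 := (measurePreserving_piFinSuccAbove (fun _ : Fin (m + 1) => μ) 0).symm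
  rw [← h1.lintegral_comp_emb (MeasurableEquiv.measurableEmbedding _)]
  rw [lintegral_prod _ (by
    refine Measurable.aemeasurable ?_
    refine hE.comp (measurable_const.add (Finset.measurable_sum _ fun i _ => ?_))
    exact (measurable_pi_apply i).comp (MeasurableEquiv.measurable _))]
  refine lintegral_congr fun a => lintegral_congr fun b => ?_
  congr 1
  simp [MeasurableEquiv.piFinSuccAbove_symm_apply, Fin.insertNthEquiv, Fin.sum_univ_succ, add_assoc]

/-- If each `H (k+1)` integrates to `H k` over a half-line, integrating `H m` over `m` coordinates
leaves `H 0`. -/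
lemma lintegral_pi_chain (μ : Measure ℝ) [SigmaFinite μ] (hμ : ∀ᵐ z ∂μ, 0 < z) (m : ℕ) :
    ∀ H : ℕ → ℝ → ℝ≥0∞, (∀ k, Measurable (H k)) →
    (∀ k < m, ∀ s : ℝ, 0 < s → ∫⁻ z, H (k + 1) (s + z) ∂μ = H k s) →
    ∀ s : ℝ, 0 < s →
      ∫⁻ z : Fin m → ℝ, H m (s + ∑ i, z i) ∂(Measure.pi fun _ => μ) = H 0 s := by
  induction m with
  | zero =>
    intro H hH hs s hs0
    simp
  | succ m ih =>
    intro H hH hs s hs0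
    rw [lintegral_pi_succ μ m (hH _), ← hs 0 (by omega) s hs0]
    refine lintegral_congr_ae ?_
    filter_upwards [hμ] with z0 hz0
    exact ih (fun k => H (k + 1)) (fun k => hH _) (fun k hk => hs (k + 1) (by omega)) (s + z0)
      (by linarith)

/-! ### The kernels left of `f⁰` -/

lemma AltChain.zero_beyond {m : ℕ} {F : ℕ → ℝ → ℝ} (h : AltChain m F) {a : ℝ} (ha : 0 ≤ a)
    (h0 : ∀ z, a < z → F 0 z = 0) : ∀ k ≤ m, ∀ z, a < z → F k z = 0 := by
  intro k
  induction k with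
  | zero => exact fun _ => h0
  | succ k ih =>
    intro hk z hz
    obtain ⟨w, hw, hwz⟩ := exists_between hz
    have hw0 : 0 < w := ha.trans_lt hw
    have := (h.slope_bounds (k := k) (by omega) hw0 hwz).1
    rw [ih (by omega) w hw, ih (by omega) z hz, sub_zero, zero_div] at this
    exact le_antisymm this (h.nonneg hk (hw0.trans hwz))

/-- The signed derivative `(-1)^k ψ⁽ᵏ⁾`. -/
def sgnDeriv (ψ : ℝ → ℝ) (k : ℕ) (z : ℝ) : ℝ := (-1 : ℝ) ^ k * deriv^[k] ψ z

/-- The top density factor `-D⁻((-1)^(d-2) ψ^(d-2)) = (-1)^(d-1) D⁻ψ^(d-2)`. -/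
def topDeriv (d : ℕ) (ψ : ℝ → ℝ) (z : ℝ) : ℝ := -leftDeriv (sgnDeriv ψ (d - 2)) z

lemma sgnDeriv_zero (ψ : ℝ → ℝ) : sgnDeriv ψ 0 = ψ := by
  funext z; simp [sgnDeriv]

lemma leftDeriv_eq (d : ℕ) (ψ : ℝ → ℝ) (z : ℝ) :
    leftDeriv (deriv^[d - 2] ψ) z = -(-1 : ℝ) ^ (d - 2) * topDeriv d ψ z := by
  have h : sgnDeriv ψ (d - 2) = fun z => (-1 : ℝ) ^ (d - 2) * deriv^[d - 2] ψ z := rfl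
  rw [topDeriv, h]
  unfold leftDeriv
  rw [derivWithin_const_mul_field]
  have : ((-1 : ℝ) ^ (d - 2)) * (-1 : ℝ) ^ (d - 2) = 1 := by
    rw [← mul_pow]; simp
  linear_combination (-derivWithin (deriv^[d - 2] ψ) (Iio z) z) * this

namespace IsdMonotoneGenerator

variable {d : ℕ} {ψ : ℝ → ℝ}

lemma chain (h : IsdMonotoneGenerator d ψ) : AltChain (d - 2) (sgnDeriv ψ) where
  hasDeriv k hk z hz := by
    have h1 := (h.differentiable k hk z hz).hasDerivAt.const_mul ((-1 : ℝ) ^ k)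
    have h2 : -(sgnDeriv ψ (k + 1) z) = (-1 : ℝ) ^ k * deriv (deriv^[k] ψ) z := by
      rw [sgnDeriv, Function.iterate_succ_apply']; ring
    rw [h2]; exact h1
  lim_zero := by rw [sgnDeriv_zero]; exact h.toIsGenerator.tendsto_atTop
  anti_last := h.antitoneOn

lemma convex_sgn (h : IsdMonotoneGenerator d ψ) : ConvexOn ℝ (Ioi 0) (sgnDeriv ψ (d - 2)) :=
  h.convexOn

lemma topDeriv_hasDeriv (h : IsdMonotoneGenerator d ψ) {z : ℝ} (hz : 0 < z) :
    HasDerivWithinAt (sgnDeriv ψ (d - 2)) (-(topDeriv d ψ z)) (Iio z) z := by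
  rw [topDeriv, neg_neg]
  exact h.convex_sgn.hasDerivWithinAt_leftDeriv_of_mem_interior (by rwa [interior_Ioi])

lemma topDeriv_anti (h : IsdMonotoneGenerator d ψ) : AntitoneOn (topDeriv d ψ) (Ioi 0) := by
  have := h.convex_sgn.monotoneOn_leftDeriv
  rw [interior_Ioi] at this
  exact fun a ha b hb hab => neg_le_neg (this ha hb hab)

lemma topDeriv_le (h : IsdMonotoneGenerator d ψ) {a z : ℝ} (ha : 0 < a) (hz : a < z) :
    topDeriv d ψ z ≤ (sgnDeriv ψ (d - 2) a - sgnDeriv ψ (d - 2) z) / (z - a) := by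
  have := h.convex_sgn.slope_le_of_hasDerivWithinAt_Iio ha (ha.trans hz) hz
    (h.topDeriv_hasDeriv (ha.trans hz))
  rw [slope_def_field] at this
  rw [← neg_sub, neg_div]; linarith

lemma le_topDeriv (h : IsdMonotoneGenerator d ψ) {z b : ℝ} (hz : 0 < z) (hb : z < b) :
    (sgnDeriv ψ (d - 2) z - sgnDeriv ψ (d - 2) b) / (b - z) ≤ topDeriv d ψ z := by
  have hint : z ∈ interior (Ioi (0 : ℝ)) := by rwa [interior_Ioi]
  have h1 := h.convex_sgn.leftDeriv_le_rightDeriv_of_mem_interior hint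
  have h2 := h.convex_sgn.rightDeriv_le_slope_of_mem_interior hint (hz.trans hb) hb
  rw [slope_def_field] at h2
  rw [← neg_sub, neg_div, topDeriv, leftDeriv]; linarith

lemma topDeriv_nonneg (h : IsdMonotoneGenerator d ψ) {z : ℝ} (hz : 0 < z) :
    0 ≤ topDeriv d ψ z := by
  refine le_trans ?_ (h.le_topDeriv hz (lt_add_one z))
  have := h.chain.anti _ le_rfl hz (show (0 : ℝ) < z + 1 by linarith) (lt_add_one z).le
  rw [add_sub_cancel_left, div_one]; linarith

lemma sgn_zero_beyond (h : IsdMonotoneGenerator d ψ) (hA : pseudoInv ψ 0 ≠ ∞) {k : ℕ}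
    (hk : k ≤ d - 2) {z : ℝ} (hz : (pseudoInv ψ 0).toReal < z) : sgnDeriv ψ k z = 0 := by
  refine h.chain.zero_beyond (ENNReal.toReal_nonneg (a := pseudoInv ψ 0)) ?_ k hk z hz
  intro w hw
  rw [sgnDeriv_zero]
  have hw0 : 0 ≤ w := ENNReal.toReal_nonneg.trans hw.le
  rw [← IsGenerator.psiExt_ofReal (ψ := ψ) hw0]
  refine h.toIsGenerator.psiExt_eq_zero ?_
  rw [← ENNReal.ofReal_toReal hA]
  exact ENNReal.ofReal_le_ofReal hw.le

lemma psi_pos (h : IsdMonotoneGenerator d ψ) {z : ℝ} (hz : 0 ≤ z)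
    (hA : ENNReal.ofReal z < pseudoInv ψ 0) : 0 < ψ z := by
  rw [← IsGenerator.psiExt_ofReal (ψ := ψ) hz]
  exact h.toIsGenerator.psiExt_pos hA

lemma sgn_pos (h : IsdMonotoneGenerator d ψ) {k : ℕ} (hk : k ≤ d - 2) {z : ℝ} (hz : 0 < z)
    (hA : ENNReal.ofReal z < pseudoInv ψ 0) : 0 < sgnDeriv ψ k z := by
  refine h.chain.pos hz ?_ hk
  rw [sgnDeriv_zero]; exact h.psi_pos hz.le hA

end IsdMonotoneGenerator

/-- The sign of `D⁻ψ^(d-2)` cancels in the quotient defining the kernel. -/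
lemma DpsiExt_div (d : ℕ) (ψ : ℝ → ℝ) (w s : ℝ≥0∞) :
    DpsiExt d ψ w / DpsiExt d ψ s =
      (if w = ∞ then 0 else topDeriv d ψ w.toReal) /
      (if s = ∞ then 0 else topDeriv d ψ s.toReal) := by
  have h : ∀ z, DpsiExt d ψ z
      = -(-1 : ℝ) ^ (d - 2) * (if z = ∞ then 0 else topDeriv d ψ z.toReal) := by
    intro z
    unfold DpsiExt
    split_ifs
    · simp
    · exact leftDeriv_eq d ψ _
  rw [h, h, mul_div_mul_left _ _ (by simp)]

/-- Left of `f⁰(x)` the argument `S + φ(y)` lies beyond `φ(0)`, where `(-1)^(d-2) ψ^(d-2)`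
vanishes; convexity transfers this to the left derivatives for `ψₙ`, while at `Sₙ` they stay
bounded away from zero. -/
lemma kernel_tendsto {d : ℕ} (hd : 3 ≤ d) {ψ : ℝ → ℝ} {Ψ : ℕ → ℝ → ℝ}
    (hψ : IsdMonotoneGenerator d ψ) (hΨ : ∀ n, IsdMonotoneGenerator d (Ψ n))
    (hlim : ∀ z : ℝ, 0 ≤ z → Tendsto (fun n => Ψ n z) atTop (𝓝 (ψ z)))
    {x : Fin (d - 1) → ℝ} (hx : ∀ i, x i ∈ Ioo (0 : ℝ) 1)
    (hS : ∑ i, pseudoInv ψ (x i) < pseudoInv ψ 0) {y : ℝ} (hy : y ∈ Ico 0 (fZero d ψ x)) :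
    Tendsto (fun n => markovKernel d (Ψ n) x y) atTop (𝓝 0) := by
  have hg := hψ.toIsGenerator
  have hgn := fun n => (hΨ n).toIsGenerator
  set S := ∑ i, pseudoInv ψ (x i) with hSdef
  set A := pseudoInv ψ 0 with hAdef
  have hf : fZero d ψ x = psiExt ψ (A - S) := by
    unfold fZero; rw [if_neg (not_le.2 hS)]
  rw [hf] at hy
  have hAtop : A ≠ ∞ := by
    intro hA
    have : A - S = ∞ := by rw [hA]; exact ENNReal.top_sub (ne_top_of_lt hS)
    rw [this, IsGenerator.psiExt_top] at hy
    exact absurd hy.2 (not_lt.2 hy.1)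
  have hy01 : y ∈ Icc (0 : ℝ) 1 := ⟨hy.1, hy.2.le.trans (hg.psiExt_mem _).2⟩
  have hφy : A - S < pseudoInv ψ y := hg.lt_pseudoInv_of hy01 hy.2
  have hA1 : A < S + pseudoInv ψ y := by
    by_contra hcon
    exact absurd hφy
      (not_lt.2 (ENNReal.le_sub_of_add_le_left (ne_top_of_lt hS) (not_lt.1 hcon)))
  obtain ⟨B', hB1, hB2⟩ := exists_between hA1
  obtain ⟨B, hB3, hB4⟩ := exists_between hB1
  obtain ⟨P, hP1, hP2⟩ := exists_between hS
  have hB'top : B' ≠ ∞ := ne_top_of_lt hB2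
  have hBtop : B ≠ ∞ := ne_top_of_lt hB4
  have hPtop : P ≠ ∞ := ne_top_of_lt hP2
  have hAa : A.toReal < B.toReal := (ENNReal.toReal_lt_toReal hAtop hBtop).2 hB3
  have hab : B.toReal < B'.toReal := (ENNReal.toReal_lt_toReal hBtop hB'top).2 hB4
  have hpA : P.toReal < A.toReal := (ENNReal.toReal_lt_toReal hPtop hAtop).2 hP2
  have hp0 : 0 < P.toReal := ENNReal.toReal_pos (ne_bot_of_gt hP1) hPtop
  have hpofReal : ENNReal.ofReal P.toReal = P := ENNReal.ofReal_toReal hPtop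
  set a := B.toReal
  set b := B'.toReal with hbdef
  set p := P.toReal with hpdef
  have hSn : Tendsto (fun n => ∑ i, pseudoInv (Ψ n) (x i)) atTop (𝓝 S) :=
    tendsto_finsetSum _ fun i _ => tendsto_pseudoInv hg hgn hlim ⟨(hx i).1, (hx i).2.le⟩
  -- Truncating at `φ(y)` turns the lower bound for `φₙ(y)` into a limit, also when `y = 0`.
  have hmin : Tendsto (fun n => min (pseudoInv (Ψ n) y) (pseudoInv ψ y)) atTop
      (𝓝 (pseudoInv ψ y)) := by
    rw [tendsto_order]
    refine ⟨fun z hz => ?_, fun z hz => Eventually.of_forall fun n =>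
      (min_le_right _ _).trans_lt hz⟩
    filter_upwards [eventually_lt_pseudoInv hg hgn hlim hy01 hz] with n hn
    exact lt_min hn hz
  have hw : ∀ᶠ n in atTop, B' < (∑ i, pseudoInv (Ψ n) (x i)) + pseudoInv (Ψ n) y := by
    filter_upwards [(hSn.add hmin).eventually (lt_mem_nhds hB2)] with n hn
    exact hn.trans_le (add_le_add_right (min_le_left _ _) _)
  have hSnP : ∀ᶠ n in atTop, ∑ i, pseudoInv (Ψ n) (x i) < P :=
    hSn.eventually (gt_mem_nhds hP1)
  have hPn : ∀ᶠ n in atTop, P < pseudoInv (Ψ n) 0 :=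
    eventually_lt_pseudoInv hg hgn hlim IsGenerator.zero_mem01 hP2
  have hFlim : ∀ z : ℝ, 0 < z →
      Tendsto (fun n => sgnDeriv (Ψ n) (d - 2) z) atTop (𝓝 (sgnDeriv ψ (d - 2) z)) :=
    hψ.chain.tendsto (fun n => (hΨ n).chain)
      (fun z hz => by simpa only [sgnDeriv_zero] using hlim z hz.le) (d - 2) le_rfl
  have hpa : p < a := hpA.trans hAa
  have ha0 : 0 < a := hp0.trans hpa
  have hFa : sgnDeriv ψ (d - 2) a = 0 := hψ.sgn_zero_beyond hAtop le_rfl hAa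
  have hFp : 0 < sgnDeriv ψ (d - 2) p := hψ.sgn_pos le_rfl hp0 (by rwa [hpofReal])
  have hden : Tendsto (fun n => (sgnDeriv (Ψ n) (d - 2) p - sgnDeriv (Ψ n) (d - 2) a) / (a - p))
      atTop (𝓝 ((sgnDeriv ψ (d - 2) p - sgnDeriv ψ (d - 2) a) / (a - p))) :=
    ((hFlim p hp0).sub (hFlim a ha0)).div_const _
  have hdpos : 0 < (sgnDeriv ψ (d - 2) p - sgnDeriv ψ (d - 2) a) / (a - p) := by
    rw [hFa, sub_zero]; exact div_pos hFp (by linarith)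
  have hbound : Tendsto (fun n => (sgnDeriv (Ψ n) (d - 2) a / (b - a)) /
      ((sgnDeriv (Ψ n) (d - 2) p - sgnDeriv (Ψ n) (d - 2) a) / (a - p))) atTop (𝓝 0) := by
    have := ((hFlim a ha0).div_const (b - a)).div hden hdpos.ne'
    rwa [hFa, zero_div, zero_div] at this
  have hpos0 : ∀ᶠ n in atTop,
      0 < (sgnDeriv (Ψ n) (d - 2) p - sgnDeriv (Ψ n) (d - 2) a) / (a - p) :=
    hden.eventually (lt_mem_nhds hdpos)
  have key : ∀ᶠ n in atTop, 0 ≤ markovKernel d (Ψ n) x y ∧ markovKernel d (Ψ n) x y ≤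
      (sgnDeriv (Ψ n) (d - 2) a / (b - a)) /
      ((sgnDeriv (Ψ n) (d - 2) p - sgnDeriv (Ψ n) (d - 2) a) / (a - p)) := by
    filter_upwards [hw, hSnP, hPn, hpos0] with n hwn hSPn hPnn hposn
    have hFan : 0 ≤ sgnDeriv (Ψ n) (d - 2) a := (hΨ n).chain.nonneg le_rfl ha0
    have hR0 : 0 ≤ (sgnDeriv (Ψ n) (d - 2) a / (b - a)) /
      ((sgnDeriv (Ψ n) (d - 2) p - sgnDeriv (Ψ n) (d - 2) a) / (a - p)) :=
      div_nonneg (div_nonneg hFan (by linarith)) hposn.le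
    have hi0 : Fin (d - 1) := ⟨0, by omega⟩
    have hc1 : ¬ ((∀ i, x i = 1) ∨ x ∈ zeroMarg d (Ψ n)) := by
      rintro (h1 | h1)
      · exact (hx hi0).2.ne (h1 hi0)
      · exact absurd h1 (not_le.2 (hSPn.trans hPnn))
    unfold markovKernel
    rw [if_neg hc1]
    by_cases hc2 : y < fZero d (Ψ n) x
    · rw [if_pos hc2]; exact ⟨le_rfl, hR0⟩
    rw [if_neg hc2, DpsiExt_div]
    generalize hW : (∑ i, pseudoInv (Ψ n) (x i)) + pseudoInv (Ψ n) y = W at hwn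
    have hSpos : 0 < ∑ i, pseudoInv (Ψ n) (x i) := by
      have h1 : 0 < pseudoInv (Ψ n) (x hi0) := by
        rw [← (hgn n).pseudoInv_one]
        exact (hgn n).pseudoInv_strictAntiOn ⟨(hx hi0).1.le, (hx hi0).2.le⟩
          IsGenerator.one_mem01 (hx hi0).2
      exact h1.trans_le (Finset.single_le_sum (f := fun i => pseudoInv (Ψ n) (x i))
        (fun i _ => zero_le) (Finset.mem_univ hi0))
    generalize ∑ i, pseudoInv (Ψ n) (x i) = Sn at hSPn hSpos hW
    have hSntop : Sn ≠ ∞ := ne_top_of_lt hSPn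
    rw [if_neg hSntop]
    have hs0 : 0 < Sn.toReal := ENNReal.toReal_pos hSpos.ne' hSntop
    have hsp : Sn.toReal < p := (ENNReal.toReal_lt_toReal hSntop hPtop).2 hSPn
    have hden' : (sgnDeriv (Ψ n) (d - 2) p - sgnDeriv (Ψ n) (d - 2) a) / (a - p)
        ≤ topDeriv d (Ψ n) Sn.toReal :=
      ((hΨ n).le_topDeriv hp0 hpa).trans ((hΨ n).topDeriv_anti hs0 hp0 hsp.le)
    have hnum0 : 0 ≤ (if W = ∞ then 0 else topDeriv d (Ψ n) W.toReal) := by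
      split_ifs with hWt
      · exact le_rfl
      · exact (hΨ n).topDeriv_nonneg (ENNReal.toReal_pos (ne_bot_of_gt hwn) hWt)
    have hnum : (if W = ∞ then 0 else topDeriv d (Ψ n) W.toReal)
        ≤ sgnDeriv (Ψ n) (d - 2) a / (b - a) := by
      split_ifs with hWt
      · exact div_nonneg hFan (by linarith)
      · have hbW : b < W.toReal := (ENNReal.toReal_lt_toReal hB'top hWt).2 hwn
        have hb0 : 0 < b := ha0.trans hab
        refine ((hΨ n).topDeriv_anti hb0 (hb0.trans hbW) hbW.le).trans
          (((hΨ n).topDeriv_le ha0 hab).trans ?_)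
        have : 0 ≤ sgnDeriv (Ψ n) (d - 2) b := (hΨ n).chain.nonneg le_rfl hb0
        exact div_le_div_of_nonneg_right (by linarith) (by linarith)
    exact ⟨div_nonneg hnum0 (hposn.le.trans hden'),
      div_le_div₀ (hnum0.trans hnum) hnum hposn hden'⟩
  exact tendsto_of_tendsto_of_tendsto_of_le_of_le' tendsto_const_nhds hbound
    (key.mono fun n h => h.1) (key.mono fun n h => h.2)

/-! ### Total mass of the density in the coordinates `zᵢ = φ(xᵢ)` -/

/-- The chain `(-1)^k ψ⁽ᵏ⁾`, `k ≤ d-2`, continued by the left derivative `(-1)^(d-1) D⁻ψ^(d-2)`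
cut off at `φ(0)`. The value `∞` on `(-∞, 0]` makes every member antitone, hence measurable. -/
def tailFun (d : ℕ) (ψ : ℝ → ℝ) (k : ℕ) (s : ℝ) : ℝ≥0∞ :=
  if s ≤ 0 then ∞ else if k ≤ d - 2 then ENNReal.ofReal (sgnDeriv ψ k s)
  else if pseudoInv ψ 0 ≤ ENNReal.ofReal s then 0 else ENNReal.ofReal (topDeriv d ψ s)

namespace IsdMonotoneGenerator

variable {d : ℕ} {ψ : ℝ → ℝ}

lemma tailFun_antitone (h : IsdMonotoneGenerator d ψ) (k : ℕ) : Antitone (tailFun d ψ k) := by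
  intro s t hst
  unfold tailFun
  by_cases hs : s ≤ 0
  · rw [if_pos hs]; exact le_top
  have ht : ¬ t ≤ 0 := fun h' => hs (hst.trans h')
  rw [if_neg hs, if_neg ht]
  rw [not_le] at hs ht
  by_cases hk : k ≤ d - 2
  · rw [if_pos hk, if_pos hk]
    exact ENNReal.ofReal_le_ofReal (h.chain.anti k hk hs ht hst)
  · rw [if_neg hk, if_neg hk]
    by_cases h1 : pseudoInv ψ 0 ≤ ENNReal.ofReal t
    · rw [if_pos h1]; exact zero_le
    · rw [if_neg h1, if_neg fun h2 => h1 (h2.trans (ENNReal.ofReal_le_ofReal hst))]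
      exact ENNReal.ofReal_le_ofReal (h.topDeriv_anti hs ht hst)

lemma tailFun_measurable (h : IsdMonotoneGenerator d ψ) (k : ℕ) : Measurable (tailFun d ψ k) :=
  (h.tailFun_antitone k).measurable

lemma sgn_continuousOn (h : IsdMonotoneGenerator d ψ) {k : ℕ} (hk : k ≤ d - 2) :
    ContinuousOn (sgnDeriv ψ k) (Ioi 0) := by
  rcases hk.lt_or_eq with hk' | rfl
  · exact fun z hz => (h.chain.hasDeriv k hk' z hz).continuousAt.continuousWithinAt
  · exact h.convex_sgn.continuousOn isOpen_Ioi

/-- Away from the cut-off point, `tailFun` is the integrand of the fundamental theorem of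
calculus; at the cut-off point the left derivative may jump. -/
lemma exists_tail (h : IsdMonotoneGenerator d ψ) {k : ℕ} (hk : k ≤ d - 2) :
    ∃ G : ℝ → ℝ, (∀ z, 0 < z → HasDerivWithinAt (sgnDeriv ψ k) (-(G z)) (Iio z) z) ∧
      (∀ z, 0 < z → 0 ≤ G z) ∧
      ∀ z, 0 < z → z ≠ (pseudoInv ψ 0).toReal →
        tailFun d ψ (k + 1) z = ENNReal.ofReal (G z) := by
  rcases hk.lt_or_eq with hk' | hk'
  · refine ⟨sgnDeriv ψ (k + 1), fun z hz => (h.chain.hasDeriv k hk' z hz).hasDerivWithinAt,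
      fun z hz => h.chain.nonneg hk' hz, fun z hz _ => ?_⟩
    rw [tailFun, if_neg (not_le.2 hz), if_pos (Nat.succ_le_of_lt hk')]
  · subst hk'
    refine ⟨topDeriv d ψ, fun z hz => h.topDeriv_hasDeriv hz,
      fun z hz => h.topDeriv_nonneg hz, fun z hz hzA => ?_⟩
    rw [tailFun, if_neg (not_le.2 hz), if_neg (by omega)]
    split_ifs with hA
    · have hAt : pseudoInv ψ 0 ≠ ∞ := ne_top_of_le_ne_top ENNReal.ofReal_ne_top hA
      have hlt : (pseudoInv ψ 0).toReal < z :=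
        lt_of_le_of_ne (ENNReal.toReal_le_of_le_ofReal hz.le hA) hzA.symm
      -- Beyond `φ(0)` the function is locally zero, so its difference quotients vanish.
      obtain ⟨w, hw1, hw2⟩ := exists_between hlt
      have hw0 : 0 < w := ENNReal.toReal_nonneg.trans_lt hw1
      have h1 := h.topDeriv_le hw0 hw2
      rw [h.sgn_zero_beyond hAt le_rfl hw1, h.sgn_zero_beyond hAt le_rfl hlt, sub_zero,
        zero_div] at h1
      rw [ENNReal.ofReal_of_nonpos h1]
    · rfl

lemma lintegral_tailFun (h : IsdMonotoneGenerator d ψ) {k : ℕ} (hk : k ≤ d - 2) {s : ℝ}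
    (hs : 0 ≤ s) (hc : ContinuousOn (sgnDeriv ψ k) (Ici s)) :
    ∫⁻ z in Ioi 0, tailFun d ψ (k + 1) (s + z) = ENNReal.ofReal (sgnDeriv ψ k s) := by
  obtain ⟨G, hG1, hG2, hG3⟩ := h.exists_tail hk
  have h1 : ∫⁻ z in Ioi (0 : ℝ), ENNReal.ofReal (G (s + z))
      = ENNReal.ofReal (sgnDeriv ψ k (s + 0)) := by
    refine lintegral_tail (F := fun z => sgnDeriv ψ k (s + z)) ?_ ?_ ?_ ?_
    · refine hc.comp (by fun_prop) fun z hz => ?_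
      simpa using hz
    · intro z hz
      have h2 : HasDerivWithinAt (fun z : ℝ => s + z) 1 (Iio z) z :=
        ((hasDerivAt_id z).const_add s).hasDerivWithinAt
      have h3 := (hG1 (s + z) (by linarith)).scomp z h2 (fun w hw => by simpa using hw)
      simpa [Function.comp_def] using h3
    · exact fun z hz => hG2 _ (by linarith)
    · exact (h.chain.lim hk).comp (tendsto_atTop_add_const_left _ s tendsto_id)
  rw [add_zero] at h1
  rw [← h1]
  refine lintegral_congr_ae ?_
  have h4 : ∀ᵐ z ∂(volume.restrict (Ioi (0 : ℝ))), z ≠ (pseudoInv ψ 0).toReal - s :=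
    ae_restrict_of_ae (Measure.ae_ne volume _)
  filter_upwards [h4, ae_restrict_mem measurableSet_Ioi] with z hz hz0
  exact hG3 _ (by have : 0 < z := hz0
                  linarith) fun h5 => hz (by linarith)

/-- Integrating the top member of the chain over the orthant peels off one derivative per
coordinate and ends at `ψ(0) = 1`. -/
lemma lintegral_orthant (hd : 3 ≤ d) (h : IsdMonotoneGenerator d ψ) :
    ∫⁻ z : Fin (d - 1) → ℝ, tailFun d ψ (d - 1) (∑ i, z i)
      ∂(Measure.pi fun _ => volume.restrict (Ioi (0 : ℝ))) = 1 := by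
  have hμ : ∀ᵐ z ∂(volume.restrict (Ioi (0 : ℝ))), 0 < z := ae_restrict_mem measurableSet_Ioi
  obtain ⟨m, rfl⟩ : ∃ m, d = m + 2 := ⟨d - 2, by omega⟩
  have h0 := lintegral_pi_succ (volume.restrict (Ioi (0 : ℝ))) m
    (h.tailFun_measurable (m + 1)) 0
  simp only [zero_add] at h0
  change ∫⁻ z : Fin (m + 1) → ℝ, tailFun (m + 2) ψ (m + 1) (∑ i, z i)
      ∂(Measure.pi fun _ => volume.restrict (Ioi (0 : ℝ))) = 1
  rw [h0]
  have h1 : ∫⁻ z0 in Ioi (0 : ℝ), tailFun (m + 2) ψ (0 + 1) (0 + z0) = 1 := by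
    rw [h.lintegral_tailFun (Nat.zero_le _) le_rfl
      (by rw [sgnDeriv_zero]; exact h.toIsGenerator.continuousOn), sgnDeriv_zero,
      h.toIsGenerator.map_zero, ENNReal.ofReal_one]
  rw [← h1]
  refine lintegral_congr_ae ?_
  filter_upwards [hμ] with z0 hz0
  rw [zero_add, zero_add]
  refine lintegral_pi_chain _ hμ m (fun k => tailFun (m + 2) ψ (k + 1))
    (fun k => h.tailFun_measurable _) (fun k hk s hs => ?_) z0 hz0
  have hk' : k + 1 ≤ m + 2 - 2 := by omega
  rw [h.lintegral_tailFun hk' hs.le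
    ((h.sgn_continuousOn hk').mono fun z hz => hs.trans_le hz), tailFun, if_neg (not_le.2 hs),
    if_pos hk']

/-! ### Change of variables -/

lemma pseudoInv_deriv (hd : 3 ≤ d) (h : IsdMonotoneGenerator d ψ) {y : ℝ}
    (hy : y ∈ Ioo (0 : ℝ) 1) :
    HasDerivAt (fun y => (pseudoInv ψ y).toReal)
      (-(sgnDeriv ψ 1 (pseudoInv ψ y).toReal))⁻¹ y ∧
    0 < sgnDeriv ψ 1 (pseudoInv ψ y).toReal := by
  have hg := h.toIsGenerator
  have hfin : ∀ w ∈ Ioo (0 : ℝ) 1, pseudoInv ψ w ≠ ∞ :=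
    fun w hw => hg.pseudoInv_ne_top ⟨hw.1, hw.2.le⟩
  have hpos : 0 < (pseudoInv ψ y).toReal := by
    refine ENNReal.toReal_pos (ne_of_gt ?_) (hfin y hy)
    rw [← hg.pseudoInv_one]
    exact hg.pseudoInv_strictAntiOn ⟨hy.1.le, hy.2.le⟩ IsGenerator.one_mem01 hy.2
  have hlt : ENNReal.ofReal (pseudoInv ψ y).toReal < pseudoInv ψ 0 := by
    rw [ENNReal.ofReal_toReal (hfin y hy)]
    exact hg.pseudoInv_strictAntiOn IsGenerator.zero_mem01 ⟨hy.1.le, hy.2.le⟩ hy.1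
  have hs : 0 < sgnDeriv ψ 1 (pseudoInv ψ y).toReal := h.sgn_pos (by omega) hpos hlt
  refine ⟨?_, hs⟩
  refine HasDerivAt.of_local_left_inverse (f := ψ) ?_ ?_ (by linarith) ?_
  · have h1 : ContinuousAt (pseudoInv ψ) y :=
      hg.pseudoInv_continuousOn.continuousAt (Icc_mem_nhds hy.1 hy.2)
    exact ContinuousAt.comp (f := pseudoInv ψ) (g := ENNReal.toReal)
      (ENNReal.continuousAt_toReal (hfin y hy)) h1
  · have := h.chain.hasDeriv 0 (by omega) _ hpos
    rwa [sgnDeriv_zero] at this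
  · filter_upwards [Ioo_mem_nhds hy.1 hy.2] with w hw
    rw [← IsGenerator.psiExt_of_ne (ψ := ψ) (hfin w hw)]
    exact hg.psiExt_pseudoInv ⟨hw.1.le, hw.2.le⟩

end IsdMonotoneGenerator

/-- The part of the open cube on which the marginal density is given by the product formula. -/
def densSet (d : ℕ) (ψ : ℝ → ℝ) : Set (Fin (d - 1) → ℝ) :=
  {x | (∀ i, x i ∈ Ioo (0 : ℝ) 1) ∧ ∑ i, pseudoInv ψ (x i) < pseudoInv ψ 0}

/-- The coordinate change `x ↦ (φ(x₁), …, φ(x_{d-1}))`. -/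
def phiMap (d : ℕ) (ψ : ℝ → ℝ) (x : Fin (d - 1) → ℝ) : Fin (d - 1) → ℝ :=
  fun i => (pseudoInv ψ (x i)).toReal

namespace IsdMonotoneGenerator

variable {d : ℕ} {ψ : ℝ → ℝ}

lemma densSet_isOpen (h : IsdMonotoneGenerator d ψ) : IsOpen (densSet d ψ) := by
  have hU : IsOpen (Set.univ.pi fun _ : Fin (d - 1) => Ioo (0 : ℝ) 1) :=
    isOpen_set_pi finite_univ fun _ _ => isOpen_Ioo
  have hc : ContinuousOn (fun x : Fin (d - 1) → ℝ => ∑ i, pseudoInv ψ (x i))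
      (Set.univ.pi fun _ => Ioo (0 : ℝ) 1) := by
    refine continuousOn_finsetSum _ fun i _ => ?_
    exact h.toIsGenerator.pseudoInv_continuousOn.comp (continuous_apply i).continuousOn
      fun x hx => Ioo_subset_Icc_self (hx i (mem_univ i))
  have := hc.isOpen_inter_preimage hU (isOpen_Iio (a := pseudoInv ψ 0))
  convert this using 1
  ext x
  simp [densSet]

lemma toReal_sum (h : IsdMonotoneGenerator d ψ) {x : Fin (d - 1) → ℝ} (hx : x ∈ densSet d ψ) :
    (∑ i, pseudoInv ψ (x i)).toReal = ∑ i, phiMap d ψ x i :=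
  ENNReal.toReal_sum fun i _ =>
    h.toIsGenerator.pseudoInv_ne_top ⟨(hx.1 i).1, (hx.1 i).2.le⟩

lemma phiMap_pos (h : IsdMonotoneGenerator d ψ) {x : Fin (d - 1) → ℝ} (hx : x ∈ densSet d ψ)
    (i : Fin (d - 1)) : 0 < phiMap d ψ x i := by
  have hg := h.toIsGenerator
  have hy := hx.1 i
  refine ENNReal.toReal_pos (ne_of_gt ?_) (hg.pseudoInv_ne_top ⟨hy.1, hy.2.le⟩)
  rw [← hg.pseudoInv_one]
  exact hg.pseudoInv_strictAntiOn ⟨hy.1.le, hy.2.le⟩ IsGenerator.one_mem01 hy.2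

lemma phiMap_injOn (h : IsdMonotoneGenerator d ψ) : InjOn (phiMap d ψ) (densSet d ψ) := by
  have hg := h.toIsGenerator
  intro x hx y hy hxy
  funext i
  have h1 : (pseudoInv ψ (x i)).toReal = (pseudoInv ψ (y i)).toReal := congrFun hxy i
  rw [ENNReal.toReal_eq_toReal_iff' (hg.pseudoInv_ne_top ⟨(hx.1 i).1, (hx.1 i).2.le⟩)
    (hg.pseudoInv_ne_top ⟨(hy.1 i).1, (hy.1 i).2.le⟩)] at h1
  exact hg.pseudoInv_strictAntiOn.injOn (Ioo_subset_Icc_self (hx.1 i))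
    (Ioo_subset_Icc_self (hy.1 i)) h1

lemma phiMap_image (h : IsdMonotoneGenerator d ψ) :
    phiMap d ψ '' densSet d ψ = (Set.univ.pi fun _ => Ioi (0 : ℝ)) ∩
      {z | ENNReal.ofReal (∑ i, z i) < pseudoInv ψ 0} := by
  have hg := h.toIsGenerator
  ext z
  constructor
  · rintro ⟨x, hx, rfl⟩
    refine ⟨fun i _ => h.phiMap_pos hx i, ?_⟩
    rw [mem_ofPred_eq, ← h.toReal_sum hx, ENNReal.ofReal_toReal (ne_top_of_lt hx.2)]
    exact hx.2
  · rintro ⟨hz, hzA⟩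
    have hz' : ∀ i, 0 < z i := fun i => hz i (mem_univ i)
    rw [mem_ofPred_eq, ENNReal.ofReal_sum_of_nonneg fun i _ => (hz' i).le] at hzA
    have hlt : ∀ i, ENNReal.ofReal (z i) < pseudoInv ψ 0 := fun i =>
      (Finset.single_le_sum (f := fun i => ENNReal.ofReal (z i))
        (fun i _ => zero_le) (Finset.mem_univ i)).trans_lt hzA
    have hinv : ∀ i, pseudoInv ψ (psiExt ψ (ENNReal.ofReal (z i))) = ENNReal.ofReal (z i) :=
      fun i => hg.pseudoInv_psiExt (hlt i).le
    refine ⟨fun i => psiExt ψ (ENNReal.ofReal (z i)), ⟨fun i => ⟨hg.psiExt_pos (hlt i), ?_⟩, ?_⟩, ?_⟩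
    · have := hg.psiExt_strictAntiOn (ENNReal.ofReal_pos.2 (hz' i)) (hlt i).le
      rwa [hg.psiExt_zero] at this
    · simpa only [hinv] using hzA
    · funext i
      rw [phiMap, hinv, ENNReal.toReal_ofReal (hz' i).le]

/-- On `densSet` both `∏ φ'(xᵢ)` and `D⁻ψ^(d-2)` carry the sign `(-1)^(d-1)`. -/
lemma margDensity_eq (hd : 3 ≤ d) (h : IsdMonotoneGenerator d ψ) {x : Fin (d - 1) → ℝ}
    (hx : x ∈ densSet d ψ) :
    margDensity d ψ x = |∏ i, deriv (fun y => (pseudoInv ψ y).toReal) (x i)| *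
      (tailFun d ψ (d - 1) (∑ i, phiMap d ψ x i)).toReal := by
  have hs : 0 < ∑ i, phiMap d ψ x i :=
    Finset.sum_pos (fun i _ => h.phiMap_pos hx i) ⟨⟨0, by omega⟩, Finset.mem_univ _⟩
  have hA : ¬ pseudoInv ψ 0 ≤ ENNReal.ofReal (∑ i, phiMap d ψ x i) := by
    rw [← h.toReal_sum hx, ENNReal.ofReal_toReal (ne_top_of_lt hx.2), not_le]
    exact hx.2
  have hder : ∀ i, deriv (fun y => (pseudoInv ψ y).toReal) (x i)
      = -|deriv (fun y => (pseudoInv ψ y).toReal) (x i)| := by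
    intro i
    obtain ⟨h1, h2⟩ := h.pseudoInv_deriv hd (hx.1 i)
    rw [h1.deriv, abs_of_nonpos, neg_neg]
    exact inv_nonpos.2 (by linarith)
  have hprod : ∏ i, deriv (fun y => (pseudoInv ψ y).toReal) (x i)
      = (-1) ^ (d - 1) * |∏ i, deriv (fun y => (pseudoInv ψ y).toReal) (x i)| := by
    rw [Finset.abs_prod]
    conv_lhs => rw [Finset.prod_congr rfl fun i _ => hder i]
    rw [Finset.prod_neg]
    simp
  have hsign : (-1 : ℝ) ^ (d - 1) * -(-1 : ℝ) ^ (d - 2) = 1 := by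
    obtain ⟨m, rfl⟩ : ∃ m, d = m + 2 := ⟨d - 2, by omega⟩
    have : (-1 : ℝ) ^ m * (-1 : ℝ) ^ m = 1 := by rw [← mul_pow]; simp
    simp only [Nat.add_sub_cancel, show m + 2 - 1 = m + 1 from rfl, pow_succ]
    linarith
  rw [margDensity, if_pos (show _ ∧ _ from hx), h.toReal_sum hx, leftDeriv_eq, tailFun, if_neg (not_le.2 hs),
    if_neg (by omega), if_neg hA, ENNReal.toReal_ofReal (h.topDeriv_nonneg hs)]
  generalize topDeriv d ψ (∑ i, phiMap d ψ x i) = T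
  rw [hprod, abs_mul, abs_pow, abs_neg, abs_one, one_pow, one_mul, abs_abs]
  linear_combination
    (|∏ i, deriv (fun y => (pseudoInv ψ y).toReal) (x i)| * T) * hsign

lemma phiMap_hasFDeriv (hd : 3 ≤ d) (h : IsdMonotoneGenerator d ψ) {x : Fin (d - 1) → ℝ}
    (hx : x ∈ densSet d ψ) :
    HasFDerivAt (phiMap d ψ) (ContinuousLinearMap.pi fun i =>
      (ContinuousLinearMap.toSpanSingleton ℝ
        (deriv (fun y => (pseudoInv ψ y).toReal) (x i))).comp (ContinuousLinearMap.proj i)) x := by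
  rw [hasFDerivAt_pi']
  intro i
  have h1 := (h.pseudoInv_deriv hd (hx.1 i)).1.differentiableAt.hasDerivAt.hasFDerivAt
  exact h1.comp (f := fun x : Fin (d - 1) → ℝ => x i) x
    (ContinuousLinearMap.proj (R := ℝ) (φ := fun _ : Fin (d - 1) => ℝ) i).hasFDerivAt

lemma setLIntegral_margDensity (hd : 3 ≤ d) (h : IsdMonotoneGenerator d ψ) :
    ∫⁻ x in densSet d ψ, ENNReal.ofReal (margDensity d ψ x) = 1 := by
  have hmeas : MeasurableSet (densSet d ψ) := h.densSet_isOpen.measurableSet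
  have hcv := lintegral_image_eq_lintegral_abs_det_fderiv_mul volume hmeas
    (fun x hx => (h.phiMap_hasFDeriv hd hx).hasFDerivWithinAt) h.phiMap_injOn
    (fun z => tailFun d ψ (d - 1) (∑ i, z i))
  have h1 : ∫⁻ x in densSet d ψ, ENNReal.ofReal (margDensity d ψ x)
      = ∫⁻ z in phiMap d ψ '' densSet d ψ, tailFun d ψ (d - 1) (∑ i, z i) := by
    rw [hcv]
    refine setLIntegral_congr_fun hmeas fun x hx => ?_
    have hs : 0 < ∑ i, phiMap d ψ x i :=
      Finset.sum_pos (fun i _ => h.phiMap_pos hx i) ⟨⟨0, by omega⟩, Finset.mem_univ _⟩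
    have hfin : tailFun d ψ (d - 1) (∑ i, phiMap d ψ x i) ≠ ∞ := by
      rw [tailFun, if_neg (not_le.2 hs)]
      split_ifs <;> simp
    simp only [ContinuousLinearMap.det_pi, ContinuousLinearMap.det_toSpanSingleton]
    rw [h.margDensity_eq hd hx, ENNReal.ofReal_mul (abs_nonneg _), ENNReal.ofReal_toReal hfin]
  have hcube : MeasurableSet (Set.univ.pi fun _ : Fin (d - 1) => Ioi (0 : ℝ)) :=
    MeasurableSet.univ_pi fun _ => measurableSet_Ioi
  have hsub : MeasurableSet {z : Fin (d - 1) → ℝ | ENNReal.ofReal (∑ i, z i) < pseudoInv ψ 0} :=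
    measurableSet_lt (by fun_prop) measurable_const
  rw [h1, h.phiMap_image, ← h.lintegral_orthant hd, ← Measure.restrict_pi_pi, ← volume_pi,
    ← lintegral_indicator (hcube.inter hsub), ← lintegral_indicator hcube]
  refine lintegral_congr fun z => ?_
  by_cases hz : z ∈ Set.univ.pi fun _ : Fin (d - 1) => Ioi (0 : ℝ)
  · by_cases hzA : ENNReal.ofReal (∑ i, z i) < pseudoInv ψ 0
    · rw [indicator_of_mem (show z ∈ _ ∩ _ from ⟨hz, hzA⟩), indicator_of_mem hz]
    · have hs : 0 < ∑ i, z i :=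
        Finset.sum_pos (fun i _ => hz i (mem_univ i)) ⟨⟨0, by omega⟩, Finset.mem_univ _⟩
      rw [indicator_of_notMem (fun hm => hzA hm.2), indicator_of_mem hz, tailFun,
        if_neg (not_le.2 hs), if_neg (by omega), if_pos (not_lt.1 hzA)]
  · rw [indicator_of_notMem (fun hm => hz hm.1), indicator_of_notMem hz]

lemma setIntegral_margDensity (hd : 3 ≤ d) (h : IsdMonotoneGenerator d ψ) :
    ∫ x in densSet d ψ, margDensity d ψ x = 1 := by
  have hmeas : MeasurableSet (densSet d ψ) := h.densSet_isOpen.measurableSet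
  have heq : margDensity d ψ =ᵐ[volume.restrict (densSet d ψ)]
      fun x => |∏ i, deriv (fun y => (pseudoInv ψ y).toReal) (x i)| *
        (tailFun d ψ (d - 1) (∑ i, phiMap d ψ x i)).toReal := by
    filter_upwards [ae_restrict_mem hmeas] with x hx using h.margDensity_eq hd hx
  have hsum : AEMeasurable (fun x => ∑ i, phiMap d ψ x i) (volume.restrict (densSet d ψ)) := by
    have hc : ContinuousOn (phiMap d ψ) (densSet d ψ) := fun x hx =>
      (h.phiMap_hasFDeriv hd hx).continuousAt.continuousWithinAt
    have hc' : ContinuousOn (fun x => ∑ i, phiMap d ψ x i) (densSet d ψ) :=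
      continuousOn_finsetSum _ fun i _ => (continuous_apply i).comp_continuousOn hc
    exact hc'.aemeasurable hmeas
  have hprod : Measurable fun x : Fin (d - 1) → ℝ =>
      |∏ i, deriv (fun y => (pseudoInv ψ y).toReal) (x i)| :=
    (Finset.measurable_prod Finset.univ fun i _ =>
      (measurable_deriv fun y => (pseudoInv ψ y).toReal).comp (measurable_pi_apply i)).norm
  have haem : AEStronglyMeasurable (margDensity d ψ) (volume.restrict (densSet d ψ)) := by
    refine AEStronglyMeasurable.congr ?_ heq.symm
    exact (hprod.aemeasurable.mul
      (((h.tailFun_measurable _).comp_aemeasurable hsum).ennreal_toReal)).aestronglyMeasurable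
  rw [integral_eq_lintegral_of_nonneg_ae ?_ haem, h.setLIntegral_margDensity hd,
    ENNReal.toReal_one]
  filter_upwards [heq] with x hx
  rw [hx]
  exact mul_nonneg (abs_nonneg _) ENNReal.toReal_nonneg

end IsdMonotoneGenerator

/-- If the copulas `C_{ψₙ}` converge uniformly on `[0,1]^d` to `C_ψ`,
then there is a Borel set `Λ ⊆ (0,1)^{d-1}` with `∫_Λ c^{1:d-1} dλ_{d-1} = 1` such that
for every `x ∈ Λ` and every `y ∈ [0, f⁰(x))` one has
`lim_n K_{C_n}(x,[0,y]) = 0 = K_C(x,[0,y])`. -/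
theorem markovKernel_conv_below_fZero
    (d : ℕ) (hd : 3 ≤ d) (ψ : ℝ → ℝ) (Ψ : ℕ → ℝ → ℝ)
    (hψ : IsdMonotoneGenerator d ψ) (hψnorm : ψ 1 = 1 / 2)
    (hΨ : ∀ n, IsdMonotoneGenerator d (Ψ n)) (hΨnorm : ∀ n, Ψ n 1 = 1 / 2)
    (hconv : TendstoUniformlyOn (fun n => archCopula d (Ψ n)) (archCopula d ψ) atTop
      {x | ∀ i, x i ∈ Icc (0 : ℝ) 1}) :
    ∃ Λ : Set (Fin (d - 1) → ℝ), MeasurableSet Λ ∧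
      Λ ⊆ Set.univ.pi (fun _ => Ioo (0 : ℝ) 1) ∧
      (∫ x in Λ, margDensity d ψ x) = 1 ∧
      ∀ x ∈ Λ, ∀ y ∈ Ico (0 : ℝ) (fZero d ψ x),
        Tendsto (fun n => markovKernel d (Ψ n) x y) atTop (𝓝 0) ∧
        markovKernel d ψ x y = 0 := by
  have hgn := fun n => (hΨ n).toIsGenerator
  have hlim : ∀ z : ℝ, 0 ≤ z → Tendsto (fun n => Ψ n z) atTop (𝓝 (ψ z)) := fun z hz =>
    conv_psi hψ.toIsGenerator hgn (biv_tendstoUniformlyOn hd hψ.toIsGenerator hgn hconv)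
      hψnorm hΨnorm hz
  refine ⟨densSet d ψ, hψ.densSet_isOpen.measurableSet, fun x hx i _ => hx.1 i,
    hψ.setIntegral_margDensity hd, fun x hx y hy =>
      ⟨kernel_tendsto hd hψ hΨ hlim hx.1 hx.2 hy, ?_⟩⟩
  have hc : ¬ ((∀ i, x i = 1) ∨ x ∈ zeroMarg d ψ) := by
    rintro (h1 | h1)
    · exact (hx.1 ⟨0, by omega⟩).2.ne (h1 _)
    · exact absurd h1 (not_le.2 hx.2)
  rw [markovKernel, if_neg hc, if_pos hy.2]
end
end

section
/- Let d ≥ 3 and let ψ : [0,∞) → [0,1] be a function. Then the following are equivalent: (1) ψ is a d-monotone Archimedean generator; (2) there exists a Borel probability measure γ on [0,∞) with γ({0}) = 0 such that ψ(z) = ∫_{[0,∞)} (1 − t z)_+^{d−1} dγ(t) for every z ≥ 0, i.e. ψ is the Williamson transform W_d γ of γ. Moreover, the measure γ in (2) is unique: if γ and γ' are Borel probability measures on [0,∞) with γ({0}) = γ'({0}) = 0 and W_d γ = W_d γ' on (0,∞), then γ = γ'. -/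
/-! This is the Williamson representation of `d`-monotone functions.

If `ψ` is `d`-monotone, put `N = d - 2` and `G k = (-1)ᵏ ψ⁽ᵏ⁾`, so that `(G k)' = -G (k+1)`. Since
`ψ → 0` at infinity, all the `G k` are nonnegative, non-increasing and vanish at infinity
(`monotone_ladder`), and so is minus the right derivative `h` of the convex function `G N`
(`convex_rightDeriv_facts`). Hence `h(u) = μ((0, 1/u])` for almost every `u > 0`, for a
Lebesgue-Stieltjes measure `μ` on `(0, ∞)` (`exists_measure_of_antitone`). Integrating from infinity
`N + 1` times, with Tonelli at each step, gives `ψ(z) = ∫ (1/t - z)₊ᵈ⁻¹ / (d-1)! dμ(t)`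
(`ladder_representation`), which is the Williamson transform of a measure with density
`t⁻⁽ᵈ⁻¹⁾ / (d-1)!` with respect to `μ` (`exists_measure_of_isdMonotone`).

Conversely, differentiating under the integral sign `k ≤ d - 2` times gives, up to the factor
`(-1)ᵏ (d-1)!/(d-1-k)!`, the integral `∫ tᵏ (1 - tz)₊ᵈ⁻¹⁻ᵏ dγ(t)` (`iterate_deriv_eq`); for
`k = d - 2` the integrand is nonnegative, non-increasing and convex in `z`. The same formula shows
that `W_d γ` determines `∫ tᵈ⁻² (1 - tz)₊ dγ(t)`, whose right derivative determines
`∫_{t < 1/z} tᵈ⁻¹ dγ(t)` (`tendsto_quotient`) and hence `γ` (`williamson_injective`). -/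


open MeasureTheory Set Filter Topology
open scoped ENNReal NNReal Classical

noncomputable section

/-- The Williamson transform `(W_d γ)(z) = ∫ (1 - tz)₊^(d-1) dγ(t)`. -/
def williamson (d : ℕ) (γ : Measure ℝ) (z : ℝ) : ℝ :=
  ∫ t, max (1 - t * z) 0 ^ (d - 1) ∂γ

/-- The class `P_{W_d}`: Borel probability measures on `[0,∞)` with `γ({0}) = 0` and
`∫_{[0,1]} (1-t)^(d-1) dγ(t) = 1/2`. -/
def memPW (d : ℕ) (γ : Measure ℝ) : Prop :=
  IsProbabilityMeasure γ ∧ γ (Iio 0) = 0 ∧ γ {0} = 0 ∧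
    ∫ t in Icc (0 : ℝ) 1, (1 - t) ^ (d - 1) ∂γ = 1 / 2

/-! ### Calculus preliminaries -/

/-- At the kink `0` the derivative exists because the exponent is at least `2`. -/
theorem hasDerivAt_posPart_pow (m : ℕ) (x : ℝ) :
    HasDerivAt (fun y : ℝ => max y 0 ^ (m + 2)) ((m + 2 : ℕ) * max x 0 ^ (m + 1)) x := by
  have key : ∀ y : ℝ, y ≠ 0 →
      HasDerivAt (fun y : ℝ => max y 0 ^ (m + 2)) ((m + 2 : ℕ) * max y 0 ^ (m + 1)) y := by
    intro y hy
    rcases lt_or_gt_of_ne hy with h | h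
    · rw [max_eq_right h.le]
      have : (fun y : ℝ => max y 0 ^ (m + 2)) =ᶠ[𝓝 y] fun _ => 0 := by
        filter_upwards [Iio_mem_nhds h] with a ha
        rw [max_eq_right (le_of_lt ha)]; simp
      simpa using (hasDerivAt_const y (0 : ℝ)).congr_of_eventuallyEq this
    · rw [max_eq_left h.le]
      have : (fun y : ℝ => max y 0 ^ (m + 2)) =ᶠ[𝓝 y] fun y => y ^ (m + 2) := by
        filter_upwards [Ioi_mem_nhds h] with a ha
        rw [max_eq_left (le_of_lt ha)]
      simpa using (hasDerivAt_pow (m + 2) y).congr_of_eventuallyEq this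
  by_cases hx : x = 0
  · subst hx
    exact hasDerivAt_of_hasDerivAt_of_ne (f := fun y : ℝ => max y 0 ^ (m + 2))
      (g := fun y : ℝ => (m + 2 : ℕ) * max y 0 ^ (m + 1)) key
      (by fun_prop) (by fun_prop)
  · exact key x hx

/-- The fundamental theorem of calculus on `(z, ∞)` for a function vanishing at infinity whose right
derivative `-h` is nonpositive and monotone. Right derivatives suffice, so it applies to convex
functions as well as to the differentiable rungs of the ladder. -/
theorem lintegral_Ioi_of_rightDeriv {g h : ℝ → ℝ} (hg : ContinuousOn g (Ioi 0))
    (hder : ∀ u, 0 < u → HasDerivWithinAt g (-h u) (Ioi u) u)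
    (hanti : AntitoneOn h (Ioi 0)) (hnn : ∀ u, 0 < u → 0 ≤ h u)
    (hlim : Tendsto g atTop (𝓝 0)) {z : ℝ} (hz : 0 < z) :
    ∫⁻ u in Ioi z, ENNReal.ofReal (h u) = ENNReal.ofReal (g z) := by
  have hmeas : AEMeasurable (fun u => ENNReal.ofReal (h u)) (volume.restrict (Ioi z)) :=
    (aemeasurable_restrict_of_antitoneOn measurableSet_Ioi
      (hanti.mono (Ioi_subset_Ioi hz.le))).ennreal_ofReal
  have hcov : AECover (volume.restrict (Ioi z)) atTop (fun i : ℝ => Iic i) := aecover_Iic tendsto_id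
  have h1 := hcov.lintegral_tendsto_of_countably_generated hmeas
  have h2 : Tendsto (fun b => ENNReal.ofReal (g z - g b)) atTop (𝓝 (ENNReal.ofReal (g z))) := by
    have := (tendsto_const_nhds (x := g z)).sub hlim
    rw [sub_zero] at this
    exact ENNReal.tendsto_ofReal this
  refine tendsto_nhds_unique (h1.congr' ?_) h2
  filter_upwards [eventually_gt_atTop z] with b hb
  rw [Measure.restrict_restrict measurableSet_Iic]
  have hset : Iic b ∩ Ioi z = Ioc z b := by ext x; simp [and_comm]
  rw [hset]
  have hsub : uIcc z b ⊆ Ioi 0 := by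
    rw [uIcc_of_le hb.le]; intro x hx; exact lt_of_lt_of_le hz hx.1
  have hint : IntervalIntegrable h volume z b := (hanti.mono hsub).intervalIntegrable
  have hftc := intervalIntegral.integral_eq_sub_of_hasDeriv_right (f := g) (f' := fun u => -h u)
    (a := z) (b := b) (hg.mono hsub)
    (fun x hx => hder x (hz.trans (by rw [min_eq_left hb.le] at hx; exact hx.1))) hint.neg
  rw [intervalIntegral.integral_neg, intervalIntegral.integral_of_le hb.le] at hftc
  rw [← ofReal_integral_eq_lintegral_ofReal (hint.1)]
  · congr 1; linarith
  · filter_upwards [ae_restrict_mem measurableSet_Ioc] with u hu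
    exact hnn u (hz.trans hu.1)

/-! ### Behaviour of the derivatives at infinity -/

theorem tendsto_atTop_of_deriv_ge {f f' : ℝ → ℝ} {c : ℝ} (hc : 0 < c)
    (hd : ∀ z, 0 < z → HasDerivAt f (f' z) z) (h : ∀ᶠ z in atTop, c ≤ f' z) :
    Tendsto f atTop atTop := by
  obtain ⟨a, ha⟩ := eventually_atTop.1 h
  set b := max a 1 with hb
  have hb0 : 0 < b := lt_of_lt_of_le one_pos (le_max_right _ _)
  have key : ∀ x, b ≤ x → f b + c * (x - b) ≤ f x := by
    intro x hx
    have := Convex.mul_sub_le_image_sub_of_le_deriv (convex_Ici b) (f := f)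
      (fun y hy => (hd y (hb0.trans_le hy)).continuousAt.continuousWithinAt)
      (fun y hy => (hd y (hb0.trans_le (interior_subset hy))).differentiableAt.differentiableWithinAt)
      (C := c)
      (fun y hy => by
        rw [(hd y (hb0.trans_le (interior_subset hy))).deriv]
        exact ha y ((le_max_left _ _).trans (interior_subset hy)))
      b self_mem_Ici x hx hx
    linarith
  refine tendsto_atTop_mono' atTop (f₁ := fun x => f b + c * (x - b)) ?_ ?_
  · filter_upwards [eventually_ge_atTop b] with x hx using key x hx
  · exact tendsto_atTop_add_const_left _ _
      (Tendsto.const_mul_atTop hc (tendsto_atTop_add_const_right _ _ tendsto_id))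

/-- If `G 0 → 0`, no iterated derivative can stay away from `0` near infinity: otherwise integrating
back would push some `G k`, and then successively `G (k-1), …, G 0`, to `±∞`. -/
theorem not_away_from_zero {G : ℕ → ℝ → ℝ} {N : ℕ}
    (hd : ∀ k < N, ∀ z, 0 < z → HasDerivAt (G k) (-G (k + 1) z) z)
    (h0 : Tendsto (G 0) atTop (𝓝 0)) :
    ∀ k ≤ N, ∀ c : ℝ, 0 < c → (¬ ∀ᶠ z in atTop, c ≤ G k z) ∧ ¬ ∀ᶠ z in atTop, G k z ≤ -c := by
  intro k
  induction k with
  | zero =>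
    intro _ c hc
    constructor
    · intro h
      have := ge_of_tendsto h0 h
      linarith
    · intro h
      have := le_of_tendsto h0 h
      linarith
  | succ k ih =>
    intro hk c hc
    have ih := ih (by omega) 1 one_pos
    constructor
    · intro h
      apply ih.2
      have := tendsto_atTop_of_deriv_ge hc (f := fun z => -G k z) (f' := fun z => G (k + 1) z)
        (fun z hz => by simpa using (hd k (by omega) z hz).fun_neg) h
      filter_upwards [this.eventually_ge_atTop 1] with z hz
      linarith
    · intro h
      apply ih.1
      have := tendsto_atTop_of_deriv_ge hc (f := G k) (f' := fun z => -G (k + 1) z)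
        (fun z hz => hd k (by omega) z hz) (by filter_upwards [h] with z hz; linarith)
      exact this.eventually_ge_atTop 1

theorem tendsto_zero_of_antitoneOn {g : ℝ → ℝ} (hg : AntitoneOn g (Ioi 0))
    (h : ∀ c : ℝ, 0 < c → (¬ ∀ᶠ z in atTop, c ≤ g z) ∧ ¬ ∀ᶠ z in atTop, g z ≤ -c) :
    (∀ z, 0 < z → 0 ≤ g z) ∧ Tendsto g atTop (𝓝 0) := by
  have hnn : ∀ z, 0 < z → 0 ≤ g z := by
    intro z hz
    by_contra! hneg
    refine (h (-g z) (by linarith)).2 ?_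
    filter_upwards [eventually_ge_atTop z] with y hy
    rw [neg_neg]
    exact hg hz (hz.trans_le hy) hy
  refine ⟨hnn, ?_⟩
  rw [Metric.tendsto_nhds]
  intro ε hε
  have h1 : ∃ z, 0 < z ∧ g z < ε := by
    by_contra! hcon
    exact (h ε hε).1 (by filter_upwards [eventually_gt_atTop 0] with z hz using hcon z hz)
  obtain ⟨z, hz, hzε⟩ := h1
  filter_upwards [eventually_ge_atTop z] with y hy
  rw [Real.dist_eq, sub_zero, abs_of_nonneg (hnn y (hz.trans_le hy))]
  exact (hg hz (hz.trans_le hy) hy).trans_lt hzε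

/-- Starting from the monotonicity of the last function of the ladder `G (k+1) = -(G k)'`, every
`G k` is nonnegative, non-increasing and vanishes at infinity. -/
theorem monotone_ladder {G : ℕ → ℝ → ℝ} {N : ℕ}
    (hd : ∀ k < N, ∀ z, 0 < z → HasDerivAt (G k) (-G (k + 1) z) z)
    (h0 : Tendsto (G 0) atTop (𝓝 0)) (hN : AntitoneOn (G N) (Ioi 0)) :
    ∀ k ≤ N, AntitoneOn (G k) (Ioi 0) ∧ (∀ z, 0 < z → 0 ≤ G k z) ∧
      Tendsto (G k) atTop (𝓝 0) := by
  intro k hk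
  induction hk using Nat.decreasingInduction with
  | self => exact ⟨hN, tendsto_zero_of_antitoneOn hN (not_away_from_zero hd h0 N le_rfl)⟩
  | of_succ k hk ih =>
    have hanti : AntitoneOn (G k) (Ioi 0) := by
      refine antitoneOn_of_deriv_nonpos (convex_Ioi 0)
        (fun y hy => (hd k hk y hy).continuousAt.continuousWithinAt) ?_ ?_
      · intro y hy
        rw [interior_Ioi] at hy
        exact (hd k hk y hy).differentiableAt.differentiableWithinAt
      · intro y hy
        rw [interior_Ioi] at hy
        rw [(hd k hk y hy).deriv]
        linarith [ih.2.1 y hy]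
    exact ⟨hanti, tendsto_zero_of_antitoneOn hanti (not_away_from_zero hd h0 k hk.le)⟩

/-! ### The Stieltjes measure of the top derivative -/

/-- `h` is minus the right derivative of `g`. -/
theorem convex_rightDeriv_facts {g : ℝ → ℝ} (hconv : ConvexOn ℝ (Ioi 0) g)
    (hanti : AntitoneOn g (Ioi 0)) (hnn : ∀ z, 0 < z → 0 ≤ g z) (hlim : Tendsto g atTop (𝓝 0)) :
    ∃ h : ℝ → ℝ, (∀ u, 0 < u → HasDerivWithinAt g (-h u) (Ioi u) u) ∧ AntitoneOn h (Ioi 0) ∧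
      (∀ u, 0 < u → 0 ≤ h u) ∧ Tendsto h atTop (𝓝 0) := by
  have hint : interior (Ioi (0 : ℝ)) = Ioi 0 := interior_Ioi
  have hpos : ∀ u, 0 < u → 0 ≤ -derivWithin g (Ioi u) u := by
    intro u hu
    have h1 := hconv.rightDeriv_le_slope_of_mem_interior (x := u) (y := u + 1)
      (by rw [hint]; exact hu) (by simp; linarith) (by linarith)
    have h2 : g (u + 1) ≤ g u := hanti hu (by simp; linarith) (by linarith)
    rw [slope_def_field] at h1
    have : (g (u + 1) - g u) / (u + 1 - u) = g (u + 1) - g u := by simp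
    linarith
  refine ⟨fun u => -derivWithin g (Ioi u) u, ?_, ?_, hpos, ?_⟩
  · intro u hu
    simpa using hconv.hasDerivWithinAt_rightDeriv_of_mem_interior (by rw [hint]; exact hu)
  · have := hconv.monotoneOn_rightDeriv
    rw [hint] at this
    exact this.neg
  · refine tendsto_of_tendsto_of_tendsto_of_le_of_le' tendsto_const_nhds
      (hlim.comp (tendsto_atTop_add_const_right atTop (-1 : ℝ) tendsto_id)) ?_ ?_
    · filter_upwards [eventually_gt_atTop 0] with u hu using hpos u hu
    · filter_upwards [eventually_gt_atTop 1] with u hu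
      have hu' : u ∈ interior (Ioi (0 : ℝ)) := by rw [hint]; exact one_pos.trans hu
      -- By convexity the right derivative at `u` is at least the slope over `[u - 1, u]`, so
      -- `h u ≤ g (u - 1)`, which tends to `0`.
      have h1 := hconv.slope_le_leftDeriv_of_mem_interior (x := u + -1) (y := u)
        (by simp; linarith) hu' (by linarith)
      have h2 := hconv.leftDeriv_le_rightDeriv_of_mem_interior hu'
      have h3 := hnn u (by linarith)
      rw [slope_def_field] at h1
      have : (g u - g (u + -1)) / (u - (u + -1)) = g u - g (u + -1) := by simp
      simp only [Function.comp, id]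
      linarith

/-- The Lebesgue-Stieltjes measure of `h`, carried to the variable `t = 1/u`. In that variable the
distribution function extends by `0` to the left of the origin, so the blow-up of `h` at `0` is
harmless. Equality may fail at the countably many discontinuities of `h`. -/
theorem exists_measure_of_antitone {h : ℝ → ℝ} (hanti : AntitoneOn h (Ioi 0))
    (hnn : ∀ u, 0 < u → 0 ≤ h u) (hlim : Tendsto h atTop (𝓝 0)) :
    ∃ μ : Measure ℝ, SFinite μ ∧ μ (Iic 0) = 0 ∧
      ∀ᵐ u ∂(volume.restrict (Ioi (0 : ℝ))), ENNReal.ofReal (h u) = μ (Iic u⁻¹) := by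
  set H : ℝ → ℝ := fun t => if t ≤ 0 then 0 else h t⁻¹ with hH
  have hmono : Monotone H := by
    intro s t hst
    simp only [hH]
    split_ifs with h1 h2 h2
    · exact le_rfl
    · exact hnn _ (inv_pos.2 (not_le.1 h2))
    · exact absurd (hst.trans h2) h1
    · push Not at h1 h2
      exact hanti (inv_pos.2 h2) (inv_pos.2 h1) (inv_anti₀ h1 hst)
  have hbot : Tendsto hmono.stieltjesFunction atBot (𝓝 0) := by
    refine tendsto_const_nhds.congr' ?_
    filter_upwards [eventually_lt_atBot 0] with t ht
    rw [hmono.stieltjesFunction_eq]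
    symm
    apply rightLim_eq_of_tendsto
    refine tendsto_const_nhds.congr' ?_
    filter_upwards [mem_nhdsWithin_of_mem_nhds (Iio_mem_nhds ht)] with s hs
    simp [hH, le_of_lt (show s < 0 from hs)]
  -- This is where `h → 0` at infinity is used: the measure has no atom at `0`.
  have hzero : hmono.stieltjesFunction 0 = 0 := by
    rw [hmono.stieltjesFunction_eq]
    apply rightLim_eq_of_tendsto
    refine (hlim.comp tendsto_inv_nhdsGT_zero).congr' ?_
    filter_upwards [self_mem_nhdsWithin] with s hs
    simp [hH, not_le.2 (show 0 < s from hs)]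
  refine ⟨hmono.stieltjesFunction.measure, inferInstance, ?_, ?_⟩
  · rw [StieltjesFunction.measure_Iic _ hbot, hzero]; simp
  · have hc : (Inv.inv ⁻¹' {t | ¬ ContinuousAt H t}).Countable :=
      hmono.countable_not_continuousAt.preimage inv_injective
    filter_upwards [ae_restrict_mem measurableSet_Ioi, ae_restrict_of_ae (hc.ae_notMem volume)]
      with u hu hu2
    rw [StieltjesFunction.measure_Iic _ hbot, hmono.stieltjesFunction_eq]
    simp only [mem_preimage, mem_ofPred_eq, not_not] at hu2
    rw [hu2.continuousWithinAt.rightLim_eq]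
    have : ¬ u⁻¹ ≤ 0 := not_le.2 (inv_pos.2 hu)
    simp [hH, this]

/-! ### Iterated integration from infinity -/

theorem lintegral_kernel_zero (z w : ℝ) :
    ∫⁻ u in Ioi z, (Iic w).indicator (fun _ => (1 : ℝ≥0∞)) u = ENNReal.ofReal (max (w - z) 0) := by
  rw [lintegral_indicator measurableSet_Iic, Measure.restrict_restrict measurableSet_Iic]
  have hset : Iic w ∩ Ioi z = Ioc z w := by ext x; simp [and_comm]
  rw [hset]
  rcases le_total z w with h | h
  · simp [max_eq_left (sub_nonneg.2 h)]
  · simp [max_eq_right (sub_nonpos.2 h), Ioc_eq_empty (not_lt.2 h)]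

/-- Integrating the kernel `(w - u)₊ʲ⁺¹ / (j+1)!` over `u > z` raises the exponent by one. -/
theorem lintegral_kernel_succ (j : ℕ) (w : ℝ) {z : ℝ} (hz : 0 < z) :
    ∫⁻ u in Ioi z, ENNReal.ofReal (max (w - u) 0 ^ (j + 1) / (j + 1).factorial) =
      ENNReal.ofReal (max (w - z) 0 ^ (j + 2) / (j + 2).factorial) := by
  refine lintegral_Ioi_of_rightDeriv (g := fun u => max (w - u) 0 ^ (j + 2) / (j + 2).factorial)
    (h := fun u => max (w - u) 0 ^ (j + 1) / (j + 1).factorial) (by fun_prop) ?_ ?_ ?_ ?_ hz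
  · intro u _
    have h1 := ((hasDerivAt_posPart_pow j (w - u)).comp u
      ((hasDerivAt_id u).const_sub w)).div_const ((j + 2).factorial : ℝ)
    have h2 : -(max (w - u) 0 ^ (j + 1) / ((j + 1).factorial : ℝ)) =
        ((j + 2 : ℕ) * max (w - u) 0 ^ (j + 1)) * (-1) / ((j + 2).factorial : ℝ) := by
      have : ((j + 2).factorial : ℝ) = (j + 2 : ℕ) * (j + 1).factorial := by
        rw [Nat.factorial_succ (j + 1)]; push_cast; ring
      rw [this]
      have h3 : ((j + 1).factorial : ℝ) ≠ 0 := by positivity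
      have h4 : ((j + 2 : ℕ) : ℝ) ≠ 0 := by positivity
      field_simp
    rw [h2]
    exact h1.hasDerivWithinAt
  · intro a _ b _ hab
    simp only
    gcongr
  · intro u _
    positivity
  · refine tendsto_const_nhds.congr' ?_
    filter_upwards [eventually_ge_atTop w] with u hu
    simp [max_eq_right (sub_nonpos.2 hu)]

/-- Iterated integration from infinity, starting from `h = -(G N)'₊`: by Tonelli each step raises
the exponent of the kernel `(1/t - z)₊ʲ⁺¹ / (j+1)!` by one. -/
theorem ladder_representation {G : ℕ → ℝ → ℝ} {N : ℕ} {μ : Measure ℝ} [SFinite μ]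
    (hμ : μ (Iic 0) = 0)
    (hd : ∀ k < N, ∀ z, 0 < z → HasDerivAt (G k) (-G (k + 1) z) z)
    (hG : ∀ k ≤ N, AntitoneOn (G k) (Ioi 0) ∧ (∀ z, 0 < z → 0 ≤ G k z) ∧
      Tendsto (G k) atTop (𝓝 0))
    (hcont : ContinuousOn (G N) (Ioi 0)) {h : ℝ → ℝ}
    (hder : ∀ u, 0 < u → HasDerivWithinAt (G N) (-h u) (Ioi u) u)
    (hanti : AntitoneOn h (Ioi 0)) (hnn : ∀ u, 0 < u → 0 ≤ h u)
    (hh : ∀ᵐ u ∂(volume.restrict (Ioi (0 : ℝ))), ENNReal.ofReal (h u) = μ (Iic u⁻¹)) :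
    ∀ j ≤ N, ∀ z, 0 < z → ENNReal.ofReal (G (N - j) z) =
      ∫⁻ t, ENNReal.ofReal (max (t⁻¹ - z) 0 ^ (j + 1) / (j + 1).factorial) ∂μ := by
  have hpos : ∀ᵐ t ∂μ, 0 < t := by
    rw [ae_iff]; simpa [Iic] using hμ
  intro j
  induction j with
  | zero =>
    intro _ z hz
    rw [Nat.sub_zero, ← lintegral_Ioi_of_rightDeriv hcont hder hanti hnn (hG N le_rfl).2.2 hz]
    have h1 : ∫⁻ u in Ioi z, ENNReal.ofReal (h u) =
        ∫⁻ u in Ioi z, ∫⁻ t, {p : ℝ × ℝ | p.2 ≤ p.1⁻¹}.indicator (fun _ => (1 : ℝ≥0∞)) (u, t) ∂μ := by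
      refine lintegral_congr_ae ?_
      filter_upwards [ae_restrict_of_ae_restrict_of_subset (Ioi_subset_Ioi hz.le) hh] with u hu
      rw [hu, ← lintegral_indicator_one measurableSet_Iic]
      rfl
    have hm : MeasurableSet {p : ℝ × ℝ | p.2 ≤ p.1⁻¹} :=
      measurableSet_le measurable_snd measurable_fst.inv
    rw [h1, lintegral_lintegral_swap]
    · refine lintegral_congr_ae ?_
      filter_upwards [hpos] with t ht
      have h2 := lintegral_kernel_zero z t⁻¹
      simp only [zero_add, pow_one, Nat.factorial_one, Nat.cast_one, div_one]
      rw [← h2]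
      refine lintegral_congr_ae ?_
      filter_upwards [ae_restrict_mem measurableSet_Ioi] with u hu
      have hu0 : 0 < u := hz.trans hu
      simp only [indicator, mem_ofPred_eq, mem_Iic]
      simp only [le_inv_comm₀ ht hu0]
    · exact (measurable_const.indicator hm).aemeasurable
  | succ j ih =>
    intro hj z hz
    have hk : N - (j + 1) + 1 = N - j := by omega
    have hk' : N - (j + 1) < N := by omega
    have h1 : ∫⁻ u in Ioi z, ENNReal.ofReal (G (N - j) u) = ENNReal.ofReal (G (N - (j + 1)) z) := by
      refine lintegral_Ioi_of_rightDeriv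
        (fun y hy => (hd _ hk' y hy).continuousAt.continuousWithinAt) ?_
        (hG _ (Nat.sub_le _ _)).1 (hG _ (Nat.sub_le _ _)).2.1 (hG _ hk'.le).2.2 hz
      intro u hu
      have := (hd _ hk' u hu).hasDerivWithinAt (s := Ioi u)
      rwa [hk] at this
    rw [← h1, setLIntegral_congr_fun measurableSet_Ioi
      (fun u hu => ih (by omega) u (hz.trans hu)), lintegral_lintegral_swap]
    · exact lintegral_congr fun t => lintegral_kernel_succ j t⁻¹ hz
    · refine Measurable.aemeasurable ?_
      simp only [Function.uncurry_def]
      fun_prop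

/-! ### Existence of the representing measure -/

/-- Existence of the representing measure: the density `t⁻⁽ᵈ⁻¹⁾ / (d-1)!` turns the kernel
`(1/t - z)₊ᵈ⁻¹ / (d-1)!` into `(1 - tz)₊ᵈ⁻¹`, and the total mass is `ψ(0) = 1` by monotone
convergence as `z ↓ 0`. -/
theorem exists_measure_of_isdMonotone {d : ℕ} (hd : 3 ≤ d) {ψ : ℝ → ℝ}
    (hψ : IsdMonotoneGenerator d ψ) :
    ∃ γ : Measure ℝ, IsProbabilityMeasure γ ∧ γ (Iic 0) = 0 ∧
        ∀ z : ℝ, 0 ≤ z → ψ z = williamson d γ z := by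
  obtain ⟨N, rfl⟩ : ∃ N, d = N + 2 := ⟨d - 2, by omega⟩
  obtain ⟨hgen, hdiff, -, hanti, hconv⟩ := hψ
  simp only [Nat.add_sub_cancel] at hdiff hanti hconv
  set G : ℕ → ℝ → ℝ := fun k z => (-1 : ℝ) ^ k * deriv^[k] ψ z with hGdef
  have hG0 : G 0 = ψ := by funext z; simp [hGdef]
  have hder : ∀ k < N, ∀ z, 0 < z → HasDerivAt (G k) (-G (k + 1) z) z := by
    intro k hk z hz
    have h1 := ((hdiff k hk z hz).hasDerivAt).const_mul ((-1 : ℝ) ^ k)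
    have h2 : -G (k + 1) z = (-1 : ℝ) ^ k * deriv (deriv^[k] ψ) z := by
      simp only [hGdef, Function.iterate_succ_apply']
      ring
    rw [h2]
    exact h1
  have hG := monotone_ladder hder (by rw [hG0]; exact hgen.tendsto_atTop) hanti
  obtain ⟨h, hhder, hhanti, hhnn, hhlim⟩ :=
    convex_rightDeriv_facts hconv hanti (hG N le_rfl).2.1 (hG N le_rfl).2.2
  obtain ⟨μ, hμs, hμ0, hμ⟩ := exists_measure_of_antitone hhanti hhnn hhlim
  have hrep : ∀ z, 0 < z → ENNReal.ofReal (ψ z) =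
      ∫⁻ t, ENNReal.ofReal (max (t⁻¹ - z) 0 ^ (N + 1) / (N + 1).factorial) ∂μ := by
    have := ladder_representation hμ0 hder hG (hconv.continuousOn isOpen_Ioi) hhder hhanti hhnn hμ
      N le_rfl
    rwa [Nat.sub_self, hG0] at this
  have hμpos : ∀ᵐ t ∂μ, 0 < t := by
    rw [ae_iff]; simpa [Iic] using hμ0
  set ρ : ℝ → ℝ≥0∞ := fun t => ENNReal.ofReal (t⁻¹ ^ (N + 1) / (N + 1).factorial) with hρ
  have hρm : Measurable ρ := by simp only [hρ]; fun_prop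
  set γ := μ.withDensity ρ with hγ
  have hγ0 : γ (Iic 0) = 0 := withDensity_absolutelyContinuous μ ρ hμ0
  have hγpos : ∀ᵐ t ∂γ, 0 < t := by
    rw [ae_iff]; simpa [Iic] using hγ0
  have hmain : ∀ z, 0 < z →
      ∫⁻ t, ENNReal.ofReal (max (1 - t * z) 0 ^ (N + 1)) ∂γ = ENNReal.ofReal (ψ z) := by
    intro z hz
    rw [hrep z hz, hγ, lintegral_withDensity_eq_lintegral_mul _ hρm (by fun_prop)]
    refine lintegral_congr_ae ?_
    filter_upwards [hμpos] with t ht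
    simp only [Pi.mul_apply, hρ]
    have h1 : max (t⁻¹ - z) 0 = t⁻¹ * max (1 - t * z) 0 := by
      rw [mul_max_of_nonneg _ _ (inv_pos.2 ht).le]
      congr 1
      · field_simp
      · simp
    rw [← ENNReal.ofReal_mul (by positivity), h1, mul_pow]
    congr 1
    ring
  have hprob : IsProbabilityMeasure γ := by
    constructor
    have h1 : Tendsto (fun n : ℕ => ∫⁻ t, ENNReal.ofReal
        (max (1 - t * (1 / ((n : ℝ) + 1))) 0 ^ (N + 1)) ∂γ) atTop (𝓝 (∫⁻ _, 1 ∂γ)) := by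
      refine lintegral_tendsto_of_tendsto_of_monotone (fun n => by fun_prop) ?_ ?_
      · filter_upwards [hγpos] with t ht
        intro m n hmn
        simp only
        have : (1 : ℝ) / ((n : ℝ) + 1) ≤ 1 / ((m : ℝ) + 1) := Nat.one_div_le_one_div hmn
        gcongr
      · filter_upwards with t
        have h2 : Tendsto (fun n : ℕ => (1 : ℝ) / ((n : ℝ) + 1)) atTop (𝓝 0) :=
          tendsto_one_div_add_atTop_nhds_zero_nat
        have h3 : Continuous fun x : ℝ => ENNReal.ofReal (max (1 - t * x) 0 ^ (N + 1)) :=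
          ENNReal.continuous_ofReal.comp (by fun_prop)
        simpa [Function.comp_def] using (h3.tendsto 0).comp h2
    have h2 : Tendsto (fun n : ℕ => ∫⁻ t, ENNReal.ofReal
        (max (1 - t * (1 / ((n : ℝ) + 1))) 0 ^ (N + 1)) ∂γ) atTop (𝓝 1) := by
      have h3 : Tendsto (fun n : ℕ => (1 : ℝ) / ((n : ℝ) + 1)) atTop (𝓝[Ici 0] 0) :=
        tendsto_nhdsWithin_iff.2 ⟨tendsto_one_div_add_atTop_nhds_zero_nat,
          Eventually.of_forall fun n => by simp only [mem_Ici]; positivity⟩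
      have h4 := (hgen.continuousOn 0 self_mem_Ici).tendsto.comp h3
      rw [hgen.map_zero] at h4
      have h5 := ENNReal.tendsto_ofReal h4
      rw [ENNReal.ofReal_one] at h5
      refine h5.congr fun n => ?_
      rw [hmain _ (by positivity)]
      rfl
    have := tendsto_nhds_unique h1 h2
    simpa using this
  refine ⟨γ, hprob, hγ0, ?_⟩
  intro z hz
  rcases hz.eq_or_lt with rfl | hz
  · simp [williamson, hgen.map_zero]
  · rw [williamson, integral_eq_lintegral_of_nonneg_ae
      (Eventually.of_forall fun t => by positivity) (by fun_prop)]
    simp only [show N + 2 - 1 = N + 1 from rfl]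
    rw [hmain z hz, ENNReal.toReal_ofReal (hgen.mem_Icc z hz.le).1]

/-! ### Truncated moments and derivatives of the Williamson transform -/

/-- The truncated moment `∫ tᵏ (1 - tz)₊ᵐ dγ(t)`. Up to a constant factor, the derivatives of the
Williamson transform `W_d γ` are those with `m = d - 1 - k`. -/
def truncMoment (γ : Measure ℝ) (k m : ℕ) (z : ℝ) : ℝ := ∫ t, t ^ k * max (1 - t * z) 0 ^ m ∂γ

/-- The kernel is supported on `t ≤ 1/z ≤ 1/a`; the exponent of the positive part must be nonzero
since `0 ^ 0 = 1`. -/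
theorem kernel_bound {t z a : ℝ} (ht : 0 < t) (ha : 0 < a) (hz : a ≤ z) (k m : ℕ) :
    t ^ k * max (1 - t * z) 0 ^ (m + 1) ≤ a⁻¹ ^ k := by
  rcases le_total (1 - t * z) 0 with h | h
  · rw [max_eq_right h]
    simp only [ne_eq, Nat.add_eq_zero_iff, one_ne_zero, and_false, not_false_eq_true, zero_pow,
      mul_zero]
    positivity
  · rw [max_eq_left h]
    have h1 : t ≤ a⁻¹ := by
      rw [le_inv_comm₀ ht ha, ← one_div, le_div_iff₀ ht]
      nlinarith
    have h2 : (1 - t * z) ^ (m + 1) ≤ 1 := pow_le_one₀ h (by nlinarith)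
    calc t ^ k * (1 - t * z) ^ (m + 1) ≤ a⁻¹ ^ k * 1 := by gcongr
      _ = _ := mul_one _

theorem integrable_kernel {γ : Measure ℝ} [IsFiniteMeasure γ] (hγ : ∀ᵐ t ∂γ, 0 < t) (k m : ℕ)
    {z : ℝ} (hz : 0 < z) : Integrable (fun t => t ^ k * max (1 - t * z) 0 ^ (m + 1)) γ := by
  refine Integrable.of_bound (by fun_prop) (z⁻¹ ^ k) ?_
  filter_upwards [hγ] with t ht
  rw [Real.norm_eq_abs, abs_of_nonneg (by positivity)]
  exact kernel_bound ht hz le_rfl k m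

theorem hasDerivAt_truncMoment {γ : Measure ℝ} [IsFiniteMeasure γ] (hγ : ∀ᵐ t ∂γ, 0 < t) (k m : ℕ)
    {z : ℝ} (hz : 0 < z) :
    HasDerivAt (truncMoment γ k (m + 2)) (-((m + 2 : ℕ) * truncMoment γ (k + 1) (m + 1) z)) z := by
  have h := hasDerivAt_integral_of_dominated_loc_of_deriv_le (μ := γ) (x₀ := z)
    (s := Ioi (z / 2)) (F := fun z t => t ^ k * max (1 - t * z) 0 ^ (m + 2))
    (F' := fun z t => -((m + 2 : ℕ) * (t ^ (k + 1) * max (1 - t * z) 0 ^ (m + 1))))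
    (bound := fun _ => (m + 2 : ℕ) * (z / 2)⁻¹ ^ (k + 1))
    (Ioi_mem_nhds (by linarith)) (Eventually.of_forall fun x => by fun_prop)
    (integrable_kernel hγ k (m + 1) hz) (by fun_prop) ?_ (integrable_const _) ?_
  · have h2 := h.2
    rw [integral_neg, integral_const_mul] at h2
    exact h2
  · filter_upwards [hγ] with t ht x hx
    rw [norm_neg, Real.norm_eq_abs, abs_of_nonneg (by positivity)]
    gcongr
    exact kernel_bound ht (half_pos hz) (le_of_lt hx) (k + 1) m
  · filter_upwards with t x _
    have h1 := ((hasDerivAt_posPart_pow m (1 - t * x)).comp x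
      (((hasDerivAt_id x).const_mul t).const_sub 1)).const_mul (t ^ k)
    refine h1.congr_deriv ?_
    simp only [mul_one]
    ring

theorem williamson_eq_truncMoment (d : ℕ) (γ : Measure ℝ) : williamson d γ = truncMoment γ 0 (d - 1) := by
  funext z; simp [williamson, truncMoment]

theorem iterate_deriv_eq {γ : Measure ℝ} [IsFiniteMeasure γ] (hγ : ∀ᵐ t ∂γ, 0 < t) (N : ℕ)
    {ψ : ℝ → ℝ} (hψ : ∀ z, 0 < z → ψ z = williamson (N + 2) γ z) :
    ∀ k ≤ N, ∀ z, 0 < z →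
      deriv^[k] ψ z = (-1) ^ k * (N + 1).descFactorial k * truncMoment γ k (N - k + 1) z := by
  intro k
  induction k with
  | zero =>
    intro _ z hz
    simp [hψ z hz, williamson_eq_truncMoment]
  | succ k ih =>
    intro hk z hz
    have hloc : deriv^[k] ψ =ᶠ[𝓝 z]
        fun z => (-1) ^ k * (N + 1).descFactorial k * truncMoment γ k (N - k + 1) z := by
      filter_upwards [Ioi_mem_nhds hz] with y hy using ih (by omega) y hy
    rw [Function.iterate_succ_apply', hloc.deriv_eq]
    have h1 := (hasDerivAt_truncMoment hγ k (N - (k + 1)) hz).const_mul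
      ((-1 : ℝ) ^ k * (N + 1).descFactorial k)
    have h2 : N - (k + 1) + 2 = N - k + 1 := by omega
    rw [h2] at h1
    rw [h1.deriv, Nat.descFactorial_succ]
    have h3 : N + 1 - k = N - k + 1 := by omega
    rw [h3]
    push_cast
    ring

/-! ### Williamson transforms are `d`-monotone generators -/

theorem isGenerator_of_williamson {γ : Measure ℝ} [IsProbabilityMeasure γ]
    (hγ : ∀ᵐ t ∂γ, 0 < t) (N : ℕ)
    {ψ : ℝ → ℝ} (hψ : ∀ z, 0 ≤ z → ψ z = ∫ t, max (1 - t * z) 0 ^ (N + 1) ∂γ) :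
    IsGenerator ψ := by
  have hbd : ∀ z, 0 ≤ z → ∀ᵐ t ∂γ, ‖max (1 - t * z) 0 ^ (N + 1)‖ ≤ (1 : ℝ) := by
    intro z hz
    filter_upwards [hγ] with t ht
    rw [Real.norm_eq_abs, abs_of_nonneg (by positivity)]
    exact pow_le_one₀ (le_max_right _ _) (max_le (by nlinarith [mul_nonneg ht.le hz]) zero_le_one)
  have hint : ∀ z, 0 ≤ z → Integrable (fun t => max (1 - t * z) 0 ^ (N + 1)) γ := fun z hz =>
    Integrable.of_bound (by fun_prop) 1 (hbd z hz)
  have hanti : AntitoneOn ψ (Ici 0) := by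
    intro a ha b hb hab
    rw [hψ a ha, hψ b hb]
    refine integral_mono_ae (hint b hb) (hint a ha) ?_
    filter_upwards [hγ] with t ht
    gcongr
  have hzero : ψ 0 = 1 := by simp [hψ 0 le_rfl]
  have hnn : ∀ z, 0 ≤ z → 0 ≤ ψ z := fun z hz => by
    rw [hψ z hz]; exact integral_nonneg fun t => by positivity
  refine ⟨?_, ?_, hzero, ?_, hanti, ?_⟩
  · refine ContinuousOn.congr (f := fun z => ∫ t, max (1 - t * z) 0 ^ (N + 1) ∂γ) ?_
      (fun z hz => hψ z hz)
    intro z hz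
    refine continuousWithinAt_of_dominated (bound := fun _ => 1)
      (Eventually.of_forall fun x => by fun_prop) ?_ (integrable_const _) ?_
    · filter_upwards [self_mem_nhdsWithin] with x hx using hbd x hx
    · filter_upwards with t
      have : Continuous fun x : ℝ => max (1 - t * x) 0 ^ (N + 1) := by fun_prop
      exact this.continuousWithinAt
  · intro z hz
    exact ⟨hnn z hz, hzero ▸ hanti self_mem_Ici hz hz⟩
  · have h1 : Tendsto (fun z : ℝ => ∫ t, max (1 - t * z) 0 ^ (N + 1) ∂γ) atTop
        (𝓝 (∫ _, (0 : ℝ) ∂γ)) := by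
      refine tendsto_integral_filter_of_dominated_convergence (fun _ => 1)
        (Eventually.of_forall fun x => by fun_prop) ?_ (integrable_const _) ?_
      · filter_upwards [eventually_ge_atTop 0] with x hx using hbd x hx
      · filter_upwards [hγ] with t ht
        refine tendsto_const_nhds.congr' ?_
        filter_upwards [eventually_ge_atTop t⁻¹] with z hz
        have : 1 ≤ t * z := by
          calc (1 : ℝ) = t * t⁻¹ := by field_simp
            _ ≤ t * z := by gcongr
        simp [max_eq_right (show 1 - t * z ≤ 0 by linarith)]
    rw [integral_zero] at h1
    refine h1.congr' ?_
    filter_upwards [eventually_ge_atTop 0] with z hz using (hψ z hz).symm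
  · intro x y hx hxy hy
    have hy0 : 0 ≤ y := hx.trans hxy.le
    refine lt_of_le_of_ne (hanti hx hy0 hxy.le) fun heq => ?_
    have hψx : ψ x ≠ 0 := by
      intro h0
      have h1 : pseudoInv ψ 0 ≤ ENNReal.ofReal x :=
        sInf_le (by simp [psiExt, ENNReal.toReal_ofReal hx, h0])
      have h2 := hy.trans h1
      rw [ENNReal.ofReal_le_ofReal_iff hx] at h2
      linarith
    -- Equality `ψ x = ψ y` forces the two kernels to agree almost everywhere, hence both to vanish,
    -- so that `ψ x = 0`; but `x` lies before the first zero of `ψ`.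
    apply hψx
    rw [hψ x hx, hψ y hy0] at heq
    have h3 : (fun t => max (1 - t * y) 0 ^ (N + 1)) =ᵐ[γ] fun t => max (1 - t * x) 0 ^ (N + 1) := by
      refine (integral_eq_iff_of_ae_le (hint y hy0) (hint x hx) ?_).1 heq
      filter_upwards [hγ] with t ht
      gcongr
    rw [hψ x hx]
    refine integral_eq_zero_of_ae ?_
    filter_upwards [h3, hγ] with t ht ht0
    have h4 : max (1 - t * y) 0 = max (1 - t * x) 0 :=
      (pow_left_inj₀ (le_max_right _ _) (le_max_right _ _) (Nat.succ_ne_zero N)).1 ht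
    have h5 : t * x < t * y := by gcongr
    have h6 : 1 - t * x ≤ 0 := by
      by_contra! hcon
      rw [max_eq_left hcon.le] at h4
      rcases le_total (1 - t * y) 0 with h | h
      · rw [max_eq_right h] at h4; linarith
      · rw [max_eq_left h] at h4; linarith
    simp [max_eq_right h6]

theorem isdMonotone_of_williamson {d : ℕ} (hd : 3 ≤ d) {γ : Measure ℝ} [IsProbabilityMeasure γ]
    (hγ : ∀ᵐ t ∂γ, 0 < t) {ψ : ℝ → ℝ} (hψ : ∀ z, 0 ≤ z → ψ z = williamson d γ z) :
    IsdMonotoneGenerator d ψ := by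
  obtain ⟨N, rfl⟩ : ∃ N, d = N + 2 := ⟨d - 2, by omega⟩
  have hit := iterate_deriv_eq hγ N (fun z hz => hψ z hz.le)
  have hN : ∀ z, 0 < z → (-1 : ℝ) ^ N * deriv^[N] ψ z = (N + 1).descFactorial N * truncMoment γ N 1 z := by
    intro z hz
    rw [hit N le_rfl z hz, Nat.sub_self, ← mul_assoc, ← mul_assoc, ← mul_pow]
    norm_num
  have hint : ∀ z, 0 < z → Integrable (fun t => t ^ N * max (1 - t * z) 0 ^ 1) γ :=
    fun z hz => integrable_kernel hγ N 0 hz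
  refine ⟨isGenerator_of_williamson hγ N hψ, ?_, ?_, ?_, ?_⟩ <;>
    simp only [Nat.add_sub_cancel]
  · intro k hk z hz
    have hloc : deriv^[k] ψ =ᶠ[𝓝 z]
        fun z => (-1) ^ k * (N + 1).descFactorial k * truncMoment γ k (N - k + 1) z := by
      filter_upwards [Ioi_mem_nhds hz] with y hy using hit k hk.le y hy
    have h2 : N - (k + 1) + 2 = N - k + 1 := by omega
    have h1 := (hasDerivAt_truncMoment hγ k (N - (k + 1)) hz).const_mul
      ((-1 : ℝ) ^ k * (N + 1).descFactorial k)
    rw [h2] at h1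
    exact h1.differentiableAt.congr_of_eventuallyEq hloc
  · intro z hz
    rw [hN z hz]
    refine mul_nonneg (by positivity) (integral_nonneg_of_ae ?_)
    filter_upwards [hγ] with t ht
    simp only [Pi.zero_apply]
    positivity
  · intro a ha b hb hab
    simp only
    rw [hN a ha, hN b hb]
    refine mul_le_mul_of_nonneg_left (integral_mono_ae (hint b hb) (hint a ha) ?_) (by positivity)
    filter_upwards [hγ] with t ht
    gcongr
  · have hJ : ConvexOn ℝ (Ioi 0) (truncMoment γ N 1) := by
      refine ⟨convex_Ioi 0, ?_⟩
      intro x hx y hy a b ha hb hab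
      have hxy : 0 < a • x + b • y := convex_Ioi (0 : ℝ) hx hy ha hb hab
      simp only [truncMoment, smul_eq_mul] at hxy ⊢
      rw [← integral_const_mul, ← integral_const_mul,
        ← integral_add ((hint x hx).const_mul a) ((hint y hy).const_mul b)]
      refine integral_mono_ae (hint _ hxy) (((hint x hx).const_mul a).add ((hint y hy).const_mul b)) ?_
      filter_upwards [hγ] with t ht
      have h1 : max (1 - t * (a * x + b * y)) 0 ≤
          a * max (1 - t * x) 0 + b * max (1 - t * y) 0 := by
        refine max_le ?_ (by positivity)
        calc 1 - t * (a * x + b * y) = a * (1 - t * x) + b * (1 - t * y) := by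
              linear_combination -hab
          _ ≤ _ := by gcongr <;> exact le_max_left _ _
      simp only [pow_one]
      calc _ ≤ t ^ N * (a * max (1 - t * x) 0 + b * max (1 - t * y) 0) := by gcongr
        _ = _ := by ring
    refine (hJ.smul (c := ((N + 1).descFactorial N : ℝ)) (by positivity)).congr ?_
    intro z hz
    exact (hN z hz).symm

/-! ### Uniqueness -/

/-- Minus the right derivative of `∫ tᴺ (1 - tz)₊ dγ` at `z` is the integral of `tᴺ⁺¹` over
`t < 1/z`. -/
theorem tendsto_quotient {γ : Measure ℝ} [IsFiniteMeasure γ] (hγ : ∀ᵐ t ∂γ, 0 < t) (N : ℕ)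
    {z : ℝ} (hz : 0 < z) :
    Tendsto (fun n : ℕ => ((n : ℝ) + 1) * (truncMoment γ N 1 z - truncMoment γ N 1 (z + 1 / ((n : ℝ) + 1)))) atTop
      (𝓝 (∫ t, (Iio z⁻¹).indicator (fun t => t ^ (N + 1)) t ∂γ)) := by
  have hint : ∀ z, 0 < z → Integrable (fun t => t ^ N * max (1 - t * z) 0 ^ 1) γ :=
    fun z hz => integrable_kernel hγ N 0 hz
  have hzn : ∀ n : ℕ, z < z + 1 / ((n : ℝ) + 1) := fun n => by
    have : (0 : ℝ) < 1 / ((n : ℝ) + 1) := by positivity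
    linarith
  have heq : ∀ n : ℕ, ((n : ℝ) + 1) * (truncMoment γ N 1 z - truncMoment γ N 1 (z + 1 / ((n : ℝ) + 1))) =
      ∫ t, ((n : ℝ) + 1) * (t ^ N * max (1 - t * z) 0 ^ 1 -
        t ^ N * max (1 - t * (z + 1 / ((n : ℝ) + 1))) 0 ^ 1) ∂γ := by
    intro n
    rw [integral_const_mul, integral_sub (hint z hz) (hint _ (hz.trans (hzn n)))]
    rfl
  simp_rw [heq]
  refine tendsto_integral_of_dominated_convergence (fun _ => z⁻¹ ^ (N + 1))
    (fun n => by fun_prop) (integrable_const _) ?_ ?_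
  · intro n
    filter_upwards [hγ] with t ht
    have hn : (0 : ℝ) < (n : ℝ) + 1 := by positivity
    have h0 : max (1 - t * (z + 1 / ((n : ℝ) + 1))) 0 ≤ max (1 - t * z) 0 := by
      have := (hzn n).le
      gcongr
    have e : ((n : ℝ) + 1) * (t ^ N * max (1 - t * z) 0 ^ 1 -
        t ^ N * max (1 - t * (z + 1 / ((n : ℝ) + 1))) 0 ^ 1) =
        t ^ N * (((n : ℝ) + 1) * (max (1 - t * z) 0 - max (1 - t * (z + 1 / ((n : ℝ) + 1))) 0)) := by
      ring
    have h00 := sub_nonneg.2 h0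
    rw [e, Real.norm_eq_abs, abs_of_nonneg (by positivity)]
    rcases le_total (1 - t * z) 0 with h | h
    · have : max (1 - t * z) 0 - max (1 - t * (z + 1 / ((n : ℝ) + 1))) 0 ≤ 0 := by
        rw [max_eq_right h]
        linarith [le_max_right (1 - t * (z + 1 / ((n : ℝ) + 1))) 0]
      have h3 : max (1 - t * z) 0 - max (1 - t * (z + 1 / ((n : ℝ) + 1))) 0 = 0 :=
        le_antisymm this h00
      rw [h3, mul_zero, mul_zero]
      positivity
    · have h1 : t ≤ z⁻¹ := by
        rw [le_inv_comm₀ ht hz, ← one_div, le_div_iff₀ ht]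
        linarith
      have h2 : ((n : ℝ) + 1) * (max (1 - t * z) 0 - max (1 - t * (z + 1 / ((n : ℝ) + 1))) 0) ≤ t := by
        rw [max_eq_left h]
        have h4 := le_max_left (1 - t * (z + 1 / ((n : ℝ) + 1))) 0
        calc _ ≤ ((n : ℝ) + 1) * (1 - t * z - (1 - t * (z + 1 / ((n : ℝ) + 1)))) := by gcongr
          _ = t := by field_simp; ring
      calc _ ≤ z⁻¹ ^ N * z⁻¹ := by gcongr; exact h2.trans h1
        _ = _ := (pow_succ _ _).symm
  · filter_upwards [hγ] with t ht
    refine tendsto_const_nhds.congr' ?_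
    by_cases h : t < z⁻¹
    · have h1 : z < t⁻¹ := (lt_inv_comm₀ ht hz).1 h
      have h2 : Tendsto (fun n : ℕ => z + 1 / ((n : ℝ) + 1)) atTop (𝓝 (z + 0)) :=
        tendsto_one_div_add_atTop_nhds_zero_nat.const_add z
      rw [add_zero] at h2
      filter_upwards [h2.eventually_lt_const h1] with n hn
      have h3 : t * z ≤ 1 := by
        calc t * z ≤ t * t⁻¹ := by gcongr
          _ = 1 := by field_simp
      have h4 : t * (z + 1 / ((n : ℝ) + 1)) ≤ 1 := by
        calc t * (z + 1 / ((n : ℝ) + 1)) ≤ t * t⁻¹ := by gcongr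
          _ = 1 := by field_simp
      rw [indicator_of_mem (show t ∈ Iio z⁻¹ from h), max_eq_left (by linarith),
        max_eq_left (by linarith)]
      field_simp
      ring
    · have h1 : t⁻¹ ≤ z := (inv_le_comm₀ ht hz).2 (not_lt.1 h)
      refine Eventually.of_forall fun n => ?_
      have h3 : 1 ≤ t * z := by
        calc (1 : ℝ) = t * t⁻¹ := by field_simp
          _ ≤ t * z := by gcongr
      have h4 : t * z ≤ t * (z + 1 / ((n : ℝ) + 1)) := by
        have := (hzn n).le
        gcongr
      beta_reduce
      rw [indicator_of_notMem (show t ∉ Iio z⁻¹ from h), max_eq_right (by linarith),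
        max_eq_right (show 1 - t * (z + 1 / ((n : ℝ) + 1)) ≤ 0 by linarith)]
      simp

/-- Equal transforms have equal derivatives of order `d - 2`; right differentiating once more shows
that `tᵈ⁻¹ dγ` and `tᵈ⁻¹ dγ'` agree on every `(-∞, b)`, and the density is invertible on `t > 0`. -/
theorem williamson_injective {d : ℕ} (hd : 3 ≤ d) {γ γ' : Measure ℝ} [IsProbabilityMeasure γ]
    [IsProbabilityMeasure γ'] (hγ : ∀ᵐ t ∂γ, 0 < t) (hγ' : ∀ᵐ t ∂γ', 0 < t)
    (h : ∀ z : ℝ, 0 < z → williamson d γ z = williamson d γ' z) : γ = γ' := by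
  obtain ⟨N, rfl⟩ : ∃ N, d = N + 2 := ⟨d - 2, by omega⟩
  have hJ : ∀ z, 0 < z → truncMoment γ N 1 z = truncMoment γ' N 1 z := by
    intro z hz
    have h1 := iterate_deriv_eq hγ N (ψ := williamson (N + 2) γ) (fun _ _ => rfl) N le_rfl z hz
    have h2 := iterate_deriv_eq hγ' N h N le_rfl z hz
    rw [h1, Nat.sub_self] at h2
    refine mul_left_cancel₀ (mul_ne_zero (by positivity) ?_) h2
    exact_mod_cast (Nat.descFactorial_pos.2 (by omega)).ne'
  set ρ : ℝ → ℝ≥0∞ := fun t => ENNReal.ofReal (t ^ (N + 1)) with hρ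
  have hρm : Measurable ρ := by simp only [hρ]; fun_prop
  have hIio : ∀ (γ : Measure ℝ) [IsProbabilityMeasure γ], (∀ᵐ t ∂γ, 0 < t) → ∀ z, 0 < z →
      (γ.withDensity ρ) (Iio z⁻¹) =
        ENNReal.ofReal (∫ t, (Iio z⁻¹).indicator (fun t => t ^ (N + 1)) t ∂γ) := by
    intro γ _ hγ z hz
    rw [withDensity_apply _ measurableSet_Iio, ofReal_integral_eq_lintegral_ofReal,
      ← lintegral_indicator measurableSet_Iio]
    · refine lintegral_congr fun t => ?_
      by_cases ht : t ∈ Iio z⁻¹ <;> simp [ht, hρ]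
    · refine Integrable.of_bound
        ((by fun_prop : Measurable fun t : ℝ => t ^ (N + 1)).indicator
          measurableSet_Iio).aestronglyMeasurable (z⁻¹ ^ (N + 1)) ?_
      filter_upwards [hγ] with t ht
      by_cases h' : t ∈ Iio z⁻¹
      · rw [indicator_of_mem h', Real.norm_eq_abs, abs_of_nonneg (by positivity)]
        have := le_of_lt (show t < z⁻¹ from h')
        gcongr
      · rw [indicator_of_notMem h', norm_zero]; positivity
    · filter_upwards [hγ] with t ht
      by_cases h' : t ∈ Iio z⁻¹
      · rw [indicator_of_mem h', Pi.zero_apply]; positivity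
      · rw [indicator_of_notMem h', Pi.zero_apply]
  have hfin : ∀ (γ : Measure ℝ) [IsProbabilityMeasure γ], (∀ᵐ t ∂γ, 0 < t) → ∀ b : ℝ,
      (γ.withDensity ρ) (Iio b) ≠ ∞ := by
    intro γ _ hγ b
    have h1 : (γ.withDensity ρ) (Iio ((max b 1)⁻¹)⁻¹) ≠ ∞ := by
      rw [hIio γ hγ _ (by positivity)]; exact ENNReal.ofReal_ne_top
    rw [inv_inv] at h1
    exact ne_top_of_le_ne_top h1 (measure_mono (Iio_subset_Iio (le_max_left _ _)))
  have heq : ∀ b : ℝ, (γ.withDensity ρ) (Iio b) = (γ'.withDensity ρ) (Iio b) := by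
    intro b
    rcases le_or_gt b 0 with hb | hb
    · have hz : ∀ (γ : Measure ℝ), (∀ᵐ t ∂γ, 0 < t) → (γ.withDensity ρ) (Iio b) = 0 := by
        intro γ hγ
        refine withDensity_absolutelyContinuous γ ρ (measure_mono_null ?_ (ae_iff.1 hγ))
        intro t ht
        exact not_lt.2 ((le_of_lt (show t < b from ht)).trans hb)
      rw [hz γ hγ, hz γ' hγ']
    · rw [← inv_inv b, hIio γ hγ _ (inv_pos.2 hb), hIio γ' hγ' _ (inv_pos.2 hb)]
      congr 1
      refine tendsto_nhds_unique (tendsto_quotient hγ N (inv_pos.2 hb)) ?_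
      refine (tendsto_quotient hγ' N (inv_pos.2 hb)).congr fun n => ?_
      rw [hJ _ (inv_pos.2 hb), hJ _ (by positivity)]
  have hdens : γ.withDensity ρ = γ'.withDensity ρ := by
    have hIco : ∀ (γ : Measure ℝ) [IsProbabilityMeasure γ], (∀ᵐ t ∂γ, 0 < t) → ∀ a b : ℝ, a < b →
        (γ.withDensity ρ) (Ico a b) = (γ.withDensity ρ) (Iio b) - (γ.withDensity ρ) (Iio a) := by
      intro γ _ hγ a b hab
      rw [← measure_sdiff (Iio_subset_Iio hab.le) measurableSet_Iio.nullMeasurableSet (hfin γ hγ a)]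
      congr 1
      ext x
      simp
    refine Measure.ext_of_Ico' _ _ (fun a b hab => ?_) (fun a b hab => ?_)
    · exact ne_top_of_le_ne_top (hfin γ hγ b) (measure_mono Ico_subset_Iio_self)
    · rw [hIco γ hγ a b hab, hIco γ' hγ' a b hab, heq, heq]
  have hinv : ∀ (γ : Measure ℝ), (∀ᵐ t ∂γ, 0 < t) →
      ((γ.withDensity ρ).withDensity fun t => (ρ t)⁻¹) = γ := by
    intro γ hγ
    refine withDensity_inv_same hρm ?_ (Eventually.of_forall fun t => ENNReal.ofReal_ne_top)
    filter_upwards [hγ] with t ht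
    simp only [hρ, ne_eq, ENNReal.ofReal_eq_zero, not_le]
    positivity
  rw [← hinv γ hγ, hdens, hinv γ' hγ']

theorem ae_pos_of_null {γ : Measure ℝ} (h1 : γ (Iio 0) = 0) (h2 : γ {0} = 0) :
    ∀ᵐ t ∂γ, 0 < t := by
  rw [ae_iff]
  refine measure_mono_null ?_ (measure_union_null h1 h2)
  intro t ht
  exact (not_lt.1 ht).lt_or_eq

/-- A function `ψ : [0,∞) → [0,1]` is a `d`-monotone Archimedean
generator if and only if it is the Williamson transform `W_d γ` of a Borel probability
measure `γ` on `[0,∞)` with `γ({0}) = 0`; moreover such a `γ` is unique. -/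
theorem isdMonotoneGenerator_iff_williamson
    (d : ℕ) (hd : 3 ≤ d) (ψ : ℝ → ℝ) :
    (IsdMonotoneGenerator d ψ ↔
      ∃ γ : Measure ℝ, IsProbabilityMeasure γ ∧ γ (Iio 0) = 0 ∧ γ {0} = 0 ∧
        ∀ z : ℝ, 0 ≤ z → ψ z = williamson d γ z) ∧
    (∀ γ γ' : Measure ℝ, IsProbabilityMeasure γ → IsProbabilityMeasure γ' →
      γ (Iio 0) = 0 → γ' (Iio 0) = 0 → γ {0} = 0 → γ' {0} = 0 →
      (∀ z : ℝ, 0 < z → williamson d γ z = williamson d γ' z) → γ = γ') := by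
  refine ⟨⟨fun hψ => ?_, ?_⟩, ?_⟩
  · obtain ⟨γ, hp, h0, h⟩ := exists_measure_of_isdMonotone hd hψ
    exact ⟨γ, hp, measure_mono_null Iio_subset_Iic_self h0,
      measure_mono_null (by simp) h0, h⟩
  · rintro ⟨γ, hp, h1, h2, h⟩
    exact isdMonotone_of_williamson hd (ae_pos_of_null h1 h2) h
  · intro γ γ' hp hp' h1 h1' h2 h2' h
    exact williamson_injective hd (ae_pos_of_null h1 h2) (ae_pos_of_null h1' h2') h
end
end

section
/- Let d ≥ 3 and let γ, γ_1, γ_2, … ∈ P_{W_d} with generators ψ = W_d γ, ψ_n = W_d γ_n and induced copulas C = C_ψ, C_n = C_{ψ_n}. Then (C_n)_{n∈ℕ} converges uniformly on [0,1]^d to C if and only if (γ_n)_{n∈ℕ} converges weakly on [0,∞) to γ. -/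
/-!
Write `ψ = W_d γ`, `ψₙ = W_d γₙ`, extended by `0` at `∞` to continuous non-increasing functions on
the compact interval `[0,∞]` (`gen`). The proof passes through pointwise convergence `ψₙ → ψ`.

*Weak convergence implies convergence of the copulas.* Each `ψₙ(z)` with `z < ∞` is the integral of
a bounded continuous function, so `ψₙ → ψ` pointwise, hence uniformly on `[0,∞]` by monotonicity
(`tendstoUniformly_of_antitone`). Convexity of `ψ` makes its increments shrink under shifts, which
gives `|ψ(∑ uᵢ) - ψ(∑ vᵢ)| ≤ ∑ |ψ(uᵢ) - ψ(vᵢ)|` (`gen_sum`). With `uᵢ = φ(xᵢ)` and `vᵢ = φₙ(xᵢ)`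
this bounds `|C - Cₙ|` by `(d + 1) sup |ψ - ψₙ|` (`archCopula_sub_le`).

*Convergence of the copulas implies `ψₙ → ψ`.* Since `Cₙ(ψₙ(z₁), …, ψₙ(z_d)) = ψₙ(z₁ + ⋯ + z_d)`
and `C` is Lipschitz, the set of `z` with `ψₙ(z) → ψ(z)` is closed under addition. It is also closed
under halving wherever `ψ` is positive (`tendsto_gen_half`). It contains `1` by the normalization
`ψₙ(1) = 1/2`, so it contains all dyadic numbers, and monotonicity together with continuity of `ψ`
handles the remaining points (`gen_tendsto_of_copula`).

*Pointwise convergence `ψₙ → ψ` implies weak convergence.* With `m = d - 1`, Taylor's formula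
`f(t) = ((-1)^(m+1) / m!) ∫_t^∞ (s - t)^m f^(m+1)(s) ds` for smooth compactly supported `f`, the
identity `(s - t)₊^m = s^m (1 - t/s)₊^m` and Fubini express `∫ f dγ` as an integral of `ψ(1/s)`
against a fixed integrable function (`integral_eq_gen`). Dominated convergence gives
`∫ f dγₙ → ∫ f dγ`, and the portmanteau theorem for open sets finishes the proof (`weak_of_gen`).
-/


open MeasureTheory Set Filter Topology
open scoped ENNReal NNReal Classical

noncomputable section

/-! ### The Williamson kernel on `[0,∞]` -/

/-- The Williamson kernel `(1 - tz)₊^m`, with `z` ranging over `[0,∞]`. Truncated subtraction in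
`[0,∞]` supplies the positive part, and for `t > 0` the value at `z = ∞` is `0` (if `m ≠ 0`). -/
def kern (m : ℕ) (t : ℝ) (z : ℝ≥0∞) : ℝ := (1 - ENNReal.ofReal t * z).toReal ^ m

lemma kern_nonneg (m : ℕ) (t : ℝ) (z : ℝ≥0∞) : 0 ≤ kern m t z :=
  pow_nonneg ENNReal.toReal_nonneg _

lemma kern_le_one (m : ℕ) (t : ℝ) (z : ℝ≥0∞) : kern m t z ≤ 1 := by
  refine pow_le_one₀ ENNReal.toReal_nonneg ?_
  exact ENNReal.toReal_le_of_le_ofReal zero_le_one (by simp)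

lemma kern_zero (m : ℕ) (t : ℝ) : kern m t 0 = 1 := by simp [kern]

lemma kern_top {m : ℕ} (hm : m ≠ 0) {t : ℝ} (ht : 0 < t) : kern m t ∞ = 0 := by
  simp [kern, ENNReal.mul_top, ht, hm]

lemma kern_ofReal (m : ℕ) {t r : ℝ} (ht : 0 ≤ t) (_hr : 0 ≤ r) :
    kern m t (ENNReal.ofReal r) = max (1 - t * r) 0 ^ m := by
  have : (1 : ℝ≥0∞) - ENNReal.ofReal t * ENNReal.ofReal r = ENNReal.ofReal (1 - t * r) := by
    rw [← ENNReal.ofReal_mul ht, ENNReal.ofReal_sub _ (by positivity), ENNReal.ofReal_one]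
  rw [kern, this, ENNReal.toReal_ofReal']

lemma kern_anti (m : ℕ) (t : ℝ) : Antitone (kern m t) := by
  intro a b hab
  unfold kern
  gcongr
  exact (tsub_le_self.trans_lt ENNReal.one_lt_top).ne

lemma continuous_kern (m : ℕ) (t : ℝ) : Continuous (kern m t) := by
  have h : Continuous fun z : ℝ≥0∞ => 1 - ENNReal.ofReal t * z :=
    (ENNReal.continuous_sub_left ENNReal.one_ne_top).comp
      (ENNReal.continuous_const_mul ENNReal.ofReal_ne_top)
  refine Continuous.pow ?_ m
  exact ENNReal.continuousOn_toReal.comp_continuous h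
    fun z => (tsub_le_self.trans_lt ENNReal.one_lt_top).ne

lemma continuous_kern_left (m : ℕ) {z : ℝ≥0∞} (hz : z ≠ ∞) : Continuous fun t => kern m t z := by
  have h : Continuous fun t : ℝ => 1 - ENNReal.ofReal t * z :=
    (ENNReal.continuous_sub_left ENNReal.one_ne_top).comp
      ((ENNReal.continuous_mul_const hz).comp ENNReal.continuous_ofReal)
  refine Continuous.pow ?_ m
  exact ENNReal.continuousOn_toReal.comp_continuous h
    fun z => (tsub_le_self.trans_lt ENNReal.one_lt_top).ne

lemma measurable_kern (m : ℕ) : Measurable fun p : ℝ × ℝ≥0∞ => kern m p.1 p.2 := by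
  unfold kern
  fun_prop

/-- The increments of the convex non-decreasing function `x ↦ x₊^m` shrink when both end points are
shifted to the left. -/
lemma pow_max_shift (m : ℕ) {x y c : ℝ} (hxy : y ≤ x) (hc : 0 ≤ c) :
    max (x - c) 0 ^ m + max y 0 ^ m ≤ max x 0 ^ m + max (y - c) 0 ^ m := by
  have h1 : max (y - c) 0 ≤ max y 0 := max_le_max (by linarith) le_rfl
  have h2 : max (x - c) 0 ≤ max x 0 := max_le_max (by linarith) le_rfl
  have h3 : max (x - c) 0 - max (y - c) 0 ≤ max x 0 - max y 0 := by
    rcases max_cases (x - c) 0 with h | h <;> rcases max_cases (y - c) 0 with h' | h' <;>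
    rcases max_cases x 0 with k | k <;> rcases max_cases y 0 with k' | k' <;> linarith
  have h4 : 0 ≤ max x 0 - max y 0 := sub_nonneg.2 (max_le_max hxy le_rfl)
  have h5 : max (x - c) 0 ^ m - max (y - c) 0 ^ m ≤ max x 0 ^ m - max y 0 ^ m := by
    rw [← (Commute.all _ _).geom_sum₂_mul, ← (Commute.all _ _).geom_sum₂_mul]
    refine mul_le_mul ?_ h3 (sub_nonneg.2 (max_le_max (by linarith) le_rfl)) ?_
    · gcongr
    · exact Finset.sum_nonneg fun i _ => by positivity
  linarith

lemma kern_convex {m : ℕ} (hm : m ≠ 0) {t : ℝ} (ht : 0 < t) {a b : ℝ≥0∞} (hab : a ≤ b)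
    (c : ℝ≥0∞) : kern m t (a + c) + kern m t b ≤ kern m t a + kern m t (b + c) := by
  rcases eq_or_ne c ∞ with rfl | hc
  · simpa [kern_top hm ht] using kern_anti m t hab
  rcases eq_or_ne b ∞ with rfl | hb
  · simpa [kern_top hm ht] using kern_anti m t (le_self_add : a ≤ a + c)
  have ha : a ≠ ∞ := (hab.trans_lt hb.lt_top).ne
  lift a to ℝ≥0 using ha
  lift b to ℝ≥0 using hb
  lift c to ℝ≥0 using hc
  have key : ∀ r : ℝ≥0, kern m t r = max (1 - t * r) 0 ^ m := fun r => by
    simpa using kern_ofReal m ht.le r.coe_nonneg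
  rw [← ENNReal.coe_add, ← ENNReal.coe_add, key, key, key, key]
  have := @pow_max_shift m (1 - t * a) (1 - t * b) (t * c)
    (by have : (a : ℝ) ≤ b := by exact_mod_cast hab
        nlinarith) (by positivity)
  convert this using 4 <;> push_cast <;> ring

/-- Strict monotonicity of the kernel in `z` up to its first zero. -/
lemma kern_eq_zero_of_eq {m : ℕ} (hm : m ≠ 0) {t : ℝ} (ht : 0 < t) {a b : ℝ≥0∞} (hab : a < b)
    (h : kern m t a = kern m t b) : kern m t a = 0 := by
  have h1 : ENNReal.ofReal t * a < ENNReal.ofReal t * b :=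
    ENNReal.mul_lt_mul_right (by simpa using ht) ENNReal.ofReal_ne_top hab
  have hn : ∀ z : ℝ≥0∞, 1 - z ≠ ∞ := fun z => (tsub_le_self.trans_lt ENNReal.one_lt_top).ne
  have h2 : (1 - ENNReal.ofReal t * a) = 1 - ENNReal.ofReal t * b :=
    (ENNReal.toReal_eq_toReal_iff' (hn _) (hn _)).1
      ((pow_left_inj₀ ENNReal.toReal_nonneg ENNReal.toReal_nonneg hm).1 h)
  rcases le_total (ENNReal.ofReal t * b) 1 with h3 | h3
  · exact absurd ((ENNReal.sub_right_inj ENNReal.one_ne_top (h1.le.trans h3) h3).1 h2) h1.ne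
  · simp [kern, h2, tsub_eq_zero_of_le h3, hm]

/-! ### The extended generator -/

/-- The generator `W_d γ` extended to `[0,∞]` by `0` at `∞`. -/
def gen (d : ℕ) (γ : Measure ℝ) (z : ℝ≥0∞) : ℝ := psiExt (williamson d γ) z

lemma memPW.ae_pos {d : ℕ} {γ : Measure ℝ} (h : memPW d γ) : ∀ᵐ t ∂γ, 0 < t := by
  rw [ae_iff]
  have : {t : ℝ | ¬ 0 < t} = Iio 0 ∪ {0} := by
    ext t; simp [le_iff_lt_or_eq]
  rw [this]
  exact measure_union_null h.2.1 h.2.2.1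

lemma williamson_eq {d : ℕ} {γ : Measure ℝ} (h : memPW d γ) {r : ℝ} (hr : 0 ≤ r) :
    williamson d γ r = ∫ t, kern (d - 1) t (ENNReal.ofReal r) ∂γ := by
  refine integral_congr_ae ?_
  filter_upwards [h.ae_pos] with t ht
  rw [kern_ofReal _ ht.le hr]

lemma gen_eq {d : ℕ} (hd : 3 ≤ d) {γ : Measure ℝ} (h : memPW d γ) (z : ℝ≥0∞) :
    gen d γ z = ∫ t, kern (d - 1) t z ∂γ := by
  rcases eq_or_ne z ∞ with rfl | hz
  · have : (fun t => kern (d - 1) t ∞) =ᵐ[γ] fun _ => 0 := by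
      filter_upwards [h.ae_pos] with t ht using kern_top (by omega) ht
    rw [integral_congr_ae this]
    simp [gen, psiExt]
  · rw [gen, psiExt, if_neg hz, williamson_eq h ENNReal.toReal_nonneg, ENNReal.ofReal_toReal hz]

lemma integrable_kern (m : ℕ) (γ : Measure ℝ) [IsProbabilityMeasure γ] (z : ℝ≥0∞) :
    Integrable (fun t => kern m t z) γ := by
  refine Integrable.of_bound (C := 1)
    ((measurable_kern m).comp (measurable_id.prodMk measurable_const)).aestronglyMeasurable ?_
  refine ae_of_all _ fun t => ?_
  simpa [abs_of_nonneg (kern_nonneg _ _ _)] using kern_le_one m t z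

lemma gen_anti {d : ℕ} (hd : 3 ≤ d) {γ : Measure ℝ} (h : memPW d γ) : Antitone (gen d γ) := by
  intro a b hab
  have := h.1
  rw [gen_eq hd h, gen_eq hd h]
  exact integral_mono (integrable_kern _ _ _) (integrable_kern _ _ _) fun t => kern_anti _ _ hab

lemma gen_continuous {d : ℕ} (hd : 3 ≤ d) {γ : Measure ℝ} (h : memPW d γ) :
    Continuous (gen d γ) := by
  have := h.1
  rw [funext (gen_eq hd h)]
  refine continuous_of_dominated (bound := fun _ => 1)
    (fun z => (integrable_kern _ _ _).aestronglyMeasurable) (fun z => ae_of_all _ fun t => ?_)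
    (integrable_const _) (ae_of_all _ fun t => continuous_kern _ _)
  simpa [abs_of_nonneg (kern_nonneg _ _ _)] using kern_le_one _ t z

lemma gen_zero {d : ℕ} (hd : 3 ≤ d) {γ : Measure ℝ} (h : memPW d γ) : gen d γ 0 = 1 := by
  have := h.1
  simp [gen_eq hd h, kern_zero]

lemma gen_top {d : ℕ} {γ : Measure ℝ} : gen d γ ∞ = 0 := by simp [gen, psiExt]

lemma gen_mem {d : ℕ} (hd : 3 ≤ d) {γ : Measure ℝ} (h : memPW d γ) (z : ℝ≥0∞) :
    gen d γ z ∈ Icc (0 : ℝ) 1 :=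
  ⟨by simpa [gen_top] using gen_anti hd h (le_top : z ≤ ∞),
    by simpa [gen_zero hd h] using gen_anti hd h (zero_le : 0 ≤ z)⟩

lemma gen_one {d : ℕ} (hd : 3 ≤ d) {γ : Measure ℝ} (h : memPW d γ) : gen d γ 1 = 1 / 2 := by
  rw [gen_eq hd h, ← h.2.2.2, ← integral_indicator measurableSet_Icc]
  refine integral_congr_ae ?_
  filter_upwards [h.ae_pos] with t ht
  have := kern_ofReal (d - 1) ht.le zero_le_one
  rw [ENNReal.ofReal_one, mul_one] at this
  rw [this]
  by_cases h1 : t ≤ 1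
  · rw [indicator_of_mem (show t ∈ Icc (0 : ℝ) 1 from ⟨ht.le, h1⟩), max_eq_left (by linarith)]
  · rw [indicator_of_notMem (fun h' => h1 h'.2), max_eq_right (by linarith), zero_pow (by omega)]

/-- Convexity of the generator on `[0,∞]`, in increment form: `ψ(a + c) - ψ(b + c) ≤ ψ(a) - ψ(b)`
for `a ≤ b`. -/
lemma gen_convex {d : ℕ} (hd : 3 ≤ d) {γ : Measure ℝ} (h : memPW d γ) {a b : ℝ≥0∞} (hab : a ≤ b)
    (c : ℝ≥0∞) : gen d γ (a + c) + gen d γ b ≤ gen d γ a + gen d γ (b + c) := by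
  have := h.1
  simp only [gen_eq hd h]
  rw [← integral_add (integrable_kern _ _ _) (integrable_kern _ _ _),
    ← integral_add (integrable_kern _ _ _) (integrable_kern _ _ _)]
  refine integral_mono_ae ((integrable_kern _ _ _).add (integrable_kern _ _ _))
    ((integrable_kern _ _ _).add (integrable_kern _ _ _)) ?_
  filter_upwards [h.ae_pos] with t ht using kern_convex (by omega) ht hab c

/-- A generator is strictly decreasing where it is positive. -/
lemma gen_strict {d : ℕ} (hd : 3 ≤ d) {γ : Measure ℝ} (h : memPW d γ) {a b : ℝ≥0∞} (hab : a < b)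
    (ha : 0 < gen d γ a) : gen d γ b < gen d γ a := by
  have := h.1
  refine lt_of_le_of_ne (gen_anti hd h hab.le) fun heq => ha.ne' ?_
  have hz : ∫ t, (kern (d - 1) t a - kern (d - 1) t b) ∂γ = 0 := by
    rw [integral_sub (integrable_kern _ _ _) (integrable_kern _ _ _), ← gen_eq hd h,
      ← gen_eq hd h, heq, sub_self]
  rw [integral_eq_zero_iff_of_nonneg (fun t => sub_nonneg.2 (kern_anti _ _ hab.le))
    ((integrable_kern _ _ _).sub (integrable_kern _ _ _))] at hz
  rw [gen_eq hd h, integral_eq_zero_of_ae]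
  filter_upwards [hz, h.ae_pos] with t ht1 ht
  exact kern_eq_zero_of_eq (by omega) ht hab (sub_eq_zero.1 ht1)

lemma gen_shift {d : ℕ} (hd : 3 ≤ d) {γ : Measure ℝ} (h : memPW d γ) (a b c : ℝ≥0∞) :
    |gen d γ (a + c) - gen d γ (b + c)| ≤ |gen d γ a - gen d γ b| := by
  wlog hab : a ≤ b generalizing a b
  · rw [abs_sub_comm, abs_sub_comm (gen d γ a)]
    exact this b a (le_of_not_ge hab)
  have h1 := gen_anti hd h hab
  have h2 := gen_anti hd h (add_le_add_left hab c)
  rw [abs_of_nonneg (sub_nonneg.2 h1), abs_of_nonneg (sub_nonneg.2 h2)]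
  linarith [gen_convex hd h hab c]

/-- The basic estimate behind every comparison of copulas: telescoping `gen_shift` over the
summands. -/
lemma gen_sum {d : ℕ} (hd : 3 ≤ d) {γ : Measure ℝ} (h : memPW d γ) {ι : Type*} (s : Finset ι)
    (u v : ι → ℝ≥0∞) :
    |gen d γ (∑ i ∈ s, u i) - gen d γ (∑ i ∈ s, v i)| ≤ ∑ i ∈ s, |gen d γ (u i) - gen d γ (v i)| := by
  classical
  induction s using Finset.induction_on with
  | empty => simp
  | insert i s hi ih =>
    rw [Finset.sum_insert hi, Finset.sum_insert hi, Finset.sum_insert hi]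
    have h1 := gen_shift hd h (u i) (v i) (∑ i ∈ s, u i)
    have h2 := gen_shift hd h (∑ i ∈ s, u i) (∑ i ∈ s, v i) (v i)
    rw [add_comm _ (v i), add_comm _ (v i)] at h2
    linarith [abs_sub_le (gen d γ (u i + ∑ i ∈ s, u i)) (gen d γ (v i + ∑ i ∈ s, u i))
      (gen d γ (v i + ∑ i ∈ s, v i))]

/-! ### The copula -/

/-- `ψ(φ(y)) = y` on `[0,1]`: the level set of `y` is closed and, by the intermediate value theorem
on `[0,∞]`, non-empty, so it contains its infimum. -/
lemma gen_pseudoInv {d : ℕ} (hd : 3 ≤ d) {γ : Measure ℝ} (h : memPW d γ) {y : ℝ}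
    (hy : y ∈ Icc (0 : ℝ) 1) : gen d γ (pseudoInv (williamson d γ) y) = y := by
  have hc : IsClosed {z | gen d γ z = y} := isClosed_eq (gen_continuous hd h) continuous_const
  have hne : {z | gen d γ z = y}.Nonempty :=
    mem_range_of_exists_le_of_exists_ge (gen_continuous hd h) ⟨∞, by simpa [gen_top] using hy.1⟩
      ⟨0, by simpa [gen_zero hd h] using hy.2⟩
  exact hc.csInf_mem hne (OrderBot.bddBelow _)

/-- The copula evaluated at generator values. The identity also holds where `ψ(zᵢ) = 0` and
`φ(ψ(zᵢ)) ≠ zᵢ`, because `gen_sum` only sees the values `ψ(φ(ψ(zᵢ))) = ψ(zᵢ)`. -/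
lemma archCopula_gen {d : ℕ} (hd : 3 ≤ d) {γ : Measure ℝ} (h : memPW d γ) (z : Fin d → ℝ≥0∞) :
    archCopula d (williamson d γ) (fun i => gen d γ (z i)) = gen d γ (∑ i, z i) := by
  have h1 := gen_sum hd h Finset.univ
    (fun i => pseudoInv (williamson d γ) (gen d γ (z i))) z
  simp only [gen_pseudoInv hd h (gen_mem hd h _), sub_self, abs_zero, Finset.sum_const_zero] at h1
  exact sub_eq_zero.1 (abs_nonpos_iff.1 h1)

/-- Archimedean copulas are `1`-Lipschitz for the `ℓ¹` norm. -/
lemma archCopula_lipschitz {d : ℕ} (hd : 3 ≤ d) {γ : Measure ℝ} (h : memPW d γ)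
    {x y : Fin d → ℝ} (hx : ∀ i, x i ∈ Icc (0 : ℝ) 1) (hy : ∀ i, y i ∈ Icc (0 : ℝ) 1) :
    |archCopula d (williamson d γ) x - archCopula d (williamson d γ) y| ≤ ∑ i, |x i - y i| := by
  have h1 := gen_sum hd h Finset.univ
    (fun i => pseudoInv (williamson d γ) (x i)) (fun i => pseudoInv (williamson d γ) (y i))
  simp only [gen_pseudoInv hd h (hx _), gen_pseudoInv hd h (hy _)] at h1
  exact h1

/-- The copula is a `(d + 1)`-Lipschitz function of the generator for uniform distances. -/
lemma archCopula_sub_le {d : ℕ} (hd : 3 ≤ d) {γ γ' : Measure ℝ} (h : memPW d γ) (h' : memPW d γ')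
    {ε : ℝ} (hε : ∀ z, |gen d γ z - gen d γ' z| ≤ ε) {x : Fin d → ℝ}
    (hx : ∀ i, x i ∈ Icc (0 : ℝ) 1) :
    |archCopula d (williamson d γ) x - archCopula d (williamson d γ') x| ≤ (d + 1) * ε := by
  set u := fun i => pseudoInv (williamson d γ) (x i) with hu
  set v := fun i => pseudoInv (williamson d γ') (x i) with hv
  have h1 := gen_sum hd h Finset.univ u v
  have h2 : ∑ i, |gen d γ (u i) - gen d γ (v i)| ≤ ∑ _i : Fin d, ε := by
    refine Finset.sum_le_sum fun i _ => ?_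
    have h3 : gen d γ (u i) = gen d γ' (v i) := by
      rw [hu, hv, gen_pseudoInv hd h (hx i), gen_pseudoInv hd h' (hx i)]
    rw [h3, abs_sub_comm]
    exact hε _
  have h4 := hε (∑ i, v i)
  have h5 := abs_sub_le (gen d γ (∑ i, u i)) (gen d γ (∑ i, v i)) (gen d γ' (∑ i, v i))
  simp only [Finset.sum_const, Finset.card_univ, Fintype.card_fin, nsmul_eq_mul] at h2
  change |gen d γ (∑ i, u i) - gen d γ' (∑ i, v i)| ≤ _
  linarith

/-! ### From weak convergence to uniform convergence of copulas -/

/-- Pólya's theorem: pointwise convergence of monotone functions to a continuous limit on the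
compact interval `[0,∞]` is uniform. -/
lemma tendstoUniformly_of_antitone {F : ℕ → ℝ≥0∞ → ℝ} {f : ℝ≥0∞ → ℝ} (hF : ∀ n, Antitone (F n))
    (hf : Antitone f) (hc : Continuous f) (h : ∀ z, Tendsto (fun n => F n z) atTop (𝓝 (f z))) :
    TendstoUniformly F f atTop := by
  rw [← tendstoLocallyUniformly_iff_tendstoUniformly_of_compactSpace,
    Metric.tendstoLocallyUniformly_iff]
  intro ε hε x
  obtain ⟨b, c, hx, hn, hsub⟩ := exists_Icc_mem_subset_of_mem_nhds
    (hc.continuousAt.preimage_mem_nhds (Metric.ball_mem_nhds (f x) (half_pos (half_pos hε))))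
  refine ⟨_, hn, ?_⟩
  filter_upwards [Metric.tendsto_nhds.1 (h b) _ (half_pos hε),
    Metric.tendsto_nhds.1 (h c) _ (half_pos hε)] with n hb hc y hy
  -- For `y ∈ [b, c]`, `F n y` lies in `[F n c, F n b]` and `f y` in `[f c, f b]`. The latter interval
  -- has length below `ε / 2`, and the former exceeds it by less than `ε / 2` on each side.
  have hbc : b ≤ c := hx.1.trans hx.2
  have h1 := hsub (left_mem_Icc.2 hbc)
  have h2 := hsub (right_mem_Icc.2 hbc)
  simp only [mem_preimage, Metric.mem_ball, Real.dist_eq, abs_lt] at h1 h2 hb hc ⊢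
  have := hF n hy.1
  have := hF n hy.2
  have := hf hy.1
  have := hf hy.2
  constructor <;> linarith

lemma gen_tendsto_of_weak {d : ℕ} (hd : 3 ≤ d) {γ : Measure ℝ} {Γ : ℕ → Measure ℝ}
    (hγ : memPW d γ) (hΓ : ∀ n, memPW d (Γ n))
    (h : ∀ f : BoundedContinuousFunction ℝ ℝ,
      Tendsto (fun n => ∫ t, f t ∂(Γ n)) atTop (𝓝 (∫ t, f t ∂γ))) (z : ℝ≥0∞) :
    Tendsto (fun n => gen d (Γ n) z) atTop (𝓝 (gen d γ z)) := by
  rcases eq_or_ne z ∞ with rfl | hz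
  · simp [gen_top]
  simp only [gen_eq hd hγ, gen_eq hd (hΓ _)]
  exact h (BoundedContinuousFunction.ofNormedAddCommGroup _ (continuous_kern_left (d - 1) hz) 1
    fun t => by simpa [abs_of_nonneg (kern_nonneg _ _ _)] using kern_le_one _ t z)

/-! ### Recovering the generator from the copula -/

section Recover

variable {d : ℕ} {γ : Measure ℝ} {Γ : ℕ → Measure ℝ}

/-- Uniform convergence of the copulas can be evaluated along the moving points
`(ψₙ(z₁), …, ψₙ(z_d))`, where `Cₙ` takes the value `ψₙ(z₁ + ⋯ + z_d)`. -/
lemma archCopula_moving (hd : 3 ≤ d) (hΓ : ∀ n, memPW d (Γ n))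
    (h : TendstoUniformlyOn (fun n => archCopula d (williamson d (Γ n)))
        (archCopula d (williamson d γ)) atTop {x | ∀ i, x i ∈ Icc (0 : ℝ) 1})
    (z : Fin d → ℝ≥0∞) :
    Tendsto (fun n => archCopula d (williamson d γ) (fun i => gen d (Γ n) (z i))
      - gen d (Γ n) (∑ i, z i)) atTop (𝓝 0) := by
  rw [Metric.tendsto_nhds]
  intro ε hε
  filter_upwards [Metric.tendstoUniformlyOn_iff.1 h ε hε] with n hn
  have := hn (fun i => gen d (Γ n) (z i)) fun i => gen_mem hd (hΓ n) _
  rwa [archCopula_gen hd (hΓ n), Real.dist_eq, ← Real.dist_0_eq_abs] at this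

lemma tendsto_gen_sum (hd : 3 ≤ d) (hγ : memPW d γ) (hΓ : ∀ n, memPW d (Γ n))
    (h : TendstoUniformlyOn (fun n => archCopula d (williamson d (Γ n)))
        (archCopula d (williamson d γ)) atTop {x | ∀ i, x i ∈ Icc (0 : ℝ) 1})
    (z : Fin d → ℝ≥0∞) (hz : ∀ i, Tendsto (fun n => gen d (Γ n) (z i)) atTop (𝓝 (gen d γ (z i)))) :
    Tendsto (fun n => gen d (Γ n) (∑ i, z i)) atTop (𝓝 (gen d γ (∑ i, z i))) := by
  have h1 : Tendsto (fun n => archCopula d (williamson d γ) (fun i => gen d (Γ n) (z i))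
      - gen d γ (∑ i, z i)) atTop (𝓝 0) := by
    have h2 : Tendsto (fun n => ∑ i, |gen d (Γ n) (z i) - gen d γ (z i)|) atTop (𝓝 0) := by
      rw [← Finset.sum_const_zero (s := (Finset.univ : Finset (Fin d)))]
      refine tendsto_finsetSum _ fun i _ => ?_
      simpa using ((hz i).sub_const (gen d γ (z i))).abs
    refine squeeze_zero_norm (fun n => ?_) h2
    rw [← archCopula_gen hd hγ]
    exact archCopula_lipschitz hd hγ (fun i => gen_mem hd (hΓ n) _) fun i => gen_mem hd hγ _
  have h3 := (h1.sub (archCopula_moving hd hΓ h z)).add_const (gen d γ (∑ i, z i))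
  simpa using h3

/-- The arguments `(a, b, 0, …, 0)`, at which only a bivariate margin of the copula is seen. -/
def pairArg (hd : 3 ≤ d) (a b : ℝ≥0∞) : Fin d → ℝ≥0∞ :=
  Pi.single ⟨0, by omega⟩ a + Pi.single ⟨1, by omega⟩ b

lemma sum_pairArg (hd : 3 ≤ d) (a b : ℝ≥0∞) : ∑ i, pairArg hd a b i = a + b := by
  simp [pairArg, Finset.sum_add_distrib]

lemma pairArg_cases (hd : 3 ≤ d) (a b : ℝ≥0∞) (i : Fin d) :
    pairArg hd a b i = a ∨ pairArg hd a b i = b ∨ pairArg hd a b i = 0 := by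
  by_cases h0 : i = ⟨0, by omega⟩
  · left
    subst h0
    simp [pairArg]
  · by_cases h1 : i = ⟨1, by omega⟩
    · right; left
      subst h1
      simp [pairArg]
    · right; right
      simp [pairArg, h0, h1]

lemma tendsto_gen_add (hd : 3 ≤ d) (hγ : memPW d γ) (hΓ : ∀ n, memPW d (Γ n))
    (h : TendstoUniformlyOn (fun n => archCopula d (williamson d (Γ n)))
        (archCopula d (williamson d γ)) atTop {x | ∀ i, x i ∈ Icc (0 : ℝ) 1}) {a b : ℝ≥0∞}
    (ha : Tendsto (fun n => gen d (Γ n) a) atTop (𝓝 (gen d γ a)))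
    (hb : Tendsto (fun n => gen d (Γ n) b) atTop (𝓝 (gen d γ b))) :
    Tendsto (fun n => gen d (Γ n) (a + b)) atTop (𝓝 (gen d γ (a + b))) := by
  rw [← sum_pairArg hd a b]
  refine tendsto_gen_sum hd hγ hΓ h _ fun i => ?_
  rcases pairArg_cases hd a b i with h | h | h <;> rw [h]
  · exact ha
  · exact hb
  · simp [gen_zero hd hγ, gen_zero hd (hΓ _)]

/-- Halving step. With `wₙ = φ(ψₙ(z))`, the diagonal value `ψ(2wₙ) = C(ψₙ(z), ψₙ(z), 1, …)` is
asymptotic to `ψₙ(2z)`; strict monotonicity of `ψ` then forces `wₙ → z`. -/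
lemma tendsto_gen_half (hd : 3 ≤ d) (hγ : memPW d γ) (hΓ : ∀ n, memPW d (Γ n))
    (h : TendstoUniformlyOn (fun n => archCopula d (williamson d (Γ n)))
        (archCopula d (williamson d γ)) atTop {x | ∀ i, x i ∈ Icc (0 : ℝ) 1}) {z : ℝ≥0∞}
    (hpos : 0 < gen d γ (z + z))
    (hz : Tendsto (fun n => gen d (Γ n) (z + z)) atTop (𝓝 (gen d γ (z + z)))) :
    Tendsto (fun n => gen d (Γ n) z) atTop (𝓝 (gen d γ z)) := by
  set w : ℕ → ℝ≥0∞ := fun n => pseudoInv (williamson d γ) (gen d (Γ n) z) with hw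
  have hgw : ∀ n, gen d γ (w n) = gen d (Γ n) z := fun n =>
    gen_pseudoInv hd hγ (gen_mem hd (hΓ n) z)
  have h1 := (archCopula_moving hd hΓ h (pairArg hd z z)).add
    (by simpa only [sum_pairArg] using hz)
  have h2 : ∀ n, archCopula d (williamson d γ) (fun i => gen d (Γ n) (pairArg hd z z i))
      = gen d γ (w n + w n) := by
    intro n
    rw [← sum_pairArg hd (w n) (w n), ← archCopula_gen hd hγ]
    congr 1
    funext i
    by_cases h0 : i = ⟨0, by omega⟩
    · subst h0; simp [pairArg, hgw]
    · by_cases h1 : i = ⟨1, by omega⟩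
      · subst h1; simp [pairArg, hgw]
      · simp [pairArg, h0, h1, gen_zero hd hγ, gen_zero hd (hΓ n)]
  simp only [h2, sum_pairArg, sub_add_cancel, zero_add] at h1
  have h3 : Tendsto w atTop (𝓝 z) := by
    have mono : ∀ {u v : ℝ≥0∞}, gen d γ (u + u) < gen d γ (v + v) → v < u := fun {u v} huv => by
      by_contra! hle
      exact huv.not_ge (gen_anti hd hγ (add_le_add hle hle))
    refine tendsto_order.2 ⟨fun a ha => ?_, fun b hb => ?_⟩
    · have h4 : gen d γ (z + z) < gen d γ (a + a) :=
        gen_strict hd hγ (ENNReal.add_lt_add ha ha)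
          (hpos.trans_le (gen_anti hd hγ (add_le_add ha.le ha.le)))
      filter_upwards [h1.eventually (gt_mem_nhds h4)] with n hn using mono hn
    · have h4 : gen d γ (b + b) < gen d γ (z + z) :=
        gen_strict hd hγ (ENNReal.add_lt_add hb hb) hpos
      filter_upwards [h1.eventually (lt_mem_nhds h4)] with n hn using mono hn
  have h4 := ((gen_continuous hd hγ).tendsto z).comp h3
  simpa only [Function.comp_def, hgw] using h4

/-- Points where the generators converge accumulate everywhere: they contain the multiples of all
`2⁻ʲ`, because `ψₙ(1) = ψ(1) = 1/2` and halving and addition preserve convergence. -/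
lemma exists_between_tendsto (hd : 3 ≤ d) (hγ : memPW d γ) (hΓ : ∀ n, memPW d (Γ n))
    (h : TendstoUniformlyOn (fun n => archCopula d (williamson d (Γ n)))
        (archCopula d (williamson d γ)) atTop {x | ∀ i, x i ∈ Icc (0 : ℝ) 1}) {a b : ℝ≥0∞}
    (hab : a < b) :
    ∃ s, a < s ∧ s < b ∧ Tendsto (fun n => gen d (Γ n) s) atTop (𝓝 (gen d γ s)) := by
  have hpow : ∀ j : ℕ, Tendsto (fun n => gen d (Γ n) (((1 / 2 : ℝ≥0) ^ j : ℝ≥0) : ℝ≥0∞)) atTop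
      (𝓝 (gen d γ (((1 / 2 : ℝ≥0) ^ j : ℝ≥0) : ℝ≥0∞))) := by
    intro j
    induction j with
    | zero => simp [gen_one hd hγ, gen_one hd (hΓ _)]
    | succ j ih =>
      have he : (((1 / 2 : ℝ≥0) ^ (j + 1) : ℝ≥0) : ℝ≥0∞) + (((1 / 2 : ℝ≥0) ^ (j + 1) : ℝ≥0) : ℝ≥0∞)
          = (((1 / 2 : ℝ≥0) ^ j : ℝ≥0) : ℝ≥0∞) := by
        rw [← ENNReal.coe_add, ENNReal.coe_inj, pow_succ, ← mul_add, add_halves, mul_one]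
      refine tendsto_gen_half hd hγ hΓ h ?_ ?_
      · have h1 : (((1 / 2 : ℝ≥0) ^ j : ℝ≥0) : ℝ≥0∞) ≤ 1 := by
          rw [ENNReal.coe_le_one_iff]
          refine pow_le_one₀ zero_le ?_
          rw [← NNReal.coe_le_coe]; norm_num
        have h2 := gen_anti hd hγ h1
        rw [gen_one hd hγ] at h2
        rw [he]
        linarith
      · rwa [he]
  have hmul : ∀ j k : ℕ, Tendsto (fun n => gen d (Γ n) (((k * (1 / 2) ^ j : ℝ≥0)) : ℝ≥0∞)) atTop
      (𝓝 (gen d γ ((k * (1 / 2) ^ j : ℝ≥0) : ℝ≥0∞))) := by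
    intro j k
    induction k with
    | zero => simp [gen_zero hd hγ, gen_zero hd (hΓ _)]
    | succ k ih =>
      have he : (((k + 1 : ℕ) * (1 / 2) ^ j : ℝ≥0) : ℝ≥0∞)
          = ((k * (1 / 2) ^ j : ℝ≥0) : ℝ≥0∞) + (((1 / 2 : ℝ≥0) ^ j : ℝ≥0) : ℝ≥0∞) := by
        rw [← ENNReal.coe_add, ENNReal.coe_inj]; push_cast; ring
      rw [he]
      exact tendsto_gen_add hd hγ hΓ h ih (hpow j)
  obtain ⟨q, haq, hqb⟩ := ENNReal.lt_iff_exists_nnreal_btwn.1 hab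
  obtain ⟨r, hqr, hrb⟩ := ENNReal.lt_iff_exists_nnreal_btwn.1 hqb
  have hqr' : q < r := by exact_mod_cast hqr
  -- A mesh `2⁻ʲ < r - q` has the grid point `(⌊q 2ʲ⌋ + 1) 2⁻ʲ` strictly between `q` and `r`.
  obtain ⟨j, hj⟩ := exists_pow_lt_of_lt_one (tsub_pos_of_lt hqr')
    (by rw [← NNReal.coe_lt_coe]; norm_num : (1 / 2 : ℝ≥0) < 1)
  have hp : (0 : ℝ≥0) < (1 / 2) ^ j := by positivity
  have hlo : q < (⌊q / (1 / 2) ^ j⌋₊ + 1 : ℕ) * (1 / 2) ^ j := by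
    rw [← div_lt_iff₀ hp]
    exact_mod_cast Nat.lt_floor_add_one _
  have hhi : (⌊q / (1 / 2) ^ j⌋₊ + 1 : ℕ) * (1 / 2) ^ j < r := by
    have h1 : (⌊q / (1 / 2) ^ j⌋₊ : ℝ≥0) * (1 / 2) ^ j ≤ q := by
      rw [← le_div_iff₀ hp]
      exact Nat.floor_le zero_le
    calc ((⌊q / (1 / 2) ^ j⌋₊ + 1 : ℕ) : ℝ≥0) * (1 / 2) ^ j
        = (⌊q / (1 / 2) ^ j⌋₊ : ℝ≥0) * (1 / 2) ^ j + (1 / 2) ^ j := by push_cast; ring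
      _ < q + (r - q) := add_lt_add_of_le_of_lt h1 hj
      _ = r := add_tsub_cancel_of_le hqr'.le
  exact ⟨_, haq.trans (by exact_mod_cast hlo), lt_trans (by exact_mod_cast hhi) hrb, hmul j _⟩

/-- Pointwise convergence at every `z ∈ (0,∞)`, by squeezing between nearby points of convergence. -/
lemma gen_tendsto_of_copula (hd : 3 ≤ d) (hγ : memPW d γ) (hΓ : ∀ n, memPW d (Γ n))
    (h : TendstoUniformlyOn (fun n => archCopula d (williamson d (Γ n)))
        (archCopula d (williamson d γ)) atTop {x | ∀ i, x i ∈ Icc (0 : ℝ) 1}) {z : ℝ≥0∞}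
    (hz0 : 0 < z) (hz : z ≠ ∞) :
    Tendsto (fun n => gen d (Γ n) z) atTop (𝓝 (gen d γ z)) := by
  refine tendsto_order.2 ⟨fun r hr => ?_, fun r hr => ?_⟩
  -- A lower bound at `z` comes from a point of convergence slightly to its right, as `ψₙ` decreases.
  · have hn := (gen_continuous hd hγ).continuousAt.preimage_mem_nhds (lt_mem_nhds hr)
    obtain ⟨u, hu, hsub⟩ := exists_Ico_subset_of_mem_nhds hn ⟨∞, hz.lt_top⟩
    obtain ⟨s, hs1, hs2, hs⟩ := exists_between_tendsto hd hγ hΓ h hu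
    filter_upwards [hs.eventually (lt_mem_nhds (hsub ⟨hs1.le, hs2⟩))] with n hn
    exact lt_of_lt_of_le hn (gen_anti hd (hΓ n) hs1.le)
  · have hn := (gen_continuous hd hγ).continuousAt.preimage_mem_nhds (gt_mem_nhds hr)
    obtain ⟨u, hu, hsub⟩ := exists_Ioc_subset_of_mem_nhds hn ⟨0, hz0⟩
    obtain ⟨s, hs1, hs2, hs⟩ := exists_between_tendsto hd hγ hΓ h hu
    filter_upwards [hs.eventually (gt_mem_nhds (hsub ⟨hs1, hs2.le⟩))] with n hn
    exact lt_of_le_of_lt (gen_anti hd (hΓ n) hs2.le) hn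

end Recover

/-! ### From pointwise convergence of generators to weak convergence -/

lemma hasCompactSupport_iteratedDeriv {f : ℝ → ℝ} (hs : HasCompactSupport f) (n : ℕ) :
    HasCompactSupport (iteratedDeriv n f) := by
  induction n with
  | zero => simpa using hs
  | succ n ih => rw [iteratedDeriv_succ]; exact ih.deriv

/-- Taylor's formula with integral remainder, expanded at a point to the right of the support of
`f`, where all derivatives vanish. -/
lemma taylor_compact (m : ℕ) {f : ℝ → ℝ} (hf : ContDiff ℝ (⊤ : ℕ∞) f) (hs : HasCompactSupport f)
    (t : ℝ) :
    ∫ s in Ioi t, (s - t) ^ m * iteratedDeriv (m + 1) f s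
      = (-1) ^ (m + 1) * m.factorial * f t := by
  have hD : ∀ k : ℕ, ContDiff ℝ 1 (iteratedDeriv k f) := fun k => by
    rw [iteratedDeriv_eq_iterate]
    exact ContDiff.iterate_deriv' 1 k (hf.of_le (by exact_mod_cast le_top))
  have hint : ∀ j k : ℕ, Integrable (fun s => (s - t) ^ j * iteratedDeriv k f s)
      (volume.restrict (Ioi t)) := fun j k =>
    (Continuous.integrable_of_hasCompactSupport
      (((continuous_id.sub continuous_const).pow j).mul (hD k).continuous)
      (hasCompactSupport_iteratedDeriv hs k).mul_left).integrableOn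
  induction m with
  | zero =>
    simp only [pow_zero, one_mul, zero_add, iteratedDeriv_one]
    rw [HasCompactSupport.integral_Ioi_deriv_eq (hf.of_le (by exact_mod_cast le_top)) hs]
    simp
  | succ m ih =>
    -- `∫ G' = -G(t) = 0` over `(t,∞)` is the integration by parts relating the two remainders.
    set G : ℝ → ℝ := fun s => (s - t) ^ (m + 1) * iteratedDeriv (m + 1) f s with hG
    have hGd : deriv G = fun s => (m + 1) * ((s - t) ^ m * iteratedDeriv (m + 1) f s)
        + (s - t) ^ (m + 1) * iteratedDeriv (m + 1 + 1) f s := by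
      funext s
      have h1 : HasDerivAt (fun s => (s - t) ^ (m + 1)) ((m + 1) * (s - t) ^ m) s := by
        simpa using ((hasDerivAt_id s).sub_const t).fun_pow (m + 1)
      have h2 : HasDerivAt (iteratedDeriv (m + 1) f) (iteratedDeriv (m + 1 + 1) f s) s := by
        rw [iteratedDeriv_succ (n := m + 1)]
        exact ((hD (m + 1)).differentiable one_ne_zero s).hasDerivAt
      rw [hG, (h1.fun_mul h2).deriv]
      ring
    have h3 := HasCompactSupport.integral_Ioi_deriv_eq (f := G)
      (((contDiff_id.sub contDiff_const).pow (m + 1)).mul (hD (m + 1)))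
      (hasCompactSupport_iteratedDeriv hs (m + 1)).mul_left t
    rw [hGd, integral_add ((hint m (m + 1)).const_mul _) (hint (m + 1) (m + 1 + 1)),
      integral_const_mul, ih] at h3
    have h4 : G t = 0 := by simp [hG]
    rw [h4] at h3
    rw [Nat.factorial_succ]
    push_cast
    rw [pow_succ]
    linarith

/-- Taylor's formula rewritten with the Williamson kernel at `z = 1/s`, using
`s^m (1 - t/s)₊^m = (s - t)₊^m`. -/
lemma taylor_kern (m : ℕ) (hm : m ≠ 0) {f : ℝ → ℝ} (hf : ContDiff ℝ (⊤ : ℕ∞) f)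
    (hs : HasCompactSupport f) {t : ℝ} (ht : 0 ≤ t) :
    ∫ s in Ioi 0, s ^ m * iteratedDeriv (m + 1) f s * kern m t (ENNReal.ofReal s⁻¹)
      = (-1) ^ (m + 1) * m.factorial * f t := by
  have key : ∀ s : ℝ, 0 < s → s ^ m * kern m t (ENNReal.ofReal s⁻¹) = max (s - t) 0 ^ m := by
    intro s hs
    rw [kern_ofReal m ht (inv_nonneg.2 hs.le), ← mul_pow, mul_max_of_nonneg _ _ hs.le, mul_zero]
    congr 2
    field_simp
  rw [← taylor_compact m hf hs t]
  rw [setIntegral_eq_of_subset_of_forall_sdiff_eq_zero (s := Ioi t) measurableSet_Ioi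
    (Ioi_subset_Ioi ht)]
  · refine setIntegral_congr_fun measurableSet_Ioi fun s hst => ?_
    have h0 : 0 < s := ht.trans_lt hst
    have h1 : 0 ≤ s - t := sub_nonneg.2 (le_of_lt hst)
    have := key s h0
    rw [max_eq_left h1] at this
    change _ = (s - t) ^ m * _
    rw [← this]
    ring
  · rintro s ⟨h0, h1⟩
    have h2 : s - t ≤ 0 := sub_nonpos.2 (not_lt.1 h1)
    have := key s h0
    rw [max_eq_right h2, zero_pow hm] at this
    rw [mul_right_comm, this, zero_mul]

section Weak

variable {d : ℕ} {γ : Measure ℝ} {Γ : ℕ → Measure ℝ}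

lemma continuous_top_deriv {f : ℝ → ℝ} (hf : ContDiff ℝ (⊤ : ℕ∞) f) (k : ℕ) :
    Continuous (iteratedDeriv k f) :=
  hf.continuous_iteratedDeriv k (by exact_mod_cast le_top)

/-- Williamson inversion in weak form: the integral of a smooth compactly supported function is
a fixed linear functional of the generator. -/
lemma integral_eq_gen (hd : 3 ≤ d) (hγ : memPW d γ) {f : ℝ → ℝ} (hf : ContDiff ℝ (⊤ : ℕ∞) f)
    (hs : HasCompactSupport f) :
    (-1) ^ (d - 1 + 1) * ((d - 1).factorial : ℝ) * ∫ t, f t ∂γ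
      = ∫ s in Ioi 0, s ^ (d - 1) * iteratedDeriv (d - 1 + 1) f s
          * gen d γ (ENNReal.ofReal s⁻¹) := by
  have := hγ.1
  set g : ℝ → ℝ := fun s => s ^ (d - 1) * iteratedDeriv (d - 1 + 1) f s with hg
  have hgi : Integrable g :=
    Continuous.integrable_of_hasCompactSupport
      ((continuous_id.pow _).mul (continuous_top_deriv hf _))
      (hasCompactSupport_iteratedDeriv hs _).mul_left
  rw [← integral_const_mul]
  have h1 : ∫ t, (-1) ^ (d - 1 + 1) * ((d - 1).factorial : ℝ) * f t ∂γ
      = ∫ t, (∫ s in Ioi 0, g s * kern (d - 1) t (ENNReal.ofReal s⁻¹)) ∂γ := by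
    refine integral_congr_ae ?_
    filter_upwards [hγ.ae_pos] with t ht
    exact (taylor_kern (d - 1) (by omega) hf hs ht.le).symm
  rw [h1, integral_integral_swap]
  · refine integral_congr_ae (ae_of_all _ fun s => ?_)
    change ∫ t, g s * _ ∂γ = g s * _
    rw [integral_const_mul, gen_eq hd hγ]
  · have hk : Measurable fun p : ℝ × ℝ => kern (d - 1) p.1 (ENNReal.ofReal p.2⁻¹) :=
      (measurable_kern (d - 1)).comp (f := fun p : ℝ × ℝ => (p.1, ENNReal.ofReal p.2⁻¹))
        (by fun_prop)
    refine (hgi.integrableOn.comp_snd γ : Integrable (fun p : ℝ × ℝ => g p.2)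
      (γ.prod (volume.restrict (Ioi 0)))).mul_bdd (c := 1)
      hk.aestronglyMeasurable (ae_of_all _ fun p => ?_)
    simpa [abs_of_nonneg (kern_nonneg _ _ _)] using kern_le_one _ _ _

/-- Dominated convergence in `integral_eq_gen`. -/
lemma tendsto_integral_smooth (hd : 3 ≤ d) (hγ : memPW d γ) (hΓ : ∀ n, memPW d (Γ n))
    (h : ∀ z : ℝ≥0∞, 0 < z → z ≠ ∞ → Tendsto (fun n => gen d (Γ n) z) atTop (𝓝 (gen d γ z)))
    {f : ℝ → ℝ} (hf : ContDiff ℝ (⊤ : ℕ∞) f) (hs : HasCompactSupport f) :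
    Tendsto (fun n => ∫ t, f t ∂(Γ n)) atTop (𝓝 (∫ t, f t ∂γ)) := by
  have hc : (-1) ^ (d - 1 + 1) * ((d - 1).factorial : ℝ) ≠ 0 :=
    mul_ne_zero (pow_ne_zero _ (by norm_num)) (by exact_mod_cast Nat.factorial_ne_zero _)
  have key : Tendsto (fun n => (-1) ^ (d - 1 + 1) * ((d - 1).factorial : ℝ) * ∫ t, f t ∂(Γ n))
      atTop (𝓝 ((-1) ^ (d - 1 + 1) * ((d - 1).factorial : ℝ) * ∫ t, f t ∂γ)) := by
    simp only [integral_eq_gen hd hγ hf hs, integral_eq_gen hd (hΓ _) hf hs]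
    have hgc : Continuous fun s : ℝ => s ^ (d - 1) * iteratedDeriv (d - 1 + 1) f s :=
      (continuous_id.pow _).mul (continuous_top_deriv hf _)
    have hgi := (hgc.integrable_of_hasCompactSupport (μ := volume)
      (hasCompactSupport_iteratedDeriv hs _).mul_left).integrableOn (s := Ioi 0)
    refine tendsto_integral_of_dominated_convergence
      (fun s => ‖s ^ (d - 1) * iteratedDeriv (d - 1 + 1) f s‖) (fun n => ?_) hgi.norm
      (fun n => ae_of_all _ fun s => ?_) ?_
    · exact hgc.aestronglyMeasurable.mul ((gen_continuous hd (hΓ n)).measurable.comp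
        (ENNReal.measurable_ofReal.comp measurable_inv)).aestronglyMeasurable
    · rw [norm_mul]
      refine mul_le_of_le_one_right (norm_nonneg _) ?_
      have := gen_mem hd (hΓ n) (ENNReal.ofReal s⁻¹)
      rw [Real.norm_of_nonneg this.1]
      exact this.2
    · filter_upwards [ae_restrict_mem measurableSet_Ioi] with s hs
      exact (h _ (by simpa using hs) ENNReal.ofReal_ne_top).const_mul _
  have := key.const_mul ((-1) ^ (d - 1 + 1) * ((d - 1).factorial : ℝ))⁻¹
  simpa only [inv_mul_cancel_left₀ hc] using this

/-- Convergence against smooth compactly supported functions gives `γ G ≤ liminf γₙ G` for open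
`G`, and hence weak convergence; no tightness is needed because the limit is a probability. -/
lemma weak_of_gen (hd : 3 ≤ d) (hγ : memPW d γ) (hΓ : ∀ n, memPW d (Γ n))
    (h : ∀ z : ℝ≥0∞, 0 < z → z ≠ ∞ → Tendsto (fun n => gen d (Γ n) z) atTop (𝓝 (gen d γ z)))
    (f : BoundedContinuousFunction ℝ ℝ) :
    Tendsto (fun n => ∫ t, f t ∂(Γ n)) atTop (𝓝 (∫ t, f t ∂γ)) := by
  have := hγ.1
  have := fun n => (hΓ n).1
  let P : ProbabilityMeasure ℝ := ⟨γ, hγ.1⟩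
  let Q : ℕ → ProbabilityMeasure ℝ := fun n => ⟨Γ n, (hΓ n).1⟩
  suffices hw : Tendsto Q atTop (𝓝 P) from
    ProbabilityMeasure.tendsto_iff_forall_integral_tendsto.1 hw f
  refine tendsto_of_forall_isOpen_le_liminf_nat' fun G hG => ?_
  change γ G ≤ liminf (fun n => Γ n G) atTop
  refine le_of_forall_lt fun r hr => ?_
  obtain ⟨K, hKG, hK, hrK⟩ := hG.exists_lt_isCompact hr
  obtain ⟨r', hrr', hr'K⟩ := exists_between hrK
  refine hrr'.trans_le ?_
  obtain ⟨V, hV, hKV, hVG, hVc⟩ := exists_open_between_and_isCompact_closure hK hG hKG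
  obtain ⟨φ, hφd, hφr, hφ0, hφ1⟩ := exists_contMDiff_zero_iff_one_iff_of_isClosed
    (n := (⊤ : ℕ∞)) (modelWithCornersSelf ℝ ℝ) hV.isClosed_compl hK.isClosed
    (disjoint_compl_left_iff_subset.2 hKV)
  have hφ : ContDiff ℝ (⊤ : ℕ∞) φ := hφd.contDiff
  have hφs : HasCompactSupport φ := by
    refine HasCompactSupport.intro' hVc isClosed_closure fun x hx => ?_
    exact (hφ0 x).1 fun hxV => hx (subset_closure hxV)
  have hnn : ∀ x, 0 ≤ φ x := fun x => (hφr (mem_range_self x)).1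
  have hle : ∀ x, φ x ≤ 1 := fun x => (hφr (mem_range_self x)).2
  have hint : ∀ (μ : Measure ℝ) [IsProbabilityMeasure μ], Integrable φ μ := fun μ _ =>
    hφ.continuous.integrable_of_hasCompactSupport hφs
  have hlow : γ K ≤ ENNReal.ofReal (∫ t, φ t ∂γ) := by
    rw [ofReal_integral_eq_lintegral_ofReal (hint γ) (ae_of_all _ hnn),
      ← lintegral_indicator_one hK.measurableSet]
    refine lintegral_mono fun x => ?_
    by_cases hx : x ∈ K
    · simp [hx, (hφ1 x).1 hx]
    · simp [hx]
  have hup : ∀ n, ENNReal.ofReal (∫ t, φ t ∂(Γ n)) ≤ Γ n G := by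
    intro n
    rw [ofReal_integral_eq_lintegral_ofReal (hint (Γ n)) (ae_of_all _ hnn),
      ← lintegral_indicator_one hG.measurableSet]
    refine lintegral_mono fun x => ?_
    by_cases hx : x ∈ G
    · simpa [hx] using hle x
    · have : φ x = 0 := (hφ0 x).1 fun hxV => hx (hVG (subset_closure hxV))
      simp [this]
  have hlim := (ENNReal.continuous_ofReal.tendsto _).comp
    (tendsto_integral_smooth hd hγ hΓ h hφ hφs)
  refine le_liminf_of_le (by isBoundedDefault) ?_
  filter_upwards [hlim.eventually (lt_mem_nhds (hr'K.trans_le hlow))] with n hn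
  exact hn.le.trans (hup n)

end Weak

/-! ### The equivalence -/

/-- For `γ, γ₁, γ₂, … ∈ P_{W_d}` with generators `ψ = W_d γ`,
`ψₙ = W_d γₙ` and copulas `C = C_ψ`, `Cₙ = C_{ψₙ}`: `(Cₙ)` converges uniformly on
`[0,1]^d` to `C` if and only if `(γₙ)` converges weakly to `γ` (tested against all
bounded continuous functions). -/
theorem archCopula_conv_iff_williamson_weak_conv
    (d : ℕ) (hd : 3 ≤ d) (γ : Measure ℝ) (Γ : ℕ → Measure ℝ)
    (hγ : memPW d γ) (hΓ : ∀ n, memPW d (Γ n)) :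
    TendstoUniformlyOn (fun n => archCopula d (williamson d (Γ n)))
        (archCopula d (williamson d γ)) atTop {x | ∀ i, x i ∈ Icc (0 : ℝ) 1} ↔
      ∀ f : BoundedContinuousFunction ℝ ℝ,
        Tendsto (fun n => ∫ t, f t ∂(Γ n)) atTop (𝓝 (∫ t, f t ∂γ)) := by
  constructor
  · intro h f
    exact weak_of_gen hd hγ hΓ (fun z hz0 hz => gen_tendsto_of_copula hd hγ hΓ h hz0 hz) f
  · intro h
    have hu := tendstoUniformly_of_antitone (fun n => gen_anti hd (hΓ n)) (gen_anti hd hγ)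
      (gen_continuous hd hγ) (gen_tendsto_of_weak hd hγ hΓ h)
    rw [Metric.tendstoUniformlyOn_iff]
    intro ε hε
    have hd0 : (0 : ℝ) < d + 2 := by positivity
    filter_upwards [Metric.tendstoUniformly_iff.1 hu (ε / (d + 2)) (by positivity)] with n hn x hx
    have h1 := archCopula_sub_le hd hγ (hΓ n) (fun z => (hn z).le) hx
    rw [Real.dist_eq]
    refine h1.trans_lt ?_
    rw [mul_div_assoc', div_lt_iff₀ hd0]
    nlinarith
end
end
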